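/- Suppose F_1,…,F_m ∈ ℂ[z_1,…,z_n] of degrees d_j satisfy the estimate Σ_j |F_j(z)|^2/(1+|z|^2)^{d_j} ≥ c(1+|z|^2)^{−M} for all z ∈ ℂ^n and some c > 0, and assume m ≤ n or M·min(m,n) ≥ Σ_{j=1}^{n+1} d_j − n (with d_1 ≥ ⋯ ≥ d_m). Then there exist polynomials Q_j with Σ_j F_j Q_j = 1 and deg(F_j Q_j) ≤ min(m,n)·M. -/

import Mathlib

open MvPolynomial

/-!
Homogenize the `F j` to forms `f j` in `X 0, …, X n`. The estimate says that `X 0 ^ M` is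
dominated by the `f j`, so that it lies in their integral closure: on the chart of the blow-up of
`φ = (X 0 ^ M, f j)` where this ideal is generated by some `φ k`, the quotients `f j / φ k` have
no common zero. Indeed a common zero would be a limit of points off the hyperplane `X 0 = 0`, and
the estimate would force all quotients, including `φ k / φ k = 1`, to vanish there.

If at most `n` of the `F j` are nonzero, keep all of these and put `g = 0`. Otherwise put
`g = f n` (counting from `0`) and replace the forms by generic combinations `h 0, …, h (n - 1)` of
them: since the charts have dimension `n`, the `h l / φ k` and `g` still have no common zero.
After a translation `g` is monic in `X 0`. The determinant trick then yields
`(X i ^ k + g * u i) * X 0 ^ M * J ⊆ (h) * J` for an ideal `J` containing a power of `X 0 ^ M`.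

The generators of `J` and the coefficients of these relations can be specialized to a finite
field. There, for a large power `q` of the order of the field, compare the Koszul complex of the
`h l ^ q` with that of large `q`-divisible powers of the `X i ^ k + g * u i`, which are powers of
the `X i` modulo `g ^ q`. A Skoda-type exactness of the former, with a loss independent of `q`,
reduces the membership of `∏ i, X i ^ (q - 1) * X 0 ^ (q * n * M)` in `(h l ^ q, g ^ q)` to the
vanishing of chains modulo `g ^ q` and powers of the `X i`, which holds for degree reasons. The
Cartier operator turns it into `X 0 ^ (n * M) ∈ (h, g)`.
-/

namespace LojasiewiczBezout

/-! ### The Koszul complex -/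

section Koszul

variable {ι : Type*} [LinearOrder ι]

/-- The sign with which `e_i ∧ e_s` enters the Koszul complex: `(-1)` to the number of elements
of `s` below `i`. -/
def koszulSign (s : Finset ι) (i : ι) : ℤ := (-1) ^ (s.filter (· < i)).card

lemma koszulSign_mul_self (s : Finset ι) (i : ι) : koszulSign s i * koszulSign s i = 1 := by
  rw [koszulSign, ← mul_pow, neg_one_mul, neg_neg, one_pow]

lemma koszulSign_insert_of_lt {s : Finset ι} {i j : ι} (hi : i ∉ s) (hij : i < j) :
    koszulSign (insert i s) j = -koszulSign s j := by
  rw [koszulSign, koszulSign, Finset.filter_insert, if_pos hij, Finset.card_insert_of_notMem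
    (fun h ↦ hi (Finset.mem_of_mem_filter i h)), pow_succ, mul_neg_one]

lemma koszulSign_insert_of_le {s : Finset ι} {i j : ι} (hij : j ≤ i) :
    koszulSign (insert i s) j = koszulSign s j := by
  rw [koszulSign, koszulSign, Finset.filter_insert, if_neg hij.not_gt]

lemma koszulSign_mul_koszulSign_insert {s : Finset ι} {i j : ι} (hi : i ∉ s) (hj : j ∉ s)
    (hij : i ≠ j) :
    koszulSign s i * koszulSign (insert i s) j = -(koszulSign s j * koszulSign (insert j s) i) := by
  rcases hij.lt_or_gt with h | h
  · rw [koszulSign_insert_of_lt hi h, koszulSign_insert_of_le h.le]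
    ring
  · rw [koszulSign_insert_of_lt hj h, koszulSign_insert_of_le h.le]
    ring

lemma koszulSign_insert_mul_koszulSign_insert {s : Finset ι} {i j : ι} (hi : i ∉ s) (hj : j ∉ s)
    (hij : i ≠ j) :
    koszulSign (insert i s) j * koszulSign (insert j s) i = -(koszulSign s i * koszulSign s j) := by
  rcases hij.lt_or_gt with h | h
  · rw [koszulSign_insert_of_lt hi h, koszulSign_insert_of_le h.le]
    ring
  · rw [koszulSign_insert_of_lt hj h, koszulSign_insert_of_le h.le]
    ring

/-- The chain `φ` lies in degree `b` of the Koszul complex. -/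
def HasChainDegree {ι M : Type*} [Zero M] (b : ℕ) (φ : Finset ι → M) : Prop :=
  ∀ s, s.card ≠ b → φ s = 0

/-- The homotopy inverting the Koszul differential in the direction `i`: it removes `i` from the
index and applies `D`, which should be a division by `x i`. -/
def koszulHomotopy {M : Type*} [AddCommGroup M] (i : ι) (D : M →+ M) (φ : Finset ι → M)
    (s : Finset ι) : M :=
  if i ∈ s then koszulSign (s.erase i) i • D (φ (s.erase i)) else 0

lemma HasChainDegree.homotopy {M : Type*} [AddCommGroup M] {b : ℕ} {φ : Finset ι → M}
    (hφ : HasChainDegree b φ) (i : ι) (D : M →+ M) :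
    HasChainDegree (b + 1) (koszulHomotopy i D φ) := by
  intro s hs
  rw [koszulHomotopy]
  split_ifs with hi
  · have hcard := Finset.card_erase_add_one hi
    rw [hφ _ (by omega), map_zero, smul_zero]
  · rfl

variable [Fintype ι] {R M : Type*} [CommRing R] [AddCommGroup M] [Module R M]

/-- The differential of the Koszul complex of the family `x` with coefficients in `M`. A chain is a
function `φ : Finset ι → M`, standing for `∑ s, φ s • e_s`; the grading is `HasChainDegree`. -/
def koszulDiff (x : ι → R) : (Finset ι → M) →ₗ[R] (Finset ι → M) where
  toFun φ s := ∑ i ∈ sᶜ, koszulSign s i • x i • φ (insert i s)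
  map_add' φ ψ := by
    ext s
    simp only [Pi.add_apply, smul_add, Finset.sum_add_distrib]
  map_smul' a φ := by
    ext s
    simp only [Pi.smul_apply, Finset.smul_sum, RingHom.id_apply]
    refine Finset.sum_congr rfl fun i _ ↦ ?_
    rw [smul_comm (x i) a, smul_comm (koszulSign s i) a]

lemma koszulDiff_apply (x : ι → R) (φ : Finset ι → M) (s : Finset ι) :
    koszulDiff x φ s = ∑ i ∈ sᶜ, koszulSign s i • x i • φ (insert i s) := rfl

lemma koszulDiff_natural {R' M' : Type*} [CommRing R'] [AddCommGroup M'] [Module R' M']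
    {x : ι → R} {x' : ι → R'} (T : Finset ι → M →+ M')
    (hT : ∀ s i m, i ∉ s → T s (x i • m) = x' i • T (insert i s) m) (φ : Finset ι → M) :
    koszulDiff x' (fun s ↦ T s (φ s)) = fun s ↦ T s (koszulDiff x φ s) := by
  ext s
  rw [koszulDiff_apply, koszulDiff_apply, map_sum]
  refine Finset.sum_congr rfl fun i hi ↦ ?_
  rw [map_zsmul, hT s i _ (Finset.mem_compl.1 hi)]

lemma koszulDiff_map {M' : Type*} [AddCommGroup M'] [Module R M'] (f : M →ₗ[R] M') (x : ι → R)
    (φ : Finset ι → M) : koszulDiff x (fun s ↦ f (φ s)) = fun s ↦ f (koszulDiff x φ s) :=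
  koszulDiff_natural (fun _ ↦ f.toAddMonoidHom) (fun _ i m _ ↦ map_smul f (x i) m) φ

lemma koszulDiff_mem {x : ι → R} {A : Finset ι → AddSubgroup M} {s : Finset ι} {B : AddSubgroup M}
    (h : ∀ i ∉ s, ∀ m ∈ A (insert i s), x i • m ∈ B) {φ : Finset ι → M} (hφ : ∀ s, φ s ∈ A s) :
    koszulDiff x φ s ∈ B :=
  sum_mem fun i hi ↦ B.zsmul_mem (h i (Finset.mem_compl.1 hi) _ (hφ _)) _

theorem koszulDiff_koszulDiff (x : ι → R) (φ : Finset ι → M) :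
    koszulDiff x (koszulDiff x φ) = 0 := by
  ext s
  have hsum : koszulDiff x (koszulDiff x φ) s = ∑ p ∈ sᶜ.offDiag,
      (koszulSign s p.1 * koszulSign (insert p.1 s) p.2) •
        (x p.1 * x p.2) • φ (insert p.2 (insert p.1 s)) := by
    simp only [koszulDiff_apply, Finset.smul_sum]
    rw [Finset.sum_sigma']
    refine Finset.sum_bij' (fun p _ ↦ (p.1, p.2)) (fun p _ ↦ ⟨p.1, p.2⟩) ?_ ?_ ?_ ?_ ?_
    · simp only [Finset.mem_sigma, Finset.mem_compl, Finset.mem_insert, Finset.mem_offDiag]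
      tauto
    · simp only [Finset.mem_sigma, Finset.mem_compl, Finset.mem_insert, Finset.mem_offDiag]
      tauto
    · exact fun _ _ ↦ rfl
    · exact fun _ _ ↦ rfl
    · intro p _
      rw [smul_comm (x p.1) (koszulSign _ _), smul_smul, smul_smul]
  rw [hsum]
  refine Finset.sum_involution (fun p _ ↦ p.swap) ?_ ?_ ?_ fun p _ ↦ p.swap_swap
  · intro p hp
    simp only [Finset.mem_offDiag, Finset.mem_compl] at hp
    rw [Prod.fst_swap, Prod.snd_swap, koszulSign_mul_koszulSign_insert hp.1 hp.2.1 hp.2.2,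
      mul_comm (x p.2), Finset.insert_comm p.2, neg_smul, neg_add_cancel]
  · exact fun p hp _ h ↦ (Finset.mem_offDiag.1 hp).2.2 (congrArg Prod.snd h)
  · intro p hp
    rw [Finset.mem_offDiag] at hp ⊢
    exact ⟨hp.2.1, hp.1, hp.2.2.symm⟩

lemma HasChainDegree.diff {b : ℕ} {φ : Finset ι → M} (hφ : HasChainDegree (b + 1) φ)
    (x : ι → R) : HasChainDegree b (koszulDiff x φ) := by
  intro s hs
  refine Finset.sum_eq_zero fun i hi ↦ ?_
  rw [hφ _ (by rw [Finset.card_insert_of_notMem (Finset.mem_compl.1 hi)]; omega), smul_zero,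
    smul_zero]

lemma HasChainDegree.diff_eq_zero {φ : Finset ι → M} (hφ : HasChainDegree 0 φ) (x : ι → R) :
    koszulDiff x φ = 0 := by
  ext s
  refine Finset.sum_eq_zero fun i _ ↦ ?_
  rw [hφ _ (Finset.card_ne_zero_of_mem (Finset.mem_insert_self i s)), smul_zero, smul_zero]

lemma koszulDiff_apply_empty (x : ι → R) (φ : Finset ι → M) :
    koszulDiff x φ ∅ = ∑ i, x i • φ {i} := by
  rw [koszulDiff_apply, Finset.compl_empty]
  simp [koszulSign]

lemma koszulDiff_koszulHomotopy_of_notMem {x : ι → R} {i : ι} {D : M →+ M} {φ : Finset ι → M}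
    {s : Finset ι} (hs : i ∉ s) (hD : x i • D (φ s) = φ s) :
    koszulDiff x (koszulHomotopy i D φ) s = φ s := by
  rw [koszulDiff_apply, Finset.sum_eq_single_of_mem i (Finset.mem_compl.2 hs)]
  · rw [koszulHomotopy, if_pos (Finset.mem_insert_self i s), Finset.erase_insert hs,
      smul_comm (x i), smul_smul, koszulSign_mul_self, one_smul, hD]
  · intro j _ hji
    rw [koszulHomotopy, if_neg (by simp [hs, hji.symm]), smul_zero, smul_zero]

lemma koszulDiff_koszulHomotopy_of_mem {x : ι → R} {i : ι} {D : M →+ M}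
    (hD : ∀ j m, D (x j • m) = if j = i then m else x j • D m) {φ : Finset ι → M}
    {s : Finset ι} (hs : i ∈ s) :
    koszulDiff x (koszulHomotopy i D φ) s + koszulHomotopy i D (koszulDiff x φ) s = φ s := by
  obtain ⟨t, hit, rfl⟩ : ∃ t, i ∉ t ∧ insert i t = s :=
    ⟨s.erase i, Finset.notMem_erase i s, Finset.insert_erase hs⟩
  have hcompl : tᶜ = insert i (insert i t)ᶜ := by
    rw [Finset.compl_insert, Finset.insert_erase (Finset.mem_compl.2 hit)]
  rw [koszulHomotopy, if_pos hs, Finset.erase_insert hit, koszulDiff_apply, koszulDiff_apply,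
    hcompl, Finset.sum_insert (by simp), map_add, map_zsmul, hD, if_pos rfl, smul_add, smul_smul,
    koszulSign_mul_self, one_smul, add_left_comm, map_sum, Finset.smul_sum,
    ← Finset.sum_add_distrib, Finset.sum_eq_zero, add_zero]
  intro j hj
  obtain ⟨hji, hjt⟩ : j ≠ i ∧ j ∉ t := by simpa using hj
  rw [koszulHomotopy, if_pos (by simp), map_zsmul, hD, if_neg hji,
    show (insert j (insert i t)).erase i = insert j t by
      rw [Finset.insert_comm, Finset.erase_insert (by simp [hit, hji.symm])],
    smul_comm (x j), smul_smul, smul_smul,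
    koszulSign_insert_mul_koszulSign_insert hit hjt hji.symm, neg_smul, neg_add_cancel]

end Koszul

section FilterMonomials

variable {σ S : Type*} [CommRing S]

open Classical in
/-- The projection of a polynomial onto its monomials with exponent satisfying `P`. -/
noncomputable def filterMonomials (P : (σ →₀ ℕ) → Prop) : MvPolynomial σ S →ₗ[S] MvPolynomial σ S :=
  (basisMonomials σ S).constr S fun β ↦ if P β then monomial β 1 else 0

open Classical in
lemma coeff_filterMonomials (P : (σ →₀ ℕ) → Prop) (p : MvPolynomial σ S) (β : σ →₀ ℕ) :
    coeff β (filterMonomials P p) = if P β then coeff β p else 0 := by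
  induction p using MvPolynomial.induction_on' with
  | add p q hp hq =>
    rw [map_add, coeff_add, hp, hq, coeff_add]
    split_ifs <;> simp
  | monomial γ a =>
    have hγ : (monomial γ a : MvPolynomial σ S) = a • basisMonomials σ S γ := by
      simp [smul_monomial]
    rw [filterMonomials, hγ, map_smul, Module.Basis.constr_basis, coe_basisMonomials]
    simp only [coeff_smul, apply_ite (coeff β), coeff_monomial, coeff_zero]
    split_ifs with h1 h2 h3 <;> simp_all

lemma filterMonomials_monomial_mul {P Q : (σ →₀ ℕ) → Prop} {γ : σ →₀ ℕ}
    (h : ∀ β, P (γ + β) ↔ Q β) (a : S) (p : MvPolynomial σ S) :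
    filterMonomials P (monomial γ a * p) = monomial γ a * filterMonomials Q p := by
  classical
  ext β
  rw [coeff_filterMonomials, coeff_monomial_mul', coeff_monomial_mul', coeff_filterMonomials]
  split_ifs with hP hle hQ hQ hQ <;> try rfl
  · exact absurd ((h _).1 (by rwa [add_tsub_cancel_of_le hle])) hQ
  · exact absurd ((h _).2 hQ) (by rwa [add_tsub_cancel_of_le ‹_›])
  · rw [mul_zero]

lemma support_filterMonomials_subset (P : (σ →₀ ℕ) → Prop) (p : MvPolynomial σ S) :
    (filterMonomials P p).support ⊆ p.support := by
  classical
  intro β hβ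
  rw [mem_support_iff, coeff_filterMonomials] at hβ
  exact mem_support_iff.2 (ite_ne_right_iff.1 hβ).2

lemma of_mem_support_filterMonomials {P : (σ →₀ ℕ) → Prop} {p : MvPolynomial σ S} {β : σ →₀ ℕ}
    (hβ : β ∈ (filterMonomials P p).support) : P β := by
  classical
  rw [mem_support_iff, coeff_filterMonomials] at hβ
  exact (ite_ne_right_iff.1 hβ).1

lemma sum_filterMonomials_of_existsUnique {κ : Type*} [Fintype κ] {P : κ → (σ →₀ ℕ) → Prop}
    {p : MvPolynomial σ S} (hP : ∀ β ∈ p.support, ∃! i, P i β) :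
    ∑ i, filterMonomials (P i) p = p := by
  classical
  ext β
  simp only [coeff_sum, coeff_filterMonomials]
  by_cases hβ : β ∈ p.support
  · obtain ⟨i, hi, huniq⟩ := hP β hβ
    rw [Finset.sum_eq_single_of_mem i (Finset.mem_univ i), if_pos hi]
    exact fun j _ hj ↦ if_neg fun h ↦ hj (huniq j h)
  · simp [notMem_support_iff.1 hβ]

lemma filterMonomials_mem_pow_idealOfVars {k : ℕ} {p : MvPolynomial σ S}
    (hp : p ∈ idealOfVars σ S ^ k) (P : (σ →₀ ℕ) → Prop) :
    filterMonomials P p ∈ idealOfVars σ S ^ k := by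
  rw [mem_pow_idealOfVars_iff] at hp ⊢
  exact fun β hβ ↦ hp β (support_filterMonomials_subset P p hβ)

end FilterMonomials

section DivXPow

variable {σ S : Type*} [CommRing S]

/-- Division by `X i ^ q`, discarding the monomials that it does not divide. -/
noncomputable def divXPow (q : ℕ) (i : σ) : MvPolynomial σ S →+ MvPolynomial σ S where
  toFun p := p.divMonomial (Finsupp.single i q)
  map_zero' := zero_divMonomial _
  map_add' p p' := add_divMonomial p p' _

lemma coeff_divXPow (q : ℕ) (i : σ) (p : MvPolynomial σ S) (β : σ →₀ ℕ) :
    coeff β (divXPow q i p) = coeff (Finsupp.single i q + β) p :=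
  coeff_divMonomial _ _ _

lemma divXPow_X_pow_mul [DecidableEq σ] (q : ℕ) (i j : σ) (p : MvPolynomial σ S) :
    divXPow q i (X j ^ q * p) = if j = i then p else X j ^ q * divXPow q i p := by
  split_ifs with h
  · rw [h, X_pow_eq_monomial]
    exact divMonomial_monomial_mul _ p
  · ext β
    have hle : Finsupp.single j q ≤ Finsupp.single i q + β ↔ Finsupp.single j q ≤ β := by
      rw [Finsupp.single_le_iff, Finsupp.single_le_iff, Finsupp.add_apply,
        Finsupp.single_eq_of_ne h, zero_add]
    rw [coeff_divXPow, X_pow_eq_monomial, coeff_monomial_mul', coeff_monomial_mul', coeff_divXPow]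
    simp only [hle]
    split_ifs with hj
    · rw [add_tsub_assoc_of_le hj]
    · rfl

lemma X_pow_mul_divXPow {q : ℕ} {i : σ} {p : MvPolynomial σ S}
    (hp : ∀ β ∈ p.support, q ≤ β i) : X i ^ q * divXPow q i p = p := by
  ext β
  rw [X_pow_eq_monomial, coeff_monomial_mul', coeff_divXPow]
  split_ifs with h
  · rw [one_mul, add_tsub_cancel_of_le h]
  · exact (notMem_support_iff.1 fun hβ ↦ h (Finsupp.single_le_iff.2 (hp β hβ))).symm

lemma divXPow_mem_pow_idealOfVars {k : ℕ} {p : MvPolynomial σ S}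
    (hp : p ∈ idealOfVars σ S ^ k) (q : ℕ) (i : σ) :
    divXPow q i p ∈ idealOfVars σ S ^ (k - q) := by
  rw [mem_pow_idealOfVars_iff] at hp ⊢
  intro β hβ
  have hdeg := hp _ (mem_support_iff.2 (coeff_divXPow q i p β ▸ mem_support_iff.1 hβ))
  rw [map_add, Finsupp.degree_single] at hdeg
  omega

end DivXPow

section KoszulPolynomial

variable {ι S : Type*} [LinearOrder ι] [Fintype ι] [CommRing S]

/-- `i` is the least index at which `X^β e_s` has multidegree at least `q`, where `e_i` is given the
multidegree of `X i ^ q`. -/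
def IsLeadingIndex (q : ℕ) (i : ι) (s : Finset ι) (β : ι →₀ ℕ) : Prop :=
  IsLeast {j | q ≤ β j + if j ∈ s then q else 0} i

lemma existsUnique_isLeadingIndex {ι : Type*} [LinearOrder ι] [Finite ι] {q : ℕ} {s : Finset ι}
    {β : ι →₀ ℕ}
    (h : ∃ j, q ≤ β j + if j ∈ s then q else 0) : ∃! i, IsLeadingIndex q i s β := by
  cases nonempty_fintype ι
  have hne : (Finset.univ.filter fun j ↦ q ≤ β j + if j ∈ s then q else 0).Nonempty := by
    simpa [Finset.filter_nonempty_iff] using h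
  refine ⟨_, by simpa [IsLeadingIndex] using Finset.isLeast_min' _ hne, fun j hj ↦ ?_⟩
  exact hj.unique (by simpa using Finset.isLeast_min' _ hne)

lemma koszulDiff_filterMonomials_isLeadingIndex (q : ℕ) (i : ι)
    (y : Finset ι → MvPolynomial ι S) :
    koszulDiff (fun j ↦ (X j : MvPolynomial ι S) ^ q)
      (fun s ↦ filterMonomials (IsLeadingIndex q i s) (y s)) =
    fun s ↦ filterMonomials (IsLeadingIndex q i s)
      (koszulDiff (fun j ↦ (X j : MvPolynomial ι S) ^ q) y s) := by
  refine koszulDiff_natural (R := MvPolynomial ι S)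
    (fun s ↦ (filterMonomials (IsLeadingIndex q i s)).toAddMonoidHom) (fun s j p hj ↦ ?_) y
  rw [smul_eq_mul, smul_eq_mul, X_pow_eq_monomial]
  refine filterMonomials_monomial_mul (fun β ↦ ?_) 1 p
  have hmultidegree : ∀ l, (Finsupp.single j q + β) l + (if l ∈ s then q else 0) =
      β l + if l ∈ insert j s then q else 0 := by
    intro l
    rcases eq_or_ne l j with rfl | hl
    · simp [hj, add_comm]
    · simp [hl]
  simp only [IsLeadingIndex, hmultidegree]

theorem exists_koszulDiff_X_pow_eq {q b k : ℕ} {y : Finset ι → MvPolynomial ι S}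
    (hy : HasChainDegree b y) (hyk : ∀ s, y s ∈ idealOfVars ι S ^ k)
    (hdiv : ∀ s, ∀ β ∈ (y s).support, ∃ j, q ≤ β j + if j ∈ s then q else 0)
    (hcycle : koszulDiff (fun j ↦ (X j : MvPolynomial ι S) ^ q) y = 0) :
    ∃ w : Finset ι → MvPolynomial ι S, HasChainDegree (b + 1) w ∧
      (∀ s, w s ∈ idealOfVars ι S ^ (k - q)) ∧
      koszulDiff (fun j ↦ (X j : MvPolynomial ι S) ^ q) w = y := by
  let y' (i : ι) (s : Finset ι) := filterMonomials (IsLeadingIndex q i s) (y s)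
  have hsum : ∑ i, y' i = y := by
    ext1 s
    rw [Finset.sum_apply]
    exact sum_filterMonomials_of_existsUnique fun β hβ ↦ existsUnique_isLeadingIndex (hdiv s β hβ)
  have hdegree : ∀ i, HasChainDegree b (y' i) := fun i s hs ↦ by
    simp only [y', hy s hs, map_zero]
  have hmem : ∀ i s, koszulHomotopy i (divXPow q i) (y' i) s ∈ idealOfVars ι S ^ (k - q) := by
    intro i s
    rw [koszulHomotopy]
    split_ifs
    · exact zsmul_mem (divXPow_mem_pow_idealOfVars (filterMonomials_mem_pow_idealOfVars (hyk _) _)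
        q i) _
    · exact zero_mem _
  have hcycle' : ∀ i, koszulDiff (fun j ↦ (X j : MvPolynomial ι S) ^ q) (y' i) = 0 := by
    intro i
    rw [koszulDiff_filterMonomials_isLeadingIndex, hcycle]
    ext1 s
    exact map_zero _
  refine ⟨∑ i, koszulHomotopy i (divXPow q i) (y' i), fun s hs ↦ ?_, fun s ↦ ?_, ?_⟩
  · rw [Finset.sum_apply]
    exact Finset.sum_eq_zero fun i _ ↦ (hdegree i).homotopy i _ s hs
  · rw [Finset.sum_apply]
    exact sum_mem fun i _ ↦ hmem i s
  · rw [map_sum, ← hsum]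
    refine Finset.sum_congr rfl fun i _ ↦ ?_
    ext1 s
    by_cases hs : i ∈ s
    · have := koszulDiff_koszulHomotopy_of_mem (x := fun j ↦ (X j : MvPolynomial ι S) ^ q)
        (φ := y' i) (divXPow_X_pow_mul q i) hs
      rwa [hcycle', koszulHomotopy, if_pos hs, Pi.zero_apply, map_zero, smul_zero, add_zero] at this
    · refine koszulDiff_koszulHomotopy_of_notMem hs (X_pow_mul_divXPow fun β hβ ↦ ?_)
      simpa [hs] using (of_mem_support_filterMonomials hβ).1

end KoszulPolynomial

/-! ### Skoda-type exactness -/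

section Skoda

variable {T : Type*} [CommRing T]

lemma mem_smul_top_pi_iff {κ : Type*} [Finite κ] {I : Ideal T} {v : κ → T} :
    v ∈ (I • ⊤ : Submodule T (κ → T)) ↔ ∀ c, v c ∈ I := by
  classical
  cases nonempty_fintype κ
  refine ⟨fun h c ↦ ?_, fun h ↦ ?_⟩
  · simpa using Submodule.smul_top_le_comap_smul_top I (LinearMap.proj (R := T) c) h
  · rw [pi_eq_sum_univ' v]
    exact sum_mem fun c _ ↦ Submodule.smul_mem_smul (h c) trivial

lemma exists_mem_smul_top_of_surjective {N P : Type*} [AddCommGroup N] [Module T N] [AddCommGroup P]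
    [Module T P] {f : P →ₗ[T] N} (hf : Function.Surjective f) {I : Ideal T} {n : N}
    (hn : n ∈ (I • ⊤ : Submodule T N)) : ∃ z ∈ (I • ⊤ : Submodule T P), f z = n := by
  rwa [← LinearMap.range_eq_top.2 hf, ← Submodule.map_top, ← Submodule.map_smul''] at hn

lemma exists_forall_mem_pow_sub_smul_top [IsNoetherianRing T] (I : Ideal T) {P : Type*}
    [AddCommGroup P] [Module T P] [Module.Finite T P] (N : Submodule T P) :
    ∃ k, ∀ n (m : N), (m : P) ∈ (I ^ n • ⊤ : Submodule T P) →
      m ∈ (I ^ (n - k) • ⊤ : Submodule T N) := by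
  obtain ⟨k, hk⟩ := I.exists_pow_inf_eq_pow_smul N
  refine ⟨k, fun n m hm ↦ ?_⟩
  rw [Submodule.mem_smul_top_iff]
  rcases le_total k n with hkn | hnk
  · have hmem : (m : P) ∈ I ^ n • ⊤ ⊓ N := ⟨hm, m.2⟩
    rw [hk n hkn] at hmem
    exact Submodule.smul_mono le_rfl inf_le_right hmem
  · rw [Nat.sub_eq_zero_of_le hnk, pow_zero, Submodule.one_smul]
    exact m.2

lemma X_mem_idealOfVars {σ S : Type*} [CommRing S] (i : σ) :
    (X i : MvPolynomial σ S) ∈ idealOfVars σ S :=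
  Ideal.subset_span ⟨i, rfl⟩

lemma hasChainDegree_zero_single {ι N : Type*} [DecidableEq ι] [Zero N] (n : N) :
    HasChainDegree 0 (Pi.single ∅ n : Finset ι → N) :=
  fun s hs ↦ by rw [Pi.single_apply, if_neg (by simpa using hs)]

lemma HasChainDegree.eq_single {ι N : Type*} [DecidableEq ι] [Zero N]
    {y : Finset ι → N} (hy : HasChainDegree 0 y) : y = Pi.single ∅ (y ∅) := by
  ext1 s
  rcases eq_or_ne s ∅ with rfl | hs
  · rw [Pi.single_eq_same]
  · rw [Pi.single_eq_of_ne hs, hy s (by simpa using hs)]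

lemma exists_lift_of_surjective {ι N P : Type*} [AddCommGroup N] [Module T N]
    [AddCommGroup P] [Module T P] {f : P →ₗ[T] N} (hf : Function.Surjective f) {I : Ideal T} {b : ℕ}
    {y : Finset ι → N} (hy : HasChainDegree b y) (hyI : ∀ s, y s ∈ (I • ⊤ : Submodule T N)) :
    ∃ z : Finset ι → P, HasChainDegree b z ∧ (∀ s, z s ∈ (I • ⊤ : Submodule T P)) ∧
      ∀ s, f (z s) = y s := by
  have hlift : ∀ s, ∃ z ∈ (I • ⊤ : Submodule T P), f z = y s ∧ (s.card ≠ b → z = 0) := by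
    intro s
    by_cases hs : s.card = b
    · obtain ⟨z, hz, hfz⟩ := exists_mem_smul_top_of_surjective hf (hyI s)
      exact ⟨z, hz, hfz, fun h ↦ absurd hs h⟩
    · exact ⟨0, zero_mem _, by rw [map_zero, hy s hs], fun _ ↦ rfl⟩
  choose z hz hfz hzdeg using hlift
  exact ⟨z, hzdeg, hz, hfz⟩

lemma exists_le_of_card_mul_lt_degree {ι : Type*} [Fintype ι] {q : ℕ} {β : ι →₀ ℕ}
    (h : Fintype.card ι * q < β.degree) : ∃ i, q ≤ β i := by
  rw [Finsupp.degree_eq_sum] at h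
  by_contra! hlt
  refine h.not_ge (Finset.sum_le_card_nsmul Finset.univ (fun i ↦ β i) q fun i _ ↦ (hlt i).le)

variable {ι : Type*} [LinearOrder ι] [Fintype ι]

lemma koszulDiff_pow_mem {N : Type*} [AddCommGroup N] [Module T N] {I : Ideal T} {x : ι → T}
    (hx : ∀ i, x i ∈ I) {q E : ℕ} {φ : Finset ι → N}
    (hφ : ∀ s, φ s ∈ (I ^ E • ⊤ : Submodule T N)) (s : Finset ι) :
    koszulDiff (fun i ↦ x i ^ q) φ s ∈ (I ^ (E + q) • ⊤ : Submodule T N) := by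
  refine koszulDiff_mem (A := fun _ ↦ (I ^ E • ⊤ : Submodule T N).toAddSubgroup)
    (B := (I ^ (E + q) • ⊤ : Submodule T N).toAddSubgroup) (fun i _ m hm ↦ ?_) hφ
  rw [Submodule.mem_toAddSubgroup, add_comm E q, pow_add, Submodule.mul_smul]
  exact Submodule.smul_mem_smul (Ideal.pow_mem_pow (hx i) q) hm

variable {S : Type*} [CommRing S]

lemma exists_koszulDiff_X_pow_eq_pi {κ : Type*} [Finite κ] {q b k : ℕ}
    {y : Finset ι → κ → MvPolynomial ι S} (hy : HasChainDegree (b + 1) y)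
    (hyk : ∀ s, y s ∈ (idealOfVars ι S ^ k • ⊤ : Submodule (MvPolynomial ι S) (κ → _)))
    (hcycle : koszulDiff (fun j ↦ (X j : MvPolynomial ι S) ^ q) y = 0) :
    ∃ w : Finset ι → κ → MvPolynomial ι S, HasChainDegree (b + 2) w ∧
      (∀ s, w s ∈ (idealOfVars ι S ^ (k - q) • ⊤ : Submodule (MvPolynomial ι S) (κ → _))) ∧
      koszulDiff (fun j ↦ (X j : MvPolynomial ι S) ^ q) w = y := by
  have hcoord : ∀ (z : Finset ι → κ → MvPolynomial ι S) c,
      koszulDiff (fun j ↦ (X j : MvPolynomial ι S) ^ q) (fun s ↦ z s c) =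
        fun s ↦ koszulDiff (fun j ↦ (X j : MvPolynomial ι S) ^ q) z s c :=
    fun z c ↦ koszulDiff_map (LinearMap.proj (R := MvPolynomial ι S)
      (φ := fun _ : κ ↦ MvPolynomial ι S) c) _ z
  have hexact : ∀ c, ∃ w : Finset ι → MvPolynomial ι S, HasChainDegree (b + 2) w ∧
      (∀ s, w s ∈ idealOfVars ι S ^ (k - q)) ∧
      koszulDiff (fun j ↦ (X j : MvPolynomial ι S) ^ q) w = fun s ↦ y s c := by
    refine fun c ↦ exists_koszulDiff_X_pow_eq (fun s hs ↦ congrFun (hy s hs) c)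
      (fun s ↦ mem_smul_top_pi_iff.1 (hyk s) c) (fun s β hβ ↦ ?_) ?_
    · obtain ⟨j, hj⟩ : s.Nonempty := Finset.nonempty_iff_ne_empty.2 fun hs ↦ by
        simp [hy s (by simp [hs])] at hβ
      exact ⟨j, by simp [hj]⟩
    · rw [hcoord, hcycle]
      rfl
  choose w hwdeg hwmem hw using hexact
  refine ⟨fun s c ↦ w c s, fun s hs ↦ funext fun c ↦ hwdeg c s hs,
    fun s ↦ mem_smul_top_pi_iff.2 fun c ↦ hwmem c s, ?_⟩
  ext1 s
  ext1 c
  rw [← congrFun (hw c) s, congrFun (hcoord (fun s c ↦ w c s) c) s]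

/-- Cycles of degree `b` of the Koszul complex of the `q`-th powers of the variables acting on `N`
that vanish to sufficiently high order `E` along the variables are boundaries, with a loss of the
order of vanishing that exceeds `q` by a constant independent of `q` and `E`. -/
def HasSkodaProperty (ι : Type*) [LinearOrder ι] [Fintype ι] (S : Type*) [CommRing S] (b : ℕ)
    (N : Type*) [AddCommGroup N] [Module (MvPolynomial ι S) N] : Prop :=
  ∃ c : ℕ, ∀ q E : ℕ, Fintype.card ι * q + c ≤ E + b * q →
    ∀ y : Finset ι → N, HasChainDegree b y →
    (∀ s, y s ∈ (idealOfVars ι S ^ E • ⊤ : Submodule (MvPolynomial ι S) N)) →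
    koszulDiff (fun j ↦ (X j : MvPolynomial ι S) ^ q) y = 0 →
    ∃ w : Finset ι → N, HasChainDegree (b + 1) w ∧
      (∀ s, w s ∈ (idealOfVars ι S ^ (E - q - c) • ⊤ : Submodule (MvPolynomial ι S) N)) ∧
      koszulDiff (fun j ↦ (X j : MvPolynomial ι S) ^ q) w = y

lemma exists_sum_X_pow_smul_eq {N : Type*} [AddCommGroup N] [Module (MvPolynomial ι S) N] {q E : ℕ}
    (hE : Fintype.card ι * q < E) {n : N}
    (hn : n ∈ (idealOfVars ι S ^ E • ⊤ : Submodule (MvPolynomial ι S) N)) :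
    ∃ w : Finset ι → N, HasChainDegree 1 w ∧
      (∀ s, w s ∈ (idealOfVars ι S ^ (E - q) • ⊤ : Submodule (MvPolynomial ι S) N)) ∧
      koszulDiff (fun j ↦ (X j : MvPolynomial ι S) ^ q) w = Pi.single ∅ n := by
  induction hn using Submodule.smul_induction_on' with
  | smul p hp n _ =>
    obtain ⟨w, hwdeg, hwmem, hw⟩ := exists_koszulDiff_X_pow_eq (q := q) (k := E)
      (hasChainDegree_zero_single p)
      (fun s ↦ by rw [Pi.single_apply]; split_ifs <;> simp [hp])
      (fun s β hβ ↦ by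
        rcases eq_or_ne s ∅ with rfl | hs
        · rw [Pi.single_eq_same] at hβ
          simpa using exists_le_of_card_mul_lt_degree
            (hE.trans_le ((mem_pow_idealOfVars_iff E p).1 hp β hβ))
        · simp [Pi.single_eq_of_ne hs] at hβ)
      ((hasChainDegree_zero_single p).diff_eq_zero _)
    refine ⟨fun s ↦ w s • n, fun s hs ↦ by simp only [hwdeg s hs, zero_smul],
      fun s ↦ Submodule.smul_mem_smul (hwmem s) trivial, ?_⟩
    have hmap := koszulDiff_map (LinearMap.toSpanSingleton (MvPolynomial ι S) N n)
      (fun j ↦ (X j : MvPolynomial ι S) ^ q) w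
    rw [hw] at hmap
    refine hmap.trans (funext fun s ↦ ?_)
    rcases eq_or_ne s ∅ with rfl | hs
    · simp
    · simp [Pi.single_eq_of_ne hs]
  | add n _ n' _ ih ih' =>
    obtain ⟨w, hwdeg, hwmem, hw⟩ := ih
    obtain ⟨w', hwdeg', hwmem', hw'⟩ := ih'
    exact ⟨w + w', fun s hs ↦ by rw [Pi.add_apply, hwdeg s hs, hwdeg' s hs, add_zero],
      fun s ↦ add_mem (hwmem s) (hwmem' s), by rw [map_add, hw, hw', Pi.single_add]⟩

lemma hasSkodaProperty_zero (N : Type*) [AddCommGroup N] [Module (MvPolynomial ι S) N] :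
    HasSkodaProperty ι S 0 N := by
  refine ⟨1, fun q E hE y hy hyE _ ↦ ?_⟩
  obtain ⟨w, hwdeg, hwmem, hw⟩ :=
    exists_sum_X_pow_smul_eq (ι := ι) (q := q) (E := E) (by omega) (hyE ∅)
  exact ⟨w, hwdeg, fun s ↦ Submodule.smul_mono_left (Ideal.pow_le_pow_right (by omega)) (hwmem s),
    hw.trans hy.eq_single.symm⟩

lemma pow_smul_top_le {I : Ideal T} {N : Type*} [AddCommGroup N] [Module T N] {A B : ℕ}
    (h : B ≤ A) : (I ^ A • ⊤ : Submodule T N) ≤ I ^ B • ⊤ :=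
  Submodule.smul_mono_left (Ideal.pow_le_pow_right h)

/-- By Artin–Rees the boundary of a chain of `P` that becomes a cycle modulo `N` vanishes to high
order as a chain of `N`. -/
lemma HasSkodaProperty.exists_koszulDiff_subtype_eq [IsNoetherianRing S] {b : ℕ} {P : Type*}
    [AddCommGroup P] [Module (MvPolynomial ι S) P] [Module.Finite (MvPolynomial ι S) P]
    {N : Submodule (MvPolynomial ι S) P} (hN : HasSkodaProperty ι S b N) :
    ∃ c : ℕ, ∀ q E : ℕ, Fintype.card ι * q + c ≤ E + (b + 1) * q →
      ∀ z : Finset ι → P, HasChainDegree (b + 1) z →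
      (∀ s, z s ∈ (idealOfVars ι S ^ E • ⊤ : Submodule (MvPolynomial ι S) P)) →
      (∀ s, koszulDiff (fun j ↦ (X j : MvPolynomial ι S) ^ q) z s ∈ N) →
      ∃ v : Finset ι → P, HasChainDegree (b + 1) v ∧ (∀ s, v s ∈ N) ∧
        (∀ s, v s ∈ (idealOfVars ι S ^ (E - c) • ⊤ : Submodule (MvPolynomial ι S) P)) ∧
        koszulDiff (fun j ↦ (X j : MvPolynomial ι S) ^ q) v =
          koszulDiff (fun j ↦ (X j : MvPolynomial ι S) ^ q) z := by
  obtain ⟨k, hk⟩ := exists_forall_mem_pow_sub_smul_top (idealOfVars ι S) N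
  obtain ⟨c, hc⟩ := hN
  refine ⟨k + c, fun q E hE z hz hzE hdz ↦ ?_⟩
  rw [add_mul, one_mul] at hE
  have hcoe (v : Finset ι → N) := koszulDiff_map N.subtype (fun j ↦ X j ^ q) v
  obtain ⟨v, hvdeg, hvmem, hv⟩ := hc q (E + q - k) (by omega)
    (fun s ↦ ⟨koszulDiff (fun j ↦ X j ^ q) z s, hdz s⟩)
    (fun s hs ↦ Subtype.ext (hz.diff _ s hs))
    (fun s ↦ hk _ _ (koszulDiff_pow_mem X_mem_idealOfVars hzE s))
    (funext fun s ↦ Subtype.ext <| (congrFun (hcoe _) s).symm.trans <|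
      congrFun (koszulDiff_koszulDiff _ z) s)
  refine ⟨fun s ↦ N.subtype (v s), fun s hs ↦ by simp only [hvdeg s hs, map_zero],
    fun s ↦ (v s).2, fun s ↦ pow_smul_top_le (by omega) <|
      Submodule.smul_top_le_comap_smul_top _ N.subtype (hvmem s), ?_⟩
  rw [hcoe, hv]
  rfl

lemma HasSkodaProperty.succ_of_surjective [IsNoetherianRing S] {κ : Type*} [Finite κ] {b : ℕ}
    {N : Type*} [AddCommGroup N] [Module (MvPolynomial ι S) N]
    {f : (κ → MvPolynomial ι S) →ₗ[MvPolynomial ι S] N} (hf : Function.Surjective f)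
    (hker : HasSkodaProperty ι S b (LinearMap.ker f)) : HasSkodaProperty ι S (b + 1) N := by
  obtain ⟨c, hc⟩ := hker.exists_koszulDiff_subtype_eq
  refine ⟨c, fun q E hE y hy hyE hcycle ↦ ?_⟩
  obtain ⟨z, hzdeg, hzmem, hfz⟩ := exists_lift_of_surjective hf hy hyE
  obtain ⟨v, hvdeg, hvker, hvmem, hv⟩ := hc q E (by omega) z hzdeg hzmem fun s ↦ by
    rw [LinearMap.mem_ker, ← congrFun (koszulDiff_map f _ z) s, funext hfz, hcycle, Pi.zero_apply]
  obtain ⟨w, hwdeg, hwmem, hw⟩ := exists_koszulDiff_X_pow_eq_pi (q := q) (b := b) (k := E - c)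
    (y := z - v) (fun s hs ↦ by rw [Pi.sub_apply, hzdeg s hs, hvdeg s hs, sub_zero])
    (fun s ↦ sub_mem (pow_smul_top_le (by omega) (hzmem s)) (hvmem s))
    (by rw [map_sub, hv, sub_self])
  refine ⟨fun s ↦ f (w s), fun s hs ↦ by simp only [hwdeg s hs, map_zero],
    fun s ↦ pow_smul_top_le (by omega) <|
      Submodule.smul_top_le_comap_smul_top _ f (hwmem s), ?_⟩
  rw [koszulDiff_map, hw]
  ext1 s
  rw [Pi.sub_apply, map_sub, hfz, LinearMap.mem_ker.1 (hvker s), sub_zero]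

lemma hasSkodaProperty_submodule [IsNoetherianRing S] (b g : ℕ)
    (N : Submodule (MvPolynomial ι S) (Fin g → MvPolynomial ι S)) : HasSkodaProperty ι S b N := by
  induction b generalizing g with
  | zero => exact hasSkodaProperty_zero N
  | succ b ih =>
    obtain ⟨g', f, hf⟩ := Module.Finite.exists_fin' (MvPolynomial ι S) N
    exact HasSkodaProperty.succ_of_surjective hf (ih g' _)

theorem hasSkodaProperty_of_finite [IsNoetherianRing S] (b : ℕ) (N : Type*) [AddCommGroup N]
    [Module (MvPolynomial ι S) N] [Module.Finite (MvPolynomial ι S) N] :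
    HasSkodaProperty ι S b N := by
  cases b with
  | zero => exact hasSkodaProperty_zero N
  | succ b =>
    obtain ⟨g, f, hf⟩ := Module.Finite.exists_fin' (MvPolynomial ι S) N
    exact HasSkodaProperty.succ_of_surjective hf (hasSkodaProperty_submodule b g _)

theorem exists_koszulDiff_pow_eq_of_mem_pow [IsNoetherianRing S] (b : ℕ) (f : ι → S) :
    ∃ c : ℕ, ∀ q E : ℕ, Fintype.card ι * q + c ≤ E + b * q → ∀ y : Finset ι → S,
      HasChainDegree b y → (∀ s, y s ∈ Ideal.span (Set.range f) ^ E) →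
      koszulDiff (fun j ↦ f j ^ q) y = 0 →
      ∃ w : Finset ι → S, HasChainDegree (b + 1) w ∧
        (∀ s, w s ∈ Ideal.span (Set.range f) ^ (E - q - c)) ∧
        koszulDiff (fun j ↦ f j ^ q) w = y := by
  algebraize [(aeval f : MvPolynomial ι S →ₐ[S] S).toRingHom]
  have hX (i : ι) : algebraMap (MvPolynomial ι S) S (X i) = f i := aeval_X f i
  have hfinite : Module.Finite (MvPolynomial ι S) S :=
    .of_surjective (Algebra.linearMap (MvPolynomial ι S) S) fun a ↦ ⟨C a, aeval_C f a⟩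
  have hpow (E : ℕ) (a : S) : a ∈ (idealOfVars ι S ^ E • ⊤ : Submodule (MvPolynomial ι S) S) ↔
      a ∈ Ideal.span (Set.range f) ^ E := by
    rw [Ideal.smul_top_eq_map, Submodule.restrictScalars_mem, Ideal.map_pow, idealOfVars,
      Ideal.map_span, ← Set.range_comp]
    simp only [Function.comp_def, hX]
  have hdiff (q : ℕ) (y : Finset ι → S) :
      koszulDiff (fun j ↦ (X j : MvPolynomial ι S) ^ q) y = koszulDiff (fun j ↦ f j ^ q) y :=
    (koszulDiff_natural (fun _ ↦ AddMonoidHom.id S)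
      (fun s i a _ ↦ by simp [Algebra.smul_def, hX]) y).symm
  obtain ⟨c, hc⟩ := hasSkodaProperty_of_finite (ι := ι) (S := S) b S
  refine ⟨c, fun q E hE y hy hyE hcycle ↦ ?_⟩
  simpa only [hpow, hdiff] using hc q E hE y hy (fun s ↦ (hpow E _).2 (hyE s))
    ((hdiff q y).trans hcycle)

end Skoda

section HypercohomologyChase

variable {S : Type*} [CommRing S]

/-- The elements of `l` form a weakly regular sequence modulo the ideal `𝔞`. -/
def IsRegularModulo (𝔞 : Ideal S) (l : List S) : Prop :=
  ∀ l₁ x l₂, l = l₁ ++ x :: l₂ → ∀ a, x * a ∈ 𝔞 ⊔ Ideal.ofList l₁ → a ∈ 𝔞 ⊔ Ideal.ofList l₁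

lemma IsRegularModulo.head {𝔞 : Ideal S} {x : S} {l : List S} (h : IsRegularModulo 𝔞 (x :: l)) :
    ∀ a, x * a ∈ 𝔞 → a ∈ 𝔞 := by
  simpa using h [] x l rfl

lemma IsRegularModulo.tail {𝔞 : Ideal S} {x : S} {l : List S} (h : IsRegularModulo 𝔞 (x :: l)) :
    IsRegularModulo (𝔞 ⊔ Ideal.span {x}) l := by
  intro l₁ y l₂ hl
  simpa [Ideal.ofList_cons, sup_assoc] using h (x :: l₁) y l₂ (by rw [hl, List.cons_append])

variable {D : Type*} [AddCommGroup D] [Module S D]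

/-- The differential of the mapping cone of multiplication by `x` on a complex with
differential `d`. -/
def coneDiff (d : D →ₗ[S] D) (x : S) : D × D →ₗ[S] D × D :=
  (d ∘ₗ .fst S D D - x • .snd S D D).prod (-(d ∘ₗ .snd S D D))

lemma coneDiff_apply (d : D →ₗ[S] D) (x : S) (w y : D) :
    coneDiff d x (w, y) = (d w - x • y, -d y) := rfl

lemma coneDiff_eq_zero_iff {d : D →ₗ[S] D} {x : S} {w y : D} :
    coneDiff d x (w, y) = 0 ↔ d w = x • y ∧ d y = 0 := by
  rw [coneDiff_apply, Prod.mk_eq_zero, sub_eq_zero, neg_eq_zero]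

/-- A family of subgroups of a complex, in which `c` is the homological degree and `k` counts
multiplications by elements of `l`, such that every cycle bounds within the family. -/
structure IsAcyclicFamily (d : D →ₗ[S] D) (l : List S) (Q : ℕ → ℕ → AddSubgroup D) : Prop where
  smul_mem : ∀ c k, ∀ x ∈ l, ∀ y ∈ Q c k, x • y ∈ Q c (k + 1)
  exists_boundary : ∀ c k, ∀ y ∈ Q c k, d y = 0 → ∃ w ∈ Q (c + 1) k, d w = y

lemma IsAcyclicFamily.cone {d : D →ₗ[S] D} {x : S} {l : List S} {Q : ℕ → ℕ → AddSubgroup D}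
    (hQ : IsAcyclicFamily d (x :: l) Q) :
    IsAcyclicFamily (coneDiff d x) l fun c k ↦ (Q (c + 1) (k + 1)).prod (Q c k) where
  smul_mem := fun c k z hz y hy ↦
    ⟨hQ.smul_mem _ _ z (.tail _ hz) _ hy.1, hQ.smul_mem _ _ z (.tail _ hz) _ hy.2⟩
  exists_boundary := by
    rintro c k ⟨w, y⟩ ⟨hw, hy⟩ hwy
    obtain ⟨hdw, hdy⟩ := coneDiff_eq_zero_iff.1 hwy
    obtain ⟨y', hy', rfl⟩ := hQ.exists_boundary c k y hy hdy
    obtain ⟨w', hw', hdw'⟩ := hQ.exists_boundary (c + 1) (k + 1) (w - x • y')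
      (sub_mem hw (hQ.smul_mem _ _ x (.head _) _ hy')) (by rw [map_sub, hdw, map_smul, sub_self])
    exact ⟨(w', -y'), ⟨hw', (Q (c + 1) k).neg_mem hy'⟩, by simp [coneDiff_apply, hdw']⟩

variable {ι : Type*} [LinearOrder ι] [Fintype ι]

lemma koszulDiff_apply_mem (t : ι → S) {I : Ideal S} {φ : Finset ι → S} (hφ : ∀ s, φ s ∈ I)
    (s : Finset ι) : koszulDiff t φ s ∈ I :=
  koszulDiff_mem (A := fun _ ↦ I.toAddSubgroup) (B := I.toAddSubgroup)
    (fun _ _ _ hm ↦ I.mul_mem_left _ hm) hφ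

lemma exists_sub_koszulDiff_mem_of_regular {t : ι → S} {𝔞 : Ideal S} {x : S}
    (hx : ∀ a, x * a ∈ 𝔞 → a ∈ 𝔞) {w y b : Finset ι → S}
    (hwy : ∀ s, koszulDiff t w s - x * y s ∈ 𝔞)
    (hb : ∀ s, w s - koszulDiff t b s ∈ 𝔞 ⊔ Ideal.span {x}) :
    ∃ b', ∀ s, y s - koszulDiff t b' s ∈ 𝔞 := by
  have hb' (s) : ∃ b', w s - koszulDiff t b s - x * b' ∈ 𝔞 := by
    obtain ⟨a, ha, z, hz, haz⟩ := Submodule.mem_sup.1 (hb s)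
    obtain ⟨b', rfl⟩ := Ideal.mem_span_singleton'.1 hz
    exact ⟨b', by rwa [← haz, mul_comm b', add_sub_cancel_right]⟩
  choose b' hb' using hb'
  refine ⟨b', fun s ↦ hx _ ?_⟩
  have hd : koszulDiff t w s - x * koszulDiff t b' s ∈ 𝔞 := by
    simpa [koszulDiff_koszulDiff] using
      koszulDiff_apply_mem t (φ := w - koszulDiff t b - x • b') hb' s
  convert sub_mem hd (hwy s) using 1
  ring

theorem exists_mem_and_exists_sub_koszulDiff_mem (t : ι → S) {l : List S} (hl : l ≠ [])
    {D : Type*} [AddCommGroup D] [Module S D] {d : D →ₗ[S] D} {Q : ℕ → ℕ → AddSubgroup D}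
    (hQ : IsAcyclicFamily d l Q) {𝔞 : Ideal S} (hreg : IsRegularModulo 𝔞 l)
    {f : D →ₗ[S] (Finset ι → S)} (hf : ∀ y s, f (d y) s - koszulDiff t (f y) s ∈ 𝔞)
    {y : D} (hy : d y = 0) (hQy : ∀ x ∈ l, x • y ∈ Q 0 1) :
    ∃ v ∈ Q l.length l.length, (∀ s, f v s ∈ 𝔞 ⊔ Ideal.ofList l) →
      ∃ b, ∀ s, f y s - koszulDiff t b s ∈ 𝔞 := by
  induction l generalizing D 𝔞 with
  | nil => exact absurd rfl hl
  | cons x l ih =>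
    obtain ⟨w, hw, hdw⟩ :=
      hQ.exists_boundary 0 1 _ (hQy x (.head _)) (by rw [map_smul, hy, smul_zero])
    have hwy (s) : koszulDiff t (f w) s - x * f y s ∈ 𝔞 := by
      simpa [hdw] using neg_mem (hf w s)
    suffices ∃ v ∈ Q (l.length + 1) (l.length + 1), (∀ s, f v s ∈ 𝔞 ⊔ Ideal.span {x} ⊔ .ofList l) →
        ∃ b, ∀ s, f w s - koszulDiff t b s ∈ 𝔞 ⊔ Ideal.span {x} by
      obtain ⟨v, hv, hvb⟩ := this
      refine ⟨v, hv, fun hmem ↦ ?_⟩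
      obtain ⟨b, hb⟩ := hvb (by simpa [Ideal.ofList_cons, sup_assoc] using hmem)
      exact exists_sub_koszulDiff_mem_of_regular hreg.head hwy hb
    rcases eq_or_ne l [] with rfl | hl
    · exact ⟨w, hw, fun h ↦ ⟨0, by simpa using h⟩⟩
    have hf' (z : D × D) (s) : (f ∘ₗ .fst S D D) (coneDiff d x z) s -
        koszulDiff t ((f ∘ₗ .fst S D D) z) s ∈ 𝔞 ⊔ Ideal.span {x} := by
      have hx : x * f z.2 s ∈ 𝔞 ⊔ Ideal.span {x} :=
        Ideal.mem_sup_right (Ideal.mul_mem_right _ _ (Ideal.mem_span_singleton_self x))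
      simpa [coneDiff, sub_right_comm] using sub_mem (Ideal.mem_sup_left (hf z.1 s)) hx
    obtain ⟨v, hv, hvb⟩ := ih hl hQ.cone hreg.tail hf' (y := (w, y))
      (coneDiff_eq_zero_iff.2 ⟨hdw, hy⟩)
      fun z hz ↦ ⟨hQ.smul_mem _ _ z (.tail _ hz) _ hw, hQy z (.tail _ hz)⟩
    exact ⟨v.1, hv.1, hvb⟩

end HypercohomologyChase

/-! ### Monic forms -/

lemma degree_eq_of_mem_support {σ R : Type*} [CommSemiring R] {p : MvPolynomial σ R}
    {d : ℕ} (hp : p.IsHomogeneous d) {β : σ →₀ ℕ} (hβ : β ∈ p.support) : β.degree = d := by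
  rw [Finsupp.degree_eq_weight_one]
  exact hp (mem_support_iff.1 hβ)

section IntGrading

variable {σ R : Type*} [CommRing R]

/-- The polynomials all of whose monomials have degree `e`, for an integer `e`; negative degrees
spare a case distinction when degrees are subtracted. -/
noncomputable def intHomogeneousSubmodule (σ R : Type*) [CommRing R] (e : ℤ) :
    Submodule R (MvPolynomial σ R) :=
  restrictSupport R {β | (β.degree : ℤ) = e}

lemma mem_intHomogeneousSubmodule {e : ℤ} {p : MvPolynomial σ R} :
    p ∈ intHomogeneousSubmodule σ R e ↔ ∀ β ∈ p.support, (β.degree : ℤ) = e := Iff.rfl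

lemma isHomogeneous_mem_intHomogeneousSubmodule {p : MvPolynomial σ R} {d : ℕ}
    (hp : p.IsHomogeneous d) : p ∈ intHomogeneousSubmodule σ R d :=
  fun _ hβ ↦ congrArg Nat.cast (degree_eq_of_mem_support hp hβ)

/-- The projection onto `intHomogeneousSubmodule σ R e`. -/
noncomputable def intHomogeneousComponent (e : ℤ) : MvPolynomial σ R →ₗ[R] MvPolynomial σ R :=
  filterMonomials fun β ↦ (β.degree : ℤ) = e

lemma intHomogeneousComponent_mem (e : ℤ) (p : MvPolynomial σ R) :
    intHomogeneousComponent e p ∈ intHomogeneousSubmodule σ R e :=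
  fun _ hβ ↦ of_mem_support_filterMonomials hβ

lemma intHomogeneousComponent_of_mem {e : ℤ} {p : MvPolynomial σ R}
    (hp : p ∈ intHomogeneousSubmodule σ R e) : intHomogeneousComponent e p = p := by
  classical
  ext β
  simp only [intHomogeneousComponent, coeff_filterMonomials, ite_eq_left_iff]
  exact fun h ↦ (notMem_support_iff.1 (mt (mem_intHomogeneousSubmodule.1 hp β) h)).symm

lemma intHomogeneousComponent_mul {a : MvPolynomial σ R} {d : ℕ} (ha : a.IsHomogeneous d) (e : ℤ)
    (p : MvPolynomial σ R) :
    intHomogeneousComponent e (a * p) = a * intHomogeneousComponent (e - d) p := by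
  rw [a.as_sum, Finset.sum_mul, Finset.sum_mul, map_sum]
  refine Finset.sum_congr rfl fun γ hγ ↦ filterMonomials_monomial_mul (fun β ↦ ?_) _ p
  rw [map_add, degree_eq_of_mem_support ha hγ, Nat.cast_add, eq_sub_iff_add_eq']

lemma mul_mem_intHomogeneousSubmodule {a p : MvPolynomial σ R} {d : ℕ} {e : ℤ}
    (ha : a.IsHomogeneous d) (hp : p ∈ intHomogeneousSubmodule σ R (e - d)) :
    a * p ∈ intHomogeneousSubmodule σ R e := by
  rw [← intHomogeneousComponent_of_mem hp, ← intHomogeneousComponent_mul ha]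
  exact intHomogeneousComponent_mem e _

lemma intHomogeneousComponent_mem_span_pow {ι : Type*} {f : ι → MvPolynomial σ R}
    {d : ι → ℕ} (hf : ∀ j, (f j).IsHomogeneous (d j)) {E : ℕ} {p : MvPolynomial σ R}
    (hp : p ∈ Ideal.span (Set.range f) ^ E) (e : ℤ) :
    intHomogeneousComponent e p ∈ Ideal.span (Set.range f) ^ E := by
  induction E generalizing p e with
  | zero => simp
  | succ E ih =>
    rw [pow_succ'] at hp
    induction hp using Submodule.mul_induction_on' with
    | add p _ q _ hp hq => rw [map_add]; exact add_mem hp hq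
    | mem_mul_mem a ha b hb =>
      obtain ⟨c, rfl⟩ := Finsupp.mem_ideal_span_range_iff_exists_finsupp.1 ha
      rw [Finsupp.sum, Finset.sum_mul, map_sum]
      refine Ideal.sum_mem _ fun j _ ↦ ?_
      rw [mul_right_comm, mul_comm, intHomogeneousComponent_mul (hf j), pow_succ']
      exact Ideal.mul_mem_mul (Ideal.subset_span ⟨j, rfl⟩) (ih (Ideal.mul_mem_left _ _ hb) _)

end IntGrading

section VarPowIdeal

variable {σ R : Type*} [CommRing R] {q : ℕ} {T : Set σ} {i₀ : σ} {D : ℕ} {G : MvPolynomial σ R}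

/-- The monomial ideal generated by the `q`-th powers of the variables in `T`. -/
noncomputable def varPowIdeal (R : Type*) [CommRing R] (q : ℕ) (T : Set σ) :
    Ideal (MvPolynomial σ R) :=
  Ideal.span ((fun i ↦ X i ^ q) '' T)

lemma mem_varPowIdeal {p : MvPolynomial σ R} :
    p ∈ varPowIdeal R q T ↔ ∀ β ∈ p.support, ∃ i ∈ T, q ≤ β i := by
  have : varPowIdeal R q T =
      Ideal.span ((fun s ↦ monomial s (1 : R)) '' ((fun i ↦ Finsupp.single i q) '' T)) := by
    simp only [varPowIdeal, Set.image_image, X_pow_eq_monomial]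
  rw [this, mem_ideal_span_monomial_image]
  simp [Finsupp.single_le_iff]

lemma monomial_mem_varPowIdeal {β : σ →₀ ℕ} {i : σ} (hi : i ∈ T) (hβ : q ≤ β i) (a : R) :
    monomial β a ∈ varPowIdeal R q T :=
  mem_varPowIdeal.2 fun _ hγ ↦ ⟨i, hi, Finset.mem_singleton.1 (support_monomial_subset hγ) ▸ hβ⟩

lemma mem_varPowIdeal_of_X_pow_mul_mem {i : σ} (hi : i ∉ T) {p : MvPolynomial σ R}
    (h : X i ^ q * p ∈ varPowIdeal R q T) : p ∈ varPowIdeal R q T := by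
  classical
  rw [mem_varPowIdeal] at h ⊢
  intro β hβ
  obtain ⟨j, hj, hle⟩ := h (Finsupp.single i q + β) (by
    rwa [mem_support_iff, X_pow_eq_monomial, coeff_monomial_mul, one_mul, ← mem_support_iff])
  have hij : i ≠ j := fun h ↦ hi (h ▸ hj)
  exact ⟨j, hj, by simpa [Finsupp.single_apply, hij] using hle⟩

/-- A form of degree `D` that is monic in the variable `X i₀`. -/
structure IsMonicForm (i₀ : σ) (D : ℕ) (G : MvPolynomial σ R) : Prop where
  isHomogeneous : G.IsHomogeneous D
  coeff_single : coeff (Finsupp.single i₀ D) G = 1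

lemma IsMonicForm.apply_lt (hG : IsMonicForm i₀ D G) {γ : σ →₀ ℕ} (hγ : γ ∈ G.support)
    (hne : γ ≠ Finsupp.single i₀ D) : γ i₀ < D := by
  have hdeg := degree_eq_of_mem_support hG.isHomogeneous hγ
  refine lt_of_le_of_ne (hdeg ▸ Finsupp.le_degree i₀ γ) fun h ↦ hne ?_
  have hle : Finsupp.single i₀ D ≤ γ := Finsupp.single_le_iff.2 h.ge
  have h0 : (γ - Finsupp.single i₀ D).degree = 0 := by
    have := congrArg Finsupp.degree (tsub_add_cancel_of_le hle)
    rw [map_add, Finsupp.degree_single] at this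
    omega
  rw [← tsub_add_cancel_of_le hle, (Finsupp.degree_eq_zero_iff _).1 h0, zero_add]

lemma IsMonicForm.coeff_single_add_mul (hG : IsMonicForm i₀ D G) {e : MvPolynomial σ R}
    {β : σ →₀ ℕ} (hβ : ∀ δ ∈ e.support, δ i₀ ≤ β i₀) :
    coeff (Finsupp.single i₀ D + β) (G * e) = coeff β e := by
  classical
  rw [coeff_mul, Finset.sum_eq_single (Finsupp.single i₀ D, β), hG.coeff_single, one_mul]
  · rintro ⟨γ, δ⟩ hmem hne
    by_contra hprod
    have hsum : γ + δ = Finsupp.single i₀ D + β := Finset.HasAntidiagonal.mem_antidiagonal.1 hmem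
    have hγ : γ ≠ Finsupp.single i₀ D := by
      rintro rfl
      exact hne (by rw [add_left_cancel hsum])
    have hlt : γ i₀ < D := hG.apply_lt (mem_support_iff.2 (left_ne_zero_of_mul hprod)) hγ
    have hle : δ i₀ ≤ β i₀ := hβ δ (mem_support_iff.2 (right_ne_zero_of_mul hprod))
    have := DFunLike.congr_fun hsum i₀
    simp only [Finsupp.add_apply, Finsupp.single_eq_same] at this
    omega
  · simp [Finset.HasAntidiagonal.mem_antidiagonal]

lemma IsMonicForm.mem_varPowIdeal_of_mul_mem (hG : IsMonicForm i₀ D G) (h₀ : i₀ ∉ T)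
    {e : MvPolynomial σ R} (h : G * e ∈ varPowIdeal R q T) : e ∈ varPowIdeal R q T := by
  classical
  set P : (σ →₀ ℕ) → Prop := fun β ↦ ¬∃ i ∈ T, q ≤ β i
  set e' := filterMonomials P e
  have hsub : e - e' ∈ varPowIdeal R q T := mem_varPowIdeal.2 fun β hβ ↦ by
    by_contra hβ'
    rw [mem_support_iff, coeff_sub, coeff_filterMonomials, if_pos hβ', sub_self] at hβ
    exact hβ rfl
  suffices e' = 0 by simpa [this] using hsub
  by_contra he'
  obtain ⟨β, hβ, hmax⟩ :=
    Finset.exists_max_image e'.support (fun α ↦ α i₀) (support_nonempty.2 he')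
  have hGe' : G * e' ∈ varPowIdeal R q T := by
    simpa [mul_sub] using sub_mem h (Ideal.mul_mem_left _ G hsub)
  obtain ⟨i, hi, hqi⟩ := mem_varPowIdeal.1 hGe' (Finsupp.single i₀ D + β) (by
    rwa [mem_support_iff, hG.coeff_single_add_mul hmax, ← mem_support_iff])
  have hne : i₀ ≠ i := fun h ↦ h₀ (h ▸ hi)
  exact of_mem_support_filterMonomials hβ ⟨i, hi, by simpa [Finsupp.single_apply, hne] using hqi⟩

/-- Moving the leading monomial `X i₀ ^ D` of `G` into the others lowers the exponent of `X i₀`,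
until some other exponent reaches `q`. -/
lemma IsMonicForm.monomial_mem_span_sup_varPowIdeal [Fintype σ] (hG : IsMonicForm i₀ D G)
    (hT : ∀ i ≠ i₀, i ∈ T) {α : σ →₀ ℕ}
    (hα : D + (Fintype.card σ - 1) * (q - 1) ≤ α.degree) :
    monomial α (1 : R) ∈ Ideal.span {G} ⊔ varPowIdeal R q T := by
  classical
  nontriviality R
  induction hN : α i₀ using Nat.strong_induction_on generalizing α with
  | _ N ih =>
  subst hN
  by_cases! hbig : ∃ i ≠ i₀, q ≤ α i
  · obtain ⟨i, hi, hqi⟩ := hbig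
    exact Ideal.mem_sup_right (monomial_mem_varPowIdeal (hT i hi) hqi 1)
  have hsum : ∑ i ∈ Finset.univ.erase i₀, α i ≤ (Fintype.card σ - 1) * (q - 1) := by
    refine (Finset.sum_le_card_nsmul _ _ (q - 1) fun i hi ↦ ?_).trans_eq (by simp)
    have := hbig i (Finset.ne_of_mem_erase hi)
    omega
  have hD : Finsupp.single i₀ D ≤ α := by
    rw [Finsupp.degree_eq_sum, ← Finset.add_sum_erase _ _ (Finset.mem_univ i₀)] at hα
    exact Finsupp.single_le_iff.2 (by omega)
  obtain ⟨α', rfl⟩ := exists_add_of_le hD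
  have hexpand : monomial (Finsupp.single i₀ D + α') (1 : R) = monomial α' 1 * G -
      ∑ γ ∈ G.support.erase (Finsupp.single i₀ D), C (coeff γ G) * monomial (γ + α') (1 : R) := by
    have h : Finsupp.single i₀ D ∈ G.support := by simp [hG.coeff_single]
    conv_rhs => enter [1, 2]; rw [G.as_sum]
    rw [← Finset.add_sum_erase _ _ h, mul_add, Finset.mul_sum, hG.coeff_single]
    simp [monomial_mul, C_mul_monomial, add_comm]
  rw [hexpand]
  refine sub_mem (Ideal.mem_sup_left (Ideal.mul_mem_left _ _ (Ideal.mem_span_singleton_self _)))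
    (Ideal.sum_mem _ fun γ hγ ↦ Ideal.mul_mem_left _ _ (ih _ ?_ ?_ rfl))
  · simpa using hG.apply_lt (Finset.mem_of_mem_erase hγ) (Finset.ne_of_mem_erase hγ)
  · rwa [map_add, degree_eq_of_mem_support hG.isHomogeneous (Finset.mem_of_mem_erase hγ),
      ← Finsupp.degree_single i₀ D, ← map_add, Finsupp.degree_single]

end VarPowIdeal

section RegularSequence

lemma mem_span_singleton_sup_of_mul_mem {S : Type*} [CommRing S] {I : Ideal S} {x G : S}
    (hx : ∀ a, x * a ∈ I → a ∈ I)
    (hG : ∀ e, G * e ∈ I ⊔ Ideal.span {x} → e ∈ I ⊔ Ideal.span {x}) {a : S}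
    (ha : x * a ∈ Ideal.span {G} ⊔ I) : a ∈ Ideal.span {G} ⊔ I := by
  obtain ⟨e, c, hc, hec⟩ := Ideal.mem_span_singleton_sup.1 ha
  have he : G * e ∈ I ⊔ Ideal.span {x} := by
    rw [mul_comm, eq_sub_of_add_eq hec]
    exact sub_mem (Ideal.mem_sup_right (Ideal.mul_mem_right _ _ (Ideal.mem_span_singleton_self x)))
      (Ideal.mem_sup_left hc)
  obtain ⟨e', c', hc', rfl⟩ := Ideal.mem_span_singleton_sup.1 (sup_comm I _ ▸ hG e he)
  refine Ideal.mem_span_singleton_sup.2 ⟨e', a - e' * G, hx _ ?_, by ring⟩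
  have : x * (a - e' * G) = c + c' * G := by linear_combination -hec
  exact this ▸ add_mem hc (Ideal.mul_mem_right _ _ hc')

lemma sup_span_image_congr {S κ : Type*} [CommRing S] {I : Ideal S} {x y : κ → S} {T : Set κ}
    (h : ∀ i ∈ T, x i - y i ∈ I) : I ⊔ Ideal.span (x '' T) = I ⊔ Ideal.span (y '' T) := by
  have hle (x y : κ → S) (h : ∀ i ∈ T, x i - y i ∈ I) :
      I ⊔ Ideal.span (x '' T) ≤ I ⊔ Ideal.span (y '' T) := by
    refine sup_le le_sup_left (Ideal.span_le.2 ?_)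
    rintro _ ⟨i, hi, rfl⟩
    rw [← sub_add_cancel (x i) (y i)]
    exact add_mem (Ideal.mem_sup_left (h i hi))
      (Ideal.mem_sup_right (Ideal.subset_span ⟨i, hi, rfl⟩))
  exact le_antisymm (hle x y h) (hle y x fun i hi ↦ by simpa using neg_mem (h i hi))

variable {σ R : Type*} [CommRing R] {q D : ℕ} {i₀ : σ} {G : MvPolynomial σ R}

lemma mem_sup_varPowIdeal_of_X_pow_mul_mem {i : σ} {T : Set σ}
    (hG : G = 0 ∨ i₀ ≠ i ∧ i₀ ∉ T ∧ IsMonicForm i₀ D G) (hi : i ∉ T) {a : MvPolynomial σ R}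
    (ha : X i ^ q * a ∈ Ideal.span {G} ⊔ varPowIdeal R q T) :
    a ∈ Ideal.span {G} ⊔ varPowIdeal R q T := by
  rcases hG with rfl | ⟨hne, h₀, hG⟩
  · simp only [Ideal.span_singleton_zero, bot_sup_eq] at ha ⊢
    exact mem_varPowIdeal_of_X_pow_mul_mem hi ha
  · refine mem_span_singleton_sup_of_mul_mem
      (fun a ↦ mem_varPowIdeal_of_X_pow_mul_mem hi) (fun e he ↦ ?_) ha
    have hins : varPowIdeal R q T ⊔ Ideal.span {X i ^ q} = varPowIdeal R q (insert i T) := by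
      rw [varPowIdeal, varPowIdeal, Set.image_insert_eq, Ideal.span_insert, sup_comm]
    rw [hins] at he ⊢
    exact hG.mem_varPowIdeal_of_mul_mem (by simp [hne, h₀]) he

variable {x : σ → MvPolynomial σ R} (hx : ∀ i, x i - X i ^ q ∈ Ideal.span {G})
include hx

lemma span_singleton_sup_ofList_map_eq (L : List σ) :
    Ideal.span {G} ⊔ Ideal.ofList (L.map x) = Ideal.span {G} ⊔ varPowIdeal R q {i | i ∈ L} := by
  have : Ideal.ofList (L.map x) = Ideal.span (x '' {i | i ∈ L}) := by
    rw [Ideal.ofList]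
    congr 1
    ext
    simp
  rw [this, varPowIdeal, sup_span_image_congr fun i _ ↦ hx i]

lemma isRegularModulo_map {L : List σ} (hL : L.Nodup)
    (hG : G = 0 ∨ i₀ ∉ L ∧ IsMonicForm i₀ D G) : IsRegularModulo (Ideal.span {G}) (L.map x) := by
  intro l₁ y l₂ hl a ha
  obtain ⟨L₁, L', rfl, rfl, hL'⟩ := List.map_eq_append_iff.1 hl
  obtain ⟨i, L₂, rfl, rfl, -⟩ := List.map_eq_cons_iff.1 hL'
  rw [span_singleton_sup_ofList_map_eq hx] at ha ⊢
  have hi : i ∉ L₁ := fun h ↦ (List.nodup_append.1 hL).2.2 i h i (.head _) rfl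
  refine mem_sup_varPowIdeal_of_X_pow_mul_mem (i₀ := i₀) (D := D) (i := i)
    (hG.imp_right fun h ↦ ⟨fun hii ↦ h.1 (by simp [hii]), fun hmem ↦ h.1 (by simp_all), h.2⟩) hi ?_
  have : X i ^ q * a = x i * a - (x i - X i ^ q) * a := by ring
  exact this ▸ sub_mem ha (Ideal.mem_sup_left (Ideal.mul_mem_right _ _ (hx i)))

end RegularSequence

section CartierOperator

variable {σ R : Type*} [CommRing R]

open Classical in
/-- The Cartier operator dual to the `q`-th power Frobenius: it maps `X ^ (q • γ + (q - 1))` to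
`X ^ γ` and kills all other monomials. -/
noncomputable def cartierOperator (R σ : Type*) [CommRing R] [Finite σ] (q : ℕ) :
    MvPolynomial σ R →ₗ[R] MvPolynomial σ R :=
  (basisMonomials σ R).constr R fun β ↦
    if ∀ i, β i % q = q - 1 then monomial (Finsupp.equivFunOnFinite.symm fun i ↦ β i / q) 1 else 0

lemma pow_card_pow_eq_expand {K : Type*} [Field K] [Fintype K] (s : ℕ) (a : MvPolynomial σ K) :
    a ^ (Fintype.card K ^ s) = expand (Fintype.card K ^ s) a := by
  obtain ⟨p, _, e, hp, hcard⟩ := FiniteField.card' K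
  have : Fact p.Prime := ⟨hp⟩
  have hq : Fintype.card K ^ s = p ^ ((e : ℕ) * s) := by rw [hcard, ← pow_mul]
  have hid : iterateFrobenius K p (e * s) = RingHom.id K :=
    RingHom.ext fun x ↦ by
      rw [iterateFrobenius_def, ← hq, FiniteField.pow_card_pow, RingHom.id_apply]
  rw [hq, ← map_iterateFrobenius_expand, hid, map_id]

variable [Finite σ]

open Classical in
lemma cartierOperator_monomial (q : ℕ) (β : σ →₀ ℕ) (a : R) :
    cartierOperator R σ q (monomial β a) = if ∀ i, β i % q = q - 1 then
      monomial (Finsupp.equivFunOnFinite.symm fun i ↦ β i / q) a else 0 := by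
  have hβ : monomial β a = a • basisMonomials σ R β := by simp [smul_monomial]
  rw [hβ, map_smul, cartierOperator, Module.Basis.constr_basis]
  split_ifs <;> simp [smul_monomial]

lemma cartierOperator_expand_mul {q : ℕ} (hq : 0 < q) (a b : MvPolynomial σ R) :
    cartierOperator R σ q (expand q a * b) = a * cartierOperator R σ q b := by
  induction a using MvPolynomial.induction_on' with
  | add p r hp hr => rw [map_add, add_mul, map_add, hp, hr, add_mul]
  | monomial α x =>
    induction b using MvPolynomial.induction_on' with
    | add p r hp hr => rw [mul_add, map_add, hp, hr, map_add, mul_add]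
    | monomial β y =>
      rw [expand_monomial, monomial_mul, cartierOperator_monomial, cartierOperator_monomial]
      have hmod (i) : (q • α + β) i % q = β i % q := by simp
      split_ifs with h₁ h₂ h₂
      · rw [monomial_mul]
        refine congrArg (fun γ ↦ monomial γ (x * y)) (Finsupp.ext fun i ↦ ?_)
        simp [Nat.mul_add_div hq]
      · exact absurd (fun i ↦ hmod i ▸ h₁ i) h₂
      · exact absurd (fun i ↦ (hmod i).trans (h₂ i)) h₁
      · rw [mul_zero]

lemma cartierOperator_monomial_add {q : ℕ} (hq : 0 < q) (γ : σ →₀ ℕ) :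
    cartierOperator R σ q
      (monomial (Finsupp.equivFunOnFinite.symm (fun _ ↦ q - 1) + q • γ) 1) = monomial γ 1 := by
  have hlt : q - 1 < q := Nat.sub_lt hq one_pos
  rw [cartierOperator_monomial, if_pos fun i ↦ by simp [Nat.mod_eq_of_lt hlt]]
  congr 1
  ext i
  simp [Nat.add_mul_div_left _ _ hq, Nat.div_eq_of_lt hlt]

end CartierOperator

section SkodaChains

variable {ι σ R : Type*} [Fintype ι] [CommRing R] {f : ι → MvPolynomial σ R}
  {d : ι → ℕ}

/-- The Koszul chains of degree `c` for `f_j ^ q` that are homogeneous of total degree `u`, where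
the basis element of `s` has degree `q * ∑ i ∈ s, d i`, and whose entries lie in the power of the
ideal `(f)` for which the Briançon–Skoda property provides preimages with entries in the power
prescribed in chain degree `c + 1`. -/
def skodaChains (f : ι → MvPolynomial σ R) (d : ι → ℕ) (q : ℕ) (C : ℕ → ℕ) (u : ℤ) (c : ℕ) :
    AddSubgroup (Finset ι → MvPolynomial σ R) where
  carrier := {y | HasChainDegree c y ∧
    ∀ s, y s ∈ Ideal.span (Set.range f) ^ (Fintype.card ι * q + C c - c * q) ∧
      y s ∈ intHomogeneousSubmodule σ R (u - ∑ i ∈ s, (q * d i : ℤ))}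
  add_mem' := fun ha hb ↦ ⟨fun s hs ↦ by simp [ha.1 s hs, hb.1 s hs],
    fun s ↦ ⟨add_mem (ha.2 s).1 (hb.2 s).1, add_mem (ha.2 s).2 (hb.2 s).2⟩⟩
  zero_mem' := ⟨fun _ _ ↦ rfl, fun _ ↦ ⟨zero_mem _, zero_mem _⟩⟩
  neg_mem' := fun ha ↦ ⟨fun s hs ↦ by simp [ha.1 s hs],
    fun s ↦ ⟨neg_mem (ha.2 s).1, neg_mem (ha.2 s).2⟩⟩

lemma smul_mem_skodaChains {q : ℕ} {C : ℕ → ℕ} {u : ℤ} {c δ : ℕ} {x : MvPolynomial σ R}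
    (hx : x.IsHomogeneous δ) {y : Finset ι → MvPolynomial σ R} (hy : y ∈ skodaChains f d q C u c) :
    x • y ∈ skodaChains f d q C (u + δ) c := by
  refine ⟨fun s hs ↦ by simp [hy.1 s hs], fun s ↦ ⟨Ideal.mul_mem_left _ _ (hy.2 s).1, ?_⟩⟩
  refine mul_mem_intHomogeneousSubmodule hx ?_
  convert (hy.2 s).2 using 2
  ring

variable [LinearOrder ι]

lemma koszulDiff_intHomogeneousComponent (hf : ∀ j, (f j).IsHomogeneous (d j)) (q : ℕ) (u : ℤ)
    (w : Finset ι → MvPolynomial σ R) :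
    koszulDiff (fun j ↦ f j ^ q)
        (fun s ↦ intHomogeneousComponent (u - ∑ i ∈ s, (q * d i : ℤ)) (w s)) =
      fun s ↦ intHomogeneousComponent (u - ∑ i ∈ s, (q * d i : ℤ))
        (koszulDiff (fun j ↦ f j ^ q) w s) := by
  refine koszulDiff_natural (fun s ↦
    (intHomogeneousComponent (u - ∑ i ∈ s, (q * d i : ℤ))).toAddMonoidHom) (fun s i m hi ↦ ?_) w
  simp only [LinearMap.toAddMonoidHom_coe, smul_eq_mul]
  rw [intHomogeneousComponent_mul ((hf i).pow q), Finset.sum_insert hi]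
  congr 2
  push_cast
  ring_nf

theorem exists_skodaChains_exact [Finite σ] [IsNoetherianRing R]
    (hf : ∀ j, (f j).IsHomogeneous (d j)) :
    ∃ C : ℕ → ℕ, ∀ (q : ℕ) (u : ℤ) (c : ℕ), ∀ y ∈ skodaChains f d q C u c,
      koszulDiff (fun j ↦ f j ^ q) y = 0 →
      ∃ w ∈ skodaChains f d q C u (c + 1), koszulDiff (fun j ↦ f j ^ q) w = y := by
  choose cs hcs using fun b ↦ exists_koszulDiff_pow_eq_of_mem_pow b f
  obtain ⟨C, hC⟩ : ∃ C : ℕ → ℕ, ∀ b ≤ Fintype.card ι, C b = cs b + C (b + 1) :=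
    ⟨fun b ↦ ∑ i ∈ Finset.Ico b (Fintype.card ι + 1), cs i,
      fun b hb ↦ Finset.sum_eq_sum_Ico_succ_bot (Nat.lt_succ_of_le hb) cs⟩
  refine ⟨C, fun q u c y hy hdy ↦ ?_⟩
  rcases Nat.lt_or_ge (Fintype.card ι) c with hc | hc
  · have hy0 : y = 0 := funext fun s ↦ hy.1 s ((Finset.card_le_univ s).trans_lt hc).ne
    exact ⟨0, zero_mem _, by rw [hy0, map_zero]⟩
  have hCc := hC c hc
  have hcq : c * q ≤ Fintype.card ι * q := Nat.mul_le_mul_right q hc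
  obtain ⟨w, hwdeg, hwpow, hdw⟩ := hcs c q _ (by omega) y hy.1 (fun s ↦ (hy.2 s).1) hdy
  refine ⟨fun s ↦ intHomogeneousComponent (u - ∑ i ∈ s, (q * d i : ℤ)) (w s),
    ⟨fun s hs ↦ by simp [hwdeg s hs], fun s ↦ ⟨?_, intHomogeneousComponent_mem _ _⟩⟩, ?_⟩
  · refine intHomogeneousComponent_mem_span_pow hf (Ideal.pow_le_pow_right ?_ (hwpow s)) _
    simp only [hCc, add_mul, one_mul]
    omega
  · rw [koszulDiff_intHomogeneousComponent hf, hdw]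
    exact funext fun s ↦ intHomogeneousComponent_of_mem (hy.2 s).2

end SkodaChains

/-! ### Finite fields -/

section Chase

variable {ι σ R : Type*} [Fintype ι] [LinearOrder ι] [CommRing R] {f : ι → MvPolynomial σ R}
  {d : ι → ℕ}

/- This is the comparison of the Koszul complex of the `f_j ^ q` with the total complex of its
extensions by the regular sequence `x`, with all the Skoda bookkeeping done by `skodaChains`. -/
lemma mem_span_range_pow_sup_of_isRegularModulo {q uh δ : ℕ} {C : ℕ → ℕ}
    (hexact : ∀ (u : ℤ) (c : ℕ), ∀ y ∈ skodaChains f d q C u c,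
      koszulDiff (fun j ↦ f j ^ q) y = 0 →
      ∃ w ∈ skodaChains f d q C u (c + 1), koszulDiff (fun j ↦ f j ^ q) w = y)
    {h : MvPolynomial σ R} (hh : h.IsHomogeneous uh) {x : σ → MvPolynomial σ R}
    (hx : ∀ i, (x i).IsHomogeneous δ)
    (hxh : ∀ i, x i * h ∈ Ideal.span (Set.range f) ^ (Fintype.card ι * q + C 0))
    {𝔞 : Ideal (MvPolynomial σ R)} {L : List σ} (hL : L ≠ [])
    (hreg : IsRegularModulo 𝔞 (L.map x))
    (hvanish : ∀ w : Finset ι → MvPolynomial σ R, HasChainDegree L.length w →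
      (∀ s, w s ∈ intHomogeneousSubmodule σ R (uh + L.length * δ - ∑ i ∈ s, (q * d i : ℤ))) →
      ∀ s, w s ∈ 𝔞 ⊔ Ideal.ofList (L.map x)) :
    h ∈ Ideal.span (Set.range fun j ↦ f j ^ q) ⊔ 𝔞 := by
  have hfam : IsAcyclicFamily (koszulDiff fun j ↦ f j ^ q) (L.map x)
      fun c k ↦ skodaChains f d q C (uh + k * δ) c :=
    { smul_mem := fun c k z hz y hy ↦ by
        obtain ⟨i, -, rfl⟩ := List.mem_map.1 hz
        have := smul_mem_skodaChains (hx i) hy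
        rwa [add_assoc, ← add_one_mul, ← Nat.cast_add_one] at this
      exists_boundary := fun c k ↦ hexact _ c }
  have hsingle := hasChainDegree_zero_single (ι := ι) h
  have hstart : ∀ z ∈ L.map x, z • (Pi.single ∅ h : Finset ι → MvPolynomial σ R) ∈
      skodaChains f d q C (uh + (1 : ℕ) * δ) 0 := by
    intro z hz
    obtain ⟨i, -, rfl⟩ := List.mem_map.1 hz
    refine ⟨fun s hs ↦ by simp [hsingle s hs], fun s ↦ ?_⟩
    obtain rfl | hs := eq_or_ne s ∅
    · have := isHomogeneous_mem_intHomogeneousSubmodule ((hx i).mul hh)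
      simpa [hxh, add_comm] using this
    · simp [Pi.single_eq_of_ne hs]
  obtain ⟨v, hv, hvb⟩ := exists_mem_and_exists_sub_koszulDiff_mem (f := LinearMap.id)
    (fun j ↦ f j ^ q) (by simpa using hL) hfam hreg (fun y s ↦ by simp)
    (hsingle.diff_eq_zero _) hstart
  rw [List.length_map] at hv
  obtain ⟨b, hb⟩ := hvb (hvanish v hv.1 fun s ↦ (hv.2 s).2)
  have hb0 := hb ∅
  rw [LinearMap.id_apply, Pi.single_eq_same, koszulDiff_apply_empty] at hb0
  rw [← sub_add_cancel h, add_comm]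
  refine add_mem (Ideal.mem_sup_left (sum_mem fun j _ ↦ ?_)) (Ideal.mem_sup_right hb0)
  exact Ideal.mul_mem_right _ _ (Ideal.subset_span ⟨j, rfl⟩)

lemma pow_mul_monomial_mem_pow {I : Ideal (MvPolynomial σ R)} {i₀ : σ}
    {p : MvPolynomial σ R} {a N T : ℕ} (h : p ^ N * X i₀ ^ a ∈ I ^ N) (hT : N ≤ T)
    {α : σ →₀ ℕ} (hα : a ≤ α i₀) : p ^ T * monomial α 1 ∈ I ^ N := by
  have hdvd : X i₀ ^ a ∣ monomial α (1 : R) := by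
    rw [X_pow_eq_monomial]
    exact monomial_dvd_monomial.2 ⟨.inr (Finsupp.single_le_iff.2 hα), one_dvd _⟩
  exact Ideal.mem_of_dvd _ (mul_dvd_mul (pow_dvd_pow p hT) hdvd) h

lemma IsMonicForm.mem_span_sup_varPowIdeal [Fintype σ] {i₀ : σ} {D q : ℕ}
    {G : MvPolynomial σ R} (hG : IsMonicForm i₀ D G) {T : Set σ} (hT : ∀ i ≠ i₀, i ∈ T)
    {e : ℤ} (he : D + ((Fintype.card σ - 1 : ℕ) * (q - 1 : ℕ) : ℤ) ≤ e)
    {p : MvPolynomial σ R} (hp : p ∈ intHomogeneousSubmodule σ R e) :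
    p ∈ Ideal.span {G} ⊔ varPowIdeal R q T := by
  rw [p.as_sum]
  refine sum_mem fun β hβ ↦ ?_
  rw [← mul_one (coeff β p), ← C_mul_monomial]
  refine Ideal.mul_mem_left _ _ (hG.monomial_mem_span_sup_varPowIdeal hT ?_)
  have := mem_intHomogeneousSubmodule.1 hp β hβ
  zify
  omega

end Chase

lemma cartierOperator_mem_of_mem_map_expand {σ R : Type*} [CommRing R] [Finite σ] {q : ℕ}
    (hq : 0 < q) {I : Ideal (MvPolynomial σ R)} {a : MvPolynomial σ R}
    (ha : a ∈ I.map (expand (R := R) (σ := σ) q)) : cartierOperator R σ q a ∈ I := by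
  refine Submodule.span_induction (p := fun a _ ↦ ∀ b, cartierOperator R σ q (b * a) ∈ I)
    ?_ (by simp) (fun a₁ a₂ _ _ h₁ h₂ b ↦ ?_) (fun c a _ h b ↦ ?_) ha 1 |> (one_mul a ▸ ·)
  · rintro _ ⟨a, haI, rfl⟩ b
    rw [mul_comm, cartierOperator_expand_mul hq]
    exact Ideal.mul_mem_right _ _ haI
  · rw [mul_add, map_add]
    exact add_mem (h₁ b) (h₂ b)
  · rw [smul_eq_mul, ← mul_assoc]
    exact h _

section FiniteField

variable {σ K : Type*} [Field K] [Fintype K]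

lemma IsMonicForm.pow_card_pow {i₀ : σ} {D : ℕ} {g : MvPolynomial σ K}
    (hg : IsMonicForm i₀ D g) (s : ℕ) :
    IsMonicForm i₀ (Fintype.card K ^ s * D) (g ^ Fintype.card K ^ s) where
  isHomogeneous := mul_comm D _ ▸ hg.isHomogeneous.pow _
  coeff_single := by
    rw [pow_card_pow_eq_expand, ← smul_eq_mul, ← Finsupp.smul_single,
      coeff_expand_smul _ (pow_ne_zero _ Fintype.card_ne_zero), hg.coeff_single]

lemma pow_sub_X_pow_mem_span_pow (g u : MvPolynomial σ K) (i : σ)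
    (k s t : ℕ) :
    (X i ^ k + g * u) ^ (Fintype.card K ^ s * t) - X i ^ (k * (Fintype.card K ^ s * t)) ∈
      Ideal.span {g ^ Fintype.card K ^ s} := by
  rw [pow_mul (X i) k, Ideal.mem_span_singleton, pow_mul, pow_mul (X i ^ k)]
  refine dvd_trans ?_ (sub_dvd_pow_sub_pow _ _ t)
  simp only [pow_card_pow_eq_expand, map_add, map_mul, add_sub_cancel_left, dvd_mul_right]

/-- Either `g = 0` and the regular sequence lengthened by all variables exceeds the length of the
Koszul complex, or `g` is monic in `X i₀` and the chains at the end of the chase vanish modulo `g`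
and powers of the other variables for degree reasons. -/
lemma exists_list_forall_mem_span_sup_varPowIdeal {ι σ R : Type*} [Fintype ι] [Fintype σ]
    [CommRing R] {d : ι → ℕ} {q N D δ : ℕ} (hq : 0 < q) (hδ : 0 < δ) {i₀ : σ}
    {G : MvPolynomial σ R}
    (hcase : G = 0 ∧ Fintype.card ι < Fintype.card σ ∨ IsMonicForm i₀ (q * D) G ∧
      Fintype.card ι ≠ 0 ∧ Fintype.card ι + 1 = Fintype.card σ ∧
      ∑ j, d j + D ≤ N + Fintype.card ι) :
    ∃ L : List σ, L ≠ [] ∧ L.Nodup ∧ (G = 0 ∨ i₀ ∉ L ∧ IsMonicForm i₀ (q * D) G) ∧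
      ∀ w : Finset ι → MvPolynomial σ R, HasChainDegree L.length w →
        (∀ s, w s ∈ intHomogeneousSubmodule σ R ((Fintype.card σ * (q - 1) + q * N : ℕ) +
          L.length * δ - ∑ i ∈ s, (q * d i : ℤ))) →
        ∀ s, w s ∈ Ideal.span {G} ⊔ varPowIdeal R δ {i | i ∈ L} := by
  classical
  rcases hcase with ⟨hG, hcard⟩ | ⟨hG, hι, hcard, hdeg⟩
  · refine ⟨Finset.univ.toList, ?_, Finset.nodup_toList _, .inl hG, fun w hw _ s ↦ ?_⟩
    · rw [Ne, Finset.toList_eq_nil, ← Finset.card_eq_zero, Finset.card_univ]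
      omega
    · rw [hw s (by simpa using ((Finset.card_le_univ s).trans_lt hcard).ne)]
      exact zero_mem _
  · have hlen : (Finset.univ.erase i₀).toList.length = Fintype.card ι := by simp [← hcard]
    refine ⟨(Finset.univ.erase i₀).toList, List.ne_nil_of_length_pos (by omega),
      Finset.nodup_toList _, .inr ⟨by simp, hG⟩, fun w _ hw s ↦
        hG.mem_span_sup_varPowIdeal (by simp) ?_ (hw s)⟩
    have hsum : ∑ i ∈ s, (q * d i : ℤ) ≤ q * ∑ i, (d i : ℤ) := by
      rw [Finset.mul_sum]
      exact Finset.sum_le_univ_sum_of_nonneg fun i ↦ by positivity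
    zify at hdeg
    rw [hlen, ← hcard, Nat.add_sub_cancel]
    push_cast [Nat.cast_pred hq, Nat.cast_pred hδ]
    have : (1 : ℤ) ≤ q := by exact_mod_cast hq
    nlinarith

lemma monomial_mem_of_monomial_mem_span_pow {ι : Type*} [Finite σ] {f : ι → MvPolynomial σ K}
    {g : MvPolynomial σ K} {s : ℕ} {γ : σ →₀ ℕ}
    (h : monomial (Finsupp.equivFunOnFinite.symm (fun _ ↦ Fintype.card K ^ s - 1) +
        Fintype.card K ^ s • γ) 1 ∈
      Ideal.span (Set.range fun j ↦ f j ^ Fintype.card K ^ s) ⊔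
        Ideal.span {g ^ Fintype.card K ^ s}) :
    monomial γ 1 ∈ Ideal.span (Set.range f) ⊔ Ideal.span {g} := by
  have hexpand : Ideal.span (Set.range fun j ↦ f j ^ Fintype.card K ^ s) ⊔
        Ideal.span {g ^ Fintype.card K ^ s} =
      (Ideal.span (Set.range f) ⊔ Ideal.span {g}).map
        (expand (R := K) (σ := σ) (Fintype.card K ^ s)) := by
    rw [Ideal.map_sup, Ideal.map_span, Ideal.map_span, Set.image_singleton, ← Set.range_comp]
    simp only [Function.comp_def, pow_card_pow_eq_expand]
  have hq : 0 < Fintype.card K ^ s := pow_pos Fintype.card_pos s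
  rw [← cartierOperator_monomial_add hq γ]
  exact cartierOperator_mem_of_mem_map_expand hq (hexpand ▸ h)

/-- The numerical conditions on forms `f j` of degree `d j` and `g` under which the chains at the
end of the chase vanish: either `g = 0` and there are fewer forms than variables, or `g` is monic
in `X i₀` of degree `D`, the total number of forms is that of variables, and the total degree is at
most `N + #ι`. Here `N` is the exponent of `X i₀` that is to be reached. -/
def IsAdmissible {ι σ R : Type*} [Fintype ι] [Fintype σ] [CommRing R] (d : ι → ℕ) (i₀ : σ)
    (D N : ℕ) (g : MvPolynomial σ R) : Prop :=
  g = 0 ∧ Fintype.card ι < Fintype.card σ ∨ IsMonicForm i₀ D g ∧ Fintype.card ι ≠ 0 ∧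
    Fintype.card ι + 1 = Fintype.card σ ∧ ∑ j, d j + D ≤ N + Fintype.card ι

theorem X_pow_mem_span_range_sup_span_of_finite_field {ι σ K : Type*} [Fintype ι] [LinearOrder ι]
    [Fintype σ] [Field K] [Finite K] {f : ι → MvPolynomial σ K} {d : ι → ℕ}
    {g : MvPolynomial σ K} {u : σ → MvPolynomial σ K} {i₀ : σ} {k M c D : ℕ}
    (hf : ∀ j, (f j).IsHomogeneous (d j)) (hk : 0 < k)
    (hu : ∀ i, (X i ^ k + g * u i).IsHomogeneous k)
    (hpow : ∀ i N, (X i ^ k + g * u i) ^ N * X i₀ ^ (M * (N + c)) ∈ Ideal.span (Set.range f) ^ N)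
    (hg : IsAdmissible d i₀ D (Fintype.card ι * M) g) :
    X i₀ ^ (Fintype.card ι * M) ∈ Ideal.span (Set.range f) ⊔ Ideal.span {g} := by
  cases nonempty_fintype K
  obtain ⟨C, hC⟩ := exists_skodaChains_exact hf
  obtain ⟨s, hs⟩ : ∃ s, M * (C 0 + c) < Fintype.card K ^ s :=
    ⟨_, Nat.lt_pow_self Fintype.one_lt_card⟩
  set q := Fintype.card K ^ s
  set T := q * (Fintype.card ι + C 0 + 1)
  set N := Fintype.card ι * M with hN
  have hq : 0 < q := by omega
  obtain ⟨L, hL, hnodup, hGL, hvanish⟩ := exists_list_forall_mem_span_sup_varPowIdeal (d := d)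
    (N := N) (δ := k * T) (i₀ := i₀) (D := D) (G := g ^ q) hq (by positivity)
    (hg.imp (And.imp_left fun h ↦ by rw [h, zero_pow hq.ne'])
      (And.imp_left fun h ↦ h.pow_card_pow s))
  have hx (i : σ) := pow_sub_X_pow_mem_span_pow g (u i) i k s (Fintype.card ι + C 0 + 1)
  set α := Finsupp.equivFunOnFinite.symm (fun _ ↦ q - 1) + q • Finsupp.single i₀ N with hα
  have hαdeg : α.degree = Fintype.card σ * (q - 1) + q * N := by
    rw [hα, map_add, Finsupp.smul_single, Finsupp.degree_single, Finsupp.degree_eq_sum]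
    simp
  have hαle : M * (Fintype.card ι * q + C 0 + c) ≤ α i₀ := by
    have : M * (Fintype.card ι * q + C 0 + c) = q * N + M * (C 0 + c) := by rw [hN]; ring
    simp only [hα, Finsupp.coe_add, Pi.add_apply, Finsupp.smul_apply, Finsupp.single_eq_same,
      Finsupp.equivFunOnFinite_symm_apply_apply, smul_eq_mul]
    omega
  have hT : Fintype.card ι * q + C 0 ≤ T := by
    have := Nat.le_mul_of_pos_left (C 0) hq
    simp only [T, mul_add, mul_comm (Fintype.card ι) q]
    omega
  rw [X_pow_eq_monomial]
  refine monomial_mem_of_monomial_mem_span_pow (s := s) ?_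
  exact mem_span_range_pow_sup_of_isRegularModulo (hC q) (isHomogeneous_monomial 1 hαdeg)
    (fun i ↦ (hu i).pow T) (fun i ↦ pow_mul_monomial_mem_pow (hpow i _) hT hαle) hL
    (isRegularModulo_map hx hnodup hGL) (by rwa [span_singleton_sup_ofList_map_eq hx])

end FiniteField

/-! ### Specialization to finite fields -/

universe u

section Specialization

variable {σ : Type*}

/-- The linear functional with value `l β` on the monomial of exponent `β`. -/
noncomputable def monomialFunctional {R : Type*} [CommRing R] (l : (σ →₀ ℕ) → R) :
    MvPolynomial σ R →ₗ[R] R :=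
  (basisMonomials σ R).constr R l

lemma monomialFunctional_monomial {R : Type*} [CommRing R] (l : (σ →₀ ℕ) → R) (β : σ →₀ ℕ)
    (a : R) : monomialFunctional l (monomial β a) = a * l β := by
  have : monomial β a = a • basisMonomials σ R β := by simp [smul_monomial]
  rw [this, map_smul, monomialFunctional, Module.Basis.constr_basis, smul_eq_mul]

lemma monomialFunctional_map {R R' : Type*} [CommRing R] [CommRing R'] (φ : R →+* R')
    (l : (σ →₀ ℕ) → R) (p : MvPolynomial σ R) :
    monomialFunctional (fun β ↦ φ (l β)) (map φ p) = φ (monomialFunctional l p) := by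
  induction p using MvPolynomial.induction_on' with
  | monomial β a => simp only [map_monomial, monomialFunctional_monomial, map_mul]
  | add p q hp hq => simp only [map_add, hp, hq]

lemma monomialFunctional_eq_zero_of_mem_span {R : Type*} [CommRing R] {l : (σ →₀ ℕ) → R}
    {s : Set (MvPolynomial σ R)}
    (h : ∀ x ∈ s, ∀ β, monomialFunctional l (monomial β 1 * x) = 0) {y : MvPolynomial σ R}
    (hy : y ∈ Ideal.span s) : monomialFunctional l y = 0 := by
  refine Submodule.span_induction (p := fun y _ ↦ ∀ p, monomialFunctional l (p * y) = 0)
    (fun x hx p ↦ ?_) (by simp) (fun x y _ _ hx hy p ↦ by rw [mul_add, map_add, hx, hy, add_zero])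
    (fun a x _ hx p ↦ by rw [smul_eq_mul, ← mul_assoc, hx]) hy 1 |> (one_mul y ▸ ·)
  induction p using MvPolynomial.induction_on' with
  | monomial β a =>
    rw [← mul_one a, ← smul_eq_mul a 1, ← smul_monomial, smul_mul_assoc, map_smul, h x hx,
      smul_zero]
  | add p q hp hq => rw [add_mul, map_add, hp, hq, add_zero]

lemma exists_monomialFunctional_of_monomial_notMem [Finite σ] {ι K : Type*} [Field K]
    {f : ι → MvPolynomial σ K} {d : ι → ℕ} (hf : ∀ j, (f j).IsHomogeneous (d j)) {α : σ →₀ ℕ}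
    (hα : monomial α 1 ∉ Ideal.span (Set.range f)) :
    ∃ l : (σ →₀ ℕ) → K, (Set.range l).Finite ∧ l α = 1 ∧
      ∀ y ∈ Ideal.span (Set.range f), monomialFunctional l y = 0 := by
  obtain ⟨φ, hφα, hφ⟩ := Submodule.exists_le_ker_of_notMem
    (p := (Ideal.span (Set.range f)).restrictScalars K) hα
  set ψ := (φ (monomial α 1))⁻¹ • φ ∘ₗ intHomogeneousComponent α.degree with hψ
  have hψl : monomialFunctional (fun β ↦ ψ (monomial β 1)) = ψ :=
    (basisMonomials σ K).ext fun β ↦ by simp [monomialFunctional_monomial]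
  refine ⟨fun β ↦ ψ (monomial β 1), ?_, ?_, fun y hy ↦ ?_⟩
  · refine (((Finsupp.finite_of_degree_eq (σ := σ) α.degree).image
      fun β ↦ ψ (monomial β 1)).insert 0).subset ?_
    rintro _ ⟨β, rfl⟩
    by_cases hβ : β.degree = α.degree
    · exact .inr ⟨β, hβ, rfl⟩
    · left
      classical
      have : intHomogeneousComponent α.degree (monomial β (1 : K)) = 0 := by
        ext γ
        simp only [intHomogeneousComponent, coeff_filterMonomials, coeff_monomial]
        grind [coeff_zero]
      simp [hψ, this]
  · have := intHomogeneousComponent_of_mem (isHomogeneous_mem_intHomogeneousSubmodule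
      (isHomogeneous_monomial (R := K) 1 (rfl : α.degree = α.degree)))
    simp [hψ, this, hφα]
  · have hmem := intHomogeneousComponent_mem_span_pow (E := 1) hf (by rwa [pow_one]) α.degree
    rw [pow_one] at hmem
    rw [hψl]
    simp [hψ, LinearMap.mem_ker.1 (hφ hmem)]

lemma isJacobsonRing_int : IsJacobsonRing ℤ := by
  refine isJacobsonRing_iff_prime_eq.2 fun P hP ↦ ?_
  rcases eq_or_ne P ⊥ with rfl | hP0
  · refine eq_bot_iff.2 fun x hx ↦ ?_
    have hunit := Int.isUnit_iff.1 (Ideal.mem_jacobson_bot.1 hx x)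
    have : x = 0 := by rcases hunit with h | h <;> nlinarith
    simpa using this
  · exact Ideal.jacobson_eq_self_of_isMaximal (H := hP.isMaximal hP0)

lemma finite_of_surjective_of_finiteType_int {Λ K : Type*} [CommRing Λ] [Algebra.FiniteType ℤ Λ]
    [Field K] {π : Λ →+* K} (hπ : Function.Surjective π) : Finite K := by
  have := isJacobsonRing_int
  have : Algebra.FiniteType ℤ K := .of_surjective π.toIntAlgHom hπ
  have : Module.Finite ℤ K := finite_of_finite_type_of_isJacobsonRing ℤ K
  obtain ⟨p, _⟩ := CharP.exists K
  have hp : p ≠ 0 := by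
    rintro rfl
    have : CharZero K := CharP.charP_to_charZero K
    exact Int.not_isField (isField_of_isIntegral_of_isField (R := ℤ) (S := K)
      (algebraMap ℤ K).injective_int (Field.toIsField K))
  have hp' : (p : ℤ) ∈ nonZeroDivisors ℤ := mem_nonZeroDivisors_of_ne_zero (by exact_mod_cast hp)
  exact Module.finite_of_fg_torsion K fun {x} ↦ ⟨⟨p, hp'⟩, by simp [Submonoid.smul_def]⟩

lemma exists_finiteType_subalgebra {K : Type*} [CommRing K] {S : Set (MvPolynomial σ K)}
    (hS : S.Finite) {T : Set K} (hT : T.Finite) :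
    ∃ Λ : Subalgebra ℤ K, Algebra.FiniteType ℤ Λ ∧ T ⊆ Λ ∧
      S ⊆ Set.range (map (algebraMap Λ K)) := by
  set E : Set K := T ∪ ⋃ p ∈ S, (p.coeffs : Set K)
  have hE : E.Finite := hT.union (hS.biUnion fun p _ ↦ Finset.finite_toSet _)
  refine ⟨Algebra.adjoin ℤ E, (Subalgebra.fg_iff_finiteType _).1 ⟨hE.toFinset, by simp⟩,
    Set.subset_union_left.trans Algebra.subset_adjoin, fun p hp ↦ ?_⟩
  refine mem_range_map_iff_coeffs_subset.2 fun x hx ↦ ⟨⟨x, ?_⟩, rfl⟩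
  exact Algebra.subset_adjoin (.inr (Set.mem_biUnion hp hx))

theorem exists_finite_field_specialization [Finite σ] {ι : Type*} {K : Type u} [Field K]
    {S : Set (MvPolynomial σ K)} (hS : S.Finite) {f : ι → MvPolynomial σ K} {d : ι → ℕ}
    (hf : ∀ j, (f j).IsHomogeneous (d j)) {α : σ →₀ ℕ}
    (hα : monomial α 1 ∉ Ideal.span (Set.range f)) :
    ∃ (Λ : Subalgebra ℤ K) (F : Type u) (_ : Field F) (_ : Finite F) (π : Λ →+* F),
      S ⊆ Set.range (map (algebraMap Λ K)) ∧
      ∀ f' : ι → MvPolynomial σ Λ, (∀ j, map (algebraMap Λ K) (f' j) = f j) →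
        monomial α 1 ∉ Ideal.span (Set.range fun j ↦ map π (f' j)) := by
  obtain ⟨l, hlfin, hlα, hl⟩ := exists_monomialFunctional_of_monomial_notMem hf hα
  obtain ⟨Λ, hΛ, hlΛ, hSΛ⟩ := exists_finiteType_subalgebra hS hlfin
  obtain ⟨𝔪, h𝔪⟩ := Ideal.exists_maximal Λ
  let _ : Field (Λ ⧸ 𝔪) := Ideal.Quotient.field 𝔪
  refine ⟨Λ, Λ ⧸ 𝔪, inferInstance,
    finite_of_surjective_of_finiteType_int (π := Ideal.Quotient.mk 𝔪) Ideal.Quotient.mk_surjective,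
    Ideal.Quotient.mk 𝔪, hSΛ, fun f' hf' hmem ↦ ?_⟩
  set l' : (σ →₀ ℕ) → Λ := fun β ↦ ⟨l β, hlΛ ⟨β, rfl⟩⟩
  have hl' (p : MvPolynomial σ Λ) :
      (monomialFunctional l' p : K) = monomialFunctional l (map (algebraMap Λ K) p) :=
    (monomialFunctional_map (algebraMap Λ K) l' p).symm
  have hkill := monomialFunctional_eq_zero_of_mem_span
    (l := fun β ↦ Ideal.Quotient.mk 𝔪 (l' β)) ?_ hmem
  · rw [monomialFunctional_monomial, one_mul] at hkill
    have : l' α = 1 := Subtype.ext hlα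
    exact one_ne_zero (by rwa [this, map_one] at hkill)
  · rintro _ ⟨j, rfl⟩ β
    have hzero : monomialFunctional l' (monomial β 1 * f' j) = 0 := by
      refine Subtype.ext ((hl' _).trans (hl _ ?_))
      rw [map_mul, hf']
      exact Ideal.mul_mem_left _ _ (Ideal.subset_span ⟨j, rfl⟩)
    rw [← map_one (Ideal.Quotient.mk 𝔪), ← map_monomial, ← map_mul, monomialFunctional_map, hzero,
      map_zero]

end Specialization

section AnyField

lemma pow_mul_mem_pow_of_forall_mul_mem {S : Type*} [CommSemiring S] {I J : Ideal S} {x : S}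
    (h : ∀ y ∈ J, x * y ∈ I * J) (N : ℕ) {y : S} (hy : y ∈ J) : x ^ N * y ∈ I ^ N := by
  suffices x ^ N * y ∈ I ^ N * J from Ideal.mul_le_left this
  induction N generalizing y with
  | zero => simpa using hy
  | succ N ih =>
    rw [pow_succ x, mul_assoc, pow_succ' I, mul_assoc]
    refine Submodule.mul_induction_on (h y hy) (fun a ha b hb ↦ ?_) fun a b ha hb ↦ ?_
    · rw [mul_left_comm (x ^ N)]
      exact Ideal.mul_mem_mul ha (ih hb)
    · rw [mul_add]
      exact add_mem ha hb

lemma span_range_mul_span_range {ι κ S : Type*} [CommSemiring S] (f : ι → S) (v : κ → S) :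
    Ideal.span (Set.range f) * Ideal.span (Set.range v) =
      Ideal.span (Set.range fun x : ι × κ ↦ f x.1 * v x.2) := by
  rw [Ideal.span_mul_span', ← Set.image2_mul, Set.image2_range]

lemma exists_finset_relations {ι κ S : Type*} [Fintype ι] [CommRing S] [IsNoetherianRing S]
    {f : ι → S} {J : Ideal S} {p : κ → S} {x : S} (hx : x ∈ J)
    (hp : ∀ i, ∀ y ∈ J, p i * y ∈ Ideal.span (Set.range f) * J) :
    ∃ t : Finset S, x ∈ t ∧ ∃ b : κ → t → ι × t → S,
      ∀ i a, p i * a = ∑ j, b i a j * (f j.1 * j.2) := by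
  classical
  obtain ⟨s, hs⟩ := IsNoetherian.noetherian J
  set t : Finset S := insert x s
  have ht : Ideal.span (Set.range ((↑) : t → S)) = J := by
    rw [Subtype.range_coe, Finset.coe_insert, Ideal.span_insert,
      show Ideal.span (s : Set S) = J from hs, sup_eq_right]
    exact (Ideal.span_singleton_le_iff_mem _).2 hx
  refine ⟨t, Finset.mem_insert_self x s, ?_⟩
  have hrel (i : κ) (a : t) : ∃ b : ι × t → S, ∑ j, b j * (f j.1 * j.2) = p i * a := by
    rw [← Ideal.mem_span_range_iff_exists_fun, ← span_range_mul_span_range, ht]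
    exact hp i a (ht.le (Ideal.subset_span ⟨a, rfl⟩))
  choose b hb using hrel
  exact ⟨b, fun i a ↦ (hb i a).symm⟩

lemma IsMonicForm.map {R S σ : Type*} [CommRing R] [CommRing S] {i₀ : σ} {D : ℕ}
    {G : MvPolynomial σ R} (hG : IsMonicForm i₀ D G) (φ : R →+* S) :
    IsMonicForm i₀ D (MvPolynomial.map φ G) where
  isHomogeneous := hG.isHomogeneous.map φ
  coeff_single := by rw [coeff_map, hG.coeff_single, map_one]

lemma IsMonicForm.of_map {R S σ : Type*} [CommRing R] [CommRing S] {i₀ : σ} {D : ℕ}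
    {G : MvPolynomial σ R} {φ : R →+* S} (hφ : Function.Injective φ)
    (hG : IsMonicForm i₀ D (MvPolynomial.map φ G)) : IsMonicForm i₀ D G where
  isHomogeneous := hG.isHomogeneous.of_map hφ
  coeff_single := hφ (by rw [← coeff_map, hG.coeff_single, map_one])

lemma mul_mem_mul_span_range {ι κ S : Type*} [Fintype ι] [Fintype κ] [CommSemiring S]
    {f : ι → S} {v : κ → S} {p : S} {b : κ → ι × κ → S}
    (h : ∀ a, p * v a = ∑ j, b a j * (f j.1 * v j.2)) {y : S}
    (hy : y ∈ Ideal.span (Set.range v)) :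
    p * y ∈ Ideal.span (Set.range f) * Ideal.span (Set.range v) := by
  induction hy using Submodule.span_induction with
  | mem x hx =>
    obtain ⟨a, rfl⟩ := hx
    rw [h]
    exact sum_mem fun j _ ↦ Ideal.mul_mem_left _ _
      (Ideal.mul_mem_mul (Ideal.subset_span ⟨_, rfl⟩) (Ideal.subset_span ⟨_, rfl⟩))
  | zero => simp
  | add x y _ _ hx hy => rw [mul_add]; exact add_mem hx hy
  | smul c x _ hx => rw [smul_eq_mul, mul_left_comm]; exact Ideal.mul_mem_left _ _ hx

lemma span_range_sup_span_singleton {ι S : Type*} [CommSemiring S] (f : ι → S) (g : S) :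
    Ideal.span (Set.range f) ⊔ Ideal.span {g} =
      Ideal.span (Set.range fun o : Option ι ↦ o.elim g f) := by
  rw [Option.range_elim, ← Ideal.span_union, Set.union_comm, Set.singleton_union]

section IsAdmissible

variable {ι σ R S : Type*} [Fintype ι] [Fintype σ] [CommRing R] [CommRing S] {d : ι → ℕ} {i₀ : σ}
  {D N : ℕ} {g : MvPolynomial σ R}

lemma IsAdmissible.isHomogeneous (h : IsAdmissible d i₀ D N g) : g.IsHomogeneous D := by
  rcases h with ⟨rfl, -⟩ | ⟨hg, -⟩
  exacts [isHomogeneous_zero _ _ _, hg.isHomogeneous]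

lemma IsAdmissible.map (h : IsAdmissible d i₀ D N g) (φ : R →+* S) :
    IsAdmissible d i₀ D N (MvPolynomial.map φ g) :=
  h.imp (And.imp_left fun h ↦ by rw [h, map_zero]) (And.imp_left fun h ↦ h.map φ)

lemma IsAdmissible.of_map {φ : R →+* S} (hφ : Function.Injective φ)
    (h : IsAdmissible d i₀ D N (MvPolynomial.map φ g)) : IsAdmissible d i₀ D N g :=
  h.imp (And.imp_left fun h ↦ map_injective φ hφ (h.trans (map_zero _).symm))
    (And.imp_left fun h ↦ h.of_map hφ)

end IsAdmissible

/-- The forms `f j` of degree `d j` and `g` are admissible, and multiplication by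
`(X i ^ k + g * u i) * X i₀ ^ M` maps the ideal generated by `v`, which contains a power of
`X i₀ ^ M`, into its product with the ideal generated by `f`, with coefficients `b`. Spelling the
containment out by equations makes it stable under maps of the coefficient ring. -/
structure IsRelationSystem {ι σ κ R : Type*} [Fintype ι] [Fintype σ] [Fintype κ] [CommRing R]
    (d : ι → ℕ) (i₀ : σ) (k D M c : ℕ) (f : ι → MvPolynomial σ R) (g : MvPolynomial σ R)
    (u : σ → MvPolynomial σ R) (v : κ → MvPolynomial σ R)
    (b : σ × κ × ι × κ → MvPolynomial σ R) : Prop where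
  isAdmissible : IsAdmissible d i₀ D (Fintype.card ι * M) g
  isHomogeneous (j : ι) : (f j).IsHomogeneous (d j)
  isHomogeneous_add (i : σ) : (X i ^ k + g * u i).IsHomogeneous k
  X_pow_mem_range : X i₀ ^ (M * c) ∈ Set.range v
  mul_eq (i : σ) (a : κ) :
    (X i ^ k + g * u i) * X i₀ ^ M * v a = ∑ j, b (i, a, j) * (f j.1 * v j.2)

section IsRelationSystem

variable {ι σ κ R S : Type*} [Fintype ι] [Fintype σ] [Fintype κ] [CommRing R] [CommRing S]
  {d : ι → ℕ} {i₀ : σ} {k D M c : ℕ} {f : ι → MvPolynomial σ R} {g : MvPolynomial σ R}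
  {u : σ → MvPolynomial σ R} {v : κ → MvPolynomial σ R} {b : σ × κ × ι × κ → MvPolynomial σ R}

lemma IsRelationSystem.map (h : IsRelationSystem d i₀ k D M c f g u v b) (φ : R →+* S) :
    IsRelationSystem d i₀ k D M c (MvPolynomial.map φ ∘ f) (MvPolynomial.map φ g)
      (MvPolynomial.map φ ∘ u) (MvPolynomial.map φ ∘ v) (MvPolynomial.map φ ∘ b) where
  isAdmissible := h.isAdmissible.map φ
  isHomogeneous j := (h.isHomogeneous j).map φ
  isHomogeneous_add i := by simpa using (h.isHomogeneous_add i).map φ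
  X_pow_mem_range := by
    obtain ⟨a, ha⟩ := h.X_pow_mem_range
    exact ⟨a, by simp [ha]⟩
  mul_eq i a := by simpa using congrArg (MvPolynomial.map φ) (h.mul_eq i a)

lemma IsRelationSystem.of_map {φ : R →+* S} (hφ : Function.Injective φ)
    (h : IsRelationSystem d i₀ k D M c (MvPolynomial.map φ ∘ f) (MvPolynomial.map φ g)
      (MvPolynomial.map φ ∘ u) (MvPolynomial.map φ ∘ v) (MvPolynomial.map φ ∘ b)) :
    IsRelationSystem d i₀ k D M c f g u v b where
  isAdmissible := h.isAdmissible.of_map hφ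
  isHomogeneous j := (h.isHomogeneous j).of_map hφ
  isHomogeneous_add i := .of_map hφ (by simpa using h.isHomogeneous_add i)
  X_pow_mem_range := by
    obtain ⟨a, ha⟩ := h.X_pow_mem_range
    exact ⟨a, map_injective φ hφ (by simpa using ha)⟩
  mul_eq i a := map_injective φ hφ (by simpa using h.mul_eq i a)

lemma IsRelationSystem.X_pow_mem_of_finite [LinearOrder ι] {K : Type*} [Field K] [Finite K]
    {f : ι → MvPolynomial σ K} {g : MvPolynomial σ K} {u : σ → MvPolynomial σ K}
    {v : κ → MvPolynomial σ K} {b : σ × κ × ι × κ → MvPolynomial σ K} (hk : 0 < k)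
    (h : IsRelationSystem d i₀ k D M c f g u v b) :
    X i₀ ^ (Fintype.card ι * M) ∈ Ideal.span (Set.range f) ⊔ Ideal.span {g} := by
  refine X_pow_mem_span_range_sup_span_of_finite_field (c := c) h.isHomogeneous hk
    h.isHomogeneous_add (fun i N ↦ ?_) h.isAdmissible
  rw [mul_add, pow_add, pow_mul, ← mul_assoc, ← mul_pow]
  exact pow_mul_mem_pow_of_forall_mul_mem
    (fun y hy ↦ mul_mem_mul_span_range (b := fun a j ↦ b (i, a, j)) (h.mul_eq i) hy) N
    (Ideal.subset_span h.X_pow_mem_range)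

theorem IsRelationSystem.X_pow_mem [LinearOrder ι] {K : Type u} [Field K]
    {f : ι → MvPolynomial σ K} {g : MvPolynomial σ K} {u : σ → MvPolynomial σ K}
    {v : κ → MvPolynomial σ K} {b : σ × κ × ι × κ → MvPolynomial σ K} (hk : 0 < k)
    (h : IsRelationSystem d i₀ k D M c f g u v b) :
    X i₀ ^ (Fintype.card ι * M) ∈ Ideal.span (Set.range f) ⊔ Ideal.span {g} := by
  by_contra hmem
  rw [span_range_sup_span_singleton, X_pow_eq_monomial] at hmem
  have hfin : (Set.range f ∪ {g} ∪ Set.range u ∪ Set.range v ∪ Set.range b).Finite := by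
    simp only [Set.finite_union, Set.finite_range, Set.finite_singleton, and_self]
  obtain ⟨Λ, F, _, _, π, hlift, hΛ⟩ := exists_finite_field_specialization hfin
    (d := fun o ↦ o.elim D d) (Option.forall.2 ⟨h.isAdmissible.isHomogeneous, h.isHomogeneous⟩)
    hmem
  simp only [Set.union_subset_iff, Set.singleton_subset_iff,
    Set.range_subset_range_iff_exists_comp] at hlift
  obtain ⟨⟨⟨⟨⟨f', rfl⟩, g', rfl⟩, u', rfl⟩, v', rfl⟩, b', rfl⟩ := hlift
  have hmemF := ((h.of_map Subtype.val_injective).map π).X_pow_mem_of_finite hk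
  rw [span_range_sup_span_singleton, X_pow_eq_monomial] at hmemF
  refine hΛ (fun o ↦ o.elim g' f') (Option.forall.2 ⟨rfl, fun _ ↦ rfl⟩)
    (Ideal.span_mono (Set.range_subset_iff.2 ?_) hmemF)
  rintro (_ | j)
  exacts [⟨none, rfl⟩, ⟨some j, rfl⟩]

end IsRelationSystem

theorem X_pow_mem_span_range_sup_span {ι σ : Type*} [Fintype ι] [LinearOrder ι] [Fintype σ]
    {K : Type u} [Field K] {f : ι → MvPolynomial σ K} {d : ι → ℕ} {g : MvPolynomial σ K}
    {u : σ → MvPolynomial σ K} {i₀ : σ} {k M c D : ℕ} {J : Ideal (MvPolynomial σ K)}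
    (hf : ∀ j, (f j).IsHomogeneous (d j)) (hk : 0 < k)
    (hu : ∀ i, (X i ^ k + g * u i).IsHomogeneous k) (hXJ : X i₀ ^ (M * c) ∈ J)
    (hJ : ∀ i, ∀ y ∈ J, (X i ^ k + g * u i) * X i₀ ^ M * y ∈ Ideal.span (Set.range f) * J)
    (hg : IsAdmissible d i₀ D (Fintype.card ι * M) g) :
    X i₀ ^ (Fintype.card ι * M) ∈ Ideal.span (Set.range f) ⊔ Ideal.span {g} := by
  obtain ⟨t, hXt, b, hb⟩ := exists_finset_relations hXJ hJ
  exact IsRelationSystem.X_pow_mem (b := fun x ↦ b x.1 x.2.1 x.2.2) hk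
    ⟨hg, hf, hu, ⟨⟨_, hXt⟩, rfl⟩, hb⟩

end AnyField

/-! ### Homogeneous ideals on affine charts -/

lemma aeval_mul_of_isHomogeneous {σ R S : Type*} [CommSemiring R] [CommSemiring S] [Algebra R S]
    {p : MvPolynomial σ R} {D : ℕ} (hp : p.IsHomogeneous D) (c : S) (Z : σ → S) :
    aeval (fun i ↦ c * Z i) p = c ^ D * aeval Z p := by
  rw [aeval_def, aeval_def, eval₂_eq, eval₂_eq, Finset.mul_sum]
  refine Finset.sum_congr rfl fun α hα ↦ ?_
  have hdeg : ∑ i ∈ α.support, α i = D := by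
    rw [← Finsupp.degree_apply, degree_eq_of_mem_support hp hα]
  simp only [mul_pow, Finset.prod_mul_distrib, Finset.prod_pow_eq_pow_sum, hdeg, mul_left_comm]

section Dehomogenize

variable {R : Type*} [CommRing R] {n : ℕ}

/-- Dehomogenization: the variable `X i` is set to `1` and the others are renumbered. -/
noncomputable def dehomogenize (i : Fin (n + 1)) :
    MvPolynomial (Fin (n + 1)) R →ₐ[R] MvPolynomial (Fin n) R :=
  aeval (Fin.insertNth i 1 X)

@[simp]
lemma dehomogenize_X_self (i : Fin (n + 1)) : dehomogenize i (X i : MvPolynomial _ R) = 1 := by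
  simp [dehomogenize]

lemma aeval_dehomogenize {S : Type*} [CommRing S] [Algebra R S] (i : Fin (n + 1)) (z : Fin n → S)
    (p : MvPolynomial (Fin (n + 1)) R) :
    aeval z (dehomogenize i p) = aeval (Fin.insertNth i 1 z : Fin (n + 1) → S) p := by
  refine DFunLike.congr_fun (?_ : (aeval z).comp (dehomogenize i) = aeval _) p
  ext j
  refine Fin.succAboveCases i ?_ (fun j ↦ ?_) j <;> simp [dehomogenize]

lemma dehomogenize_surjective (i : Fin (n + 1)) :
    Function.Surjective (dehomogenize i : MvPolynomial _ R →ₐ[R] _) := fun p ↦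
  ⟨rename i.succAbove p, by
    have : (Fin.insertNth i 1 X : Fin (n + 1) → MvPolynomial (Fin n) R) ∘ i.succAbove = X := by
      ext j; simp
    rw [dehomogenize, aeval_rename, this, aeval_X_left_apply]⟩

lemma eq_zero_of_dehomogenize_eq_zero [IsDomain R] {i : Fin (n + 1)}
    {p : MvPolynomial (Fin (n + 1)) R} {D : ℕ} (hp : p.IsHomogeneous D)
    (h : dehomogenize i p = 0) : p = 0 := by
  let L := FractionRing (MvPolynomial (Fin (n + 1)) R)
  let x : Fin (n + 1) → L := algebraMap (MvPolynomial (Fin (n + 1)) R) L ∘ X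
  have hx : x i ≠ 0 := by simp [x]
  have hquot : (fun j ↦ (x i)⁻¹ * x j) =
      (Fin.insertNth i 1 fun j ↦ (x i)⁻¹ * x (i.succAbove j) : Fin (n + 1) → L) := by
    ext j
    refine Fin.succAboveCases i ?_ (fun j ↦ ?_) j
    · rw [inv_mul_cancel₀ hx, Fin.insertNth_apply_same]
    · rw [Fin.insertNth_apply_succAbove]
  have h0 := aeval_mul_of_isHomogeneous hp (x i)⁻¹ x
  rw [hquot, ← aeval_dehomogenize, h, map_zero, zero_eq_mul] at h0
  have hpx : aeval x p = algebraMap _ L p := by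
    rw [aeval_algebraMap_apply, aeval_X_left_apply]
  rw [hpx] at h0
  simpa [hx] using h0

end Dehomogenize

section HomogeneousIdeals

attribute [local instance] MvPolynomial.gradedAlgebra

variable {σ R : Type*} [CommRing R]

lemma isHomogeneous_span_range {κ : Type*} {φ : κ → MvPolynomial σ R} {d : κ → ℕ}
    (hφ : ∀ k, (φ k).IsHomogeneous (d k)) :
    (Ideal.span (Set.range φ)).IsHomogeneous (homogeneousSubmodule σ R) :=
  Ideal.homogeneous_span _ _ (Set.forall_mem_range.2 fun k ↦ ⟨d k, hφ k⟩)

lemma isHomogeneous_pow {I : Ideal (MvPolynomial σ R)}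
    (hI : I.IsHomogeneous (homogeneousSubmodule σ R)) :
    ∀ N : ℕ, (I ^ N).IsHomogeneous (homogeneousSubmodule σ R)
  | 0 => by simpa only [pow_zero, Ideal.one_eq_top] using Ideal.IsHomogeneous.top _
  | N + 1 => by simpa only [pow_succ] using (isHomogeneous_pow hI N).mul hI

lemma intHomogeneousComponent_natCast (e : ℕ) (p : MvPolynomial σ R) :
    intHomogeneousComponent e p = homogeneousComponent e p := by
  classical
  ext β
  simp [intHomogeneousComponent, coeff_filterMonomials, coeff_homogeneousComponent]

lemma homogeneousComponent_mul_mem {W 𝔟 : Ideal (MvPolynomial σ R)}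
    (hW : W.IsHomogeneous (homogeneousSubmodule σ R))
    (h𝔟 : 𝔟.IsHomogeneous (homogeneousSubmodule σ R)) {p : MvPolynomial σ R}
    (h : ∀ y ∈ W, p * y ∈ 𝔟) (e : ℕ) {y : MvPolynomial σ R} (hy : y ∈ W) :
    homogeneousComponent e p * y ∈ 𝔟 := by
  rw [← sum_homogeneousComponent y, Finset.mul_sum]
  refine Ideal.sum_mem _ fun j _ ↦ ?_
  have hmem := homogeneousComponent_mem_of_mem h𝔟
    (h _ (homogeneousComponent_mem_of_mem hW hy j)) (j + e)
  rwa [mul_comm p, ← intHomogeneousComponent_natCast,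
    intHomogeneousComponent_mul (homogeneousComponent_isHomogeneous j y), Nat.cast_add,
    add_sub_cancel_left, intHomogeneousComponent_natCast, mul_comm] at hmem

lemma eventually_X_pow_mul_mem [IsDomain R] {n : ℕ} {i : Fin (n + 1)}
    {𝔠 : Ideal (MvPolynomial (Fin (n + 1)) R)} (h𝔠 : 𝔠.IsHomogeneous (homogeneousSubmodule _ R))
    {y : MvPolynomial (Fin (n + 1)) R} {e : ℕ} (hy : y.IsHomogeneous e)
    (h : dehomogenize i y ∈ 𝔠.map (dehomogenize i)) :
    ∀ᶠ K in Filter.atTop, X i ^ K * y ∈ 𝔠 := by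
  obtain ⟨x, hx, hxy⟩ := (Ideal.mem_map_iff_of_surjective _ (dehomogenize_surjective i)).1 h
  filter_upwards [Filter.eventually_ge_atTop x.totalDegree] with K hK
  let x' := ∑ j ∈ Finset.range (x.totalDegree + 1), X i ^ (K + e - j) * homogeneousComponent j x
  have hx' : x' ∈ 𝔠 :=
    Ideal.sum_mem _ fun j _ ↦ Ideal.mul_mem_left _ _ (homogeneousComponent_mem_of_mem h𝔠 hx j)
  have hx'hom : x'.IsHomogeneous (K + e) := by
    refine IsHomogeneous.sum _ _ _ fun j hj ↦ ?_
    have hj : j ≤ K + e := by grind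
    simpa [hj] using
      ((isHomogeneous_X R i).pow (K + e - j)).mul (homogeneousComponent_isHomogeneous j x)
  have hyhom : (X i ^ K * y).IsHomogeneous (K + e) := by
    simpa using ((isHomogeneous_X R i).pow K).mul hy
  have heq : X i ^ K * y - x' = 0 := by
    refine eq_zero_of_dehomogenize_eq_zero (hyhom.sub hx'hom) (i := i) ?_
    simp only [x', map_sub, map_sum, map_mul, map_pow, dehomogenize_X_self, one_pow, one_mul]
    rw [← map_sum, sum_homogeneousComponent, hxy, sub_self]
  rwa [sub_eq_zero.1 heq]

lemma exists_isHomogeneous_X_pow_add_mul {W 𝔟 : Ideal (MvPolynomial σ R)}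
    (hW : W.IsHomogeneous (homogeneousSubmodule σ R))
    (h𝔟 : 𝔟.IsHomogeneous (homogeneousSubmodule σ R)) {g u : MvPolynomial σ R} {D : ℕ}
    (hg : g.IsHomogeneous D) {i : σ} {k : ℕ} (h : ∀ y ∈ W, (X i ^ k + g * u) * y ∈ 𝔟) :
    ∃ v, (X i ^ k + g * v).IsHomogeneous k ∧ ∀ y ∈ W, (X i ^ k + g * v) * y ∈ 𝔟 := by
  have hcomp : homogeneousComponent k (X i ^ k + g * u) =
      X i ^ k + g * intHomogeneousComponent (k - D) u := by
    rw [map_add, ← intHomogeneousComponent_natCast k (g * u), intHomogeneousComponent_mul hg,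
      homogeneousComponent_of_mem (isHomogeneous_X_pow i k), if_pos rfl]
  refine ⟨intHomogeneousComponent (k - D) u, ?_, fun y hy ↦ ?_⟩ <;> rw [← hcomp]
  · exact homogeneousComponent_isHomogeneous k _
  · exact homogeneousComponent_mul_mem hW h𝔟 h k hy

end HomogeneousIdeals

lemma span_range_pow_le_span_range_pow_mul {S κ : Type*} [CommRing S] [Fintype κ] (φ : κ → S)
    (N : ℕ) :
    Ideal.span (Set.range φ) ^ (Fintype.card κ * N + N + 1) ≤
      Ideal.span (Set.range fun j ↦ φ j ^ (N + 1)) *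
        Ideal.span (Set.range φ) ^ (Fintype.card κ * N) := by
  intro y hy
  obtain ⟨p, hp, rfl⟩ := (Ideal.mem_span_pow_iff_exists_isHomogeneous φ y).1 hy
  rw [p.as_sum, map_sum]
  refine Ideal.sum_mem _ fun α hα ↦ ?_
  have hdeg := degree_eq_of_mem_support hp hα
  obtain ⟨j, hj⟩ : ∃ j, N < α j := by
    by_contra! hle
    have := Finset.sum_le_card_nsmul Finset.univ α N fun j _ ↦ hle j
    rw [← Finsupp.degree_eq_sum, hdeg, smul_eq_mul, Finset.card_univ] at this
    lia
  obtain ⟨β, rfl⟩ := exists_add_of_le (Finsupp.single_le_iff.2 hj : Finsupp.single j (N + 1) ≤ α)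
  have hβ : β.degree = Fintype.card κ * N := by
    rw [map_add, Finsupp.degree_single] at hdeg
    lia
  rw [← one_mul (coeff _ p), ← monomial_mul, map_mul, ← X_pow_eq_monomial, map_pow, eval_X]
  exact Ideal.mul_mem_mul (Ideal.subset_span ⟨j, rfl⟩)
    ((Ideal.mem_span_pow_iff_exists_isHomogeneous φ _).2 ⟨_, isHomogeneous_monomial _ hβ, rfl⟩)

lemma span_singleton_mul_pow_le {S κ : Type*} [CommRing S] [Fintype κ] (φ : κ → S)
    (I : Ideal S) {x g : S} {N : ℕ}
    (h : ∀ j, x * φ j ^ (N + 1) ∈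
      Ideal.span {g} * Ideal.span (Set.range φ) ^ (N + 1) ⊔ I * Ideal.span (Set.range φ) ^ N) :
    Ideal.span {x} * Ideal.span (Set.range φ) ^ (Fintype.card κ * N + N + 1) ≤
      Ideal.span {g} * Ideal.span (Set.range φ) ^ (Fintype.card κ * N + N + 1) ⊔
        I * Ideal.span (Set.range φ) ^ (Fintype.card κ * N + N) := by
  set J := Ideal.span (Set.range φ)
  calc Ideal.span {x} * J ^ (Fintype.card κ * N + N + 1)
      ≤ Ideal.span {x} * (Ideal.span (Set.range fun j ↦ φ j ^ (N + 1)) *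
          J ^ (Fintype.card κ * N)) :=
        Ideal.mul_mono_right (span_range_pow_le_span_range_pow_mul φ N)
    _ ≤ (Ideal.span {g} * J ^ (N + 1) ⊔ I * J ^ N) * J ^ (Fintype.card κ * N) := by
        rw [← mul_assoc]
        refine Ideal.mul_mono_left (Ideal.span_singleton_mul_le_iff.2 fun y hy ↦ ?_)
        obtain ⟨c, rfl⟩ := Finsupp.mem_ideal_span_range_iff_exists_finsupp.1 hy
        rw [Finsupp.sum, Finset.mul_sum]
        exact Ideal.sum_mem _ fun j _ ↦ mul_left_comm x (c j) _ ▸ Ideal.mul_mem_left _ _ (h j)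
    _ = Ideal.span {g} * J ^ (Fintype.card κ * N + N + 1) ⊔ I * J ^ (Fintype.card κ * N + N) := by
        rw [Ideal.sup_mul, mul_assoc, mul_assoc, ← pow_add, ← pow_add, add_comm (N + 1),
          add_comm N (_ * _), ← add_assoc]

lemma exists_pow_add_mul_mul_mem {S : Type*} [CommRing S] {W 𝔟 : Ideal S} (hW : W.FG) {x g : S}
    (h : Ideal.span {x} * W ≤ Ideal.span {g} * W ⊔ 𝔟) :
    ∃ s u, ∀ y ∈ W, (x ^ s + g * u) * y ∈ 𝔟 := by
  let W' : Submodule S (S ⧸ 𝔟) := Submodule.map 𝔟.mkQ W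
  have : Module.Finite S W' := Module.Finite.iff_fg.2 (Submodule.FG.map _ hW)
  have hrange : LinearMap.range (algebraMap S (Module.End S W') x) ≤ Ideal.span {g} • ⊤ := by
    rintro _ ⟨⟨_, y, hy, rfl⟩, rfl⟩
    obtain ⟨_, hgw, b, hb, hsum⟩ := Submodule.mem_sup.1
      (h (Ideal.mul_mem_mul (Ideal.mem_span_singleton_self x) hy))
    obtain ⟨w, hw, rfl⟩ := Ideal.mem_span_singleton_mul.1 hgw
    have hb0 : 𝔟.mkQ b = 0 := (Submodule.Quotient.mk_eq_zero 𝔟).2 hb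
    have : algebraMap S (Module.End S W') x ⟨𝔟.mkQ y, y, hy, rfl⟩ = g • ⟨𝔟.mkQ w, w, hw, rfl⟩ := by
      refine Subtype.ext (?_ : x • 𝔟.mkQ y = g • 𝔟.mkQ w)
      rw [← map_smul, ← map_smul, smul_eq_mul, smul_eq_mul, ← hsum, map_add, hb0, add_zero]
    rw [this]
    exact Submodule.smul_mem_smul (Ideal.mem_span_singleton_self g) trivial
  obtain ⟨P, hP, -, hcoeff, hPx⟩ :=
    LinearMap.exists_monic_and_natDegree_eq_and_coeff_mem_pow_and_aeval_eq_zero _ _ _ hrange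
  obtain ⟨u, hu⟩ : g ∣ P.eval x - x ^ P.natDegree := by
    rw [Polynomial.eval_eq_sum_range, Finset.sum_range_succ, hP.coeff_natDegree, one_mul,
      add_sub_cancel_right]
    refine Finset.dvd_sum fun k hk ↦ Dvd.dvd.mul_right (Ideal.mem_span_singleton.1 ?_) _
    exact Ideal.pow_le_self (Nat.sub_ne_zero_of_lt (Finset.mem_range.1 hk)) (hcoeff k)
  refine ⟨P.natDegree, u, fun y hy ↦ (Submodule.Quotient.mk_eq_zero 𝔟).1 ?_⟩
  rw [Polynomial.aeval_algebraMap_apply_eq_algebraMap_eval] at hPx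
  have hact := congrArg Subtype.val (LinearMap.congr_fun hPx ⟨𝔟.mkQ y, y, hy, rfl⟩)
  rwa [← hu, add_sub_cancel]

section Charts

variable {ι κ : Type*} {K : Type*} [Field K] {n : ℕ}

attribute [local instance] MvPolynomial.gradedAlgebra in
lemma exists_isHomogeneous_X_pow_add_mul_of_charts [Finite κ]
    {φ : κ → MvPolynomial (Fin (n + 1)) K} {e : κ → ℕ} (hφ : ∀ k, (φ k).IsHomogeneous (e k))
    {f : ι → MvPolynomial (Fin (n + 1)) K} {d : ι → ℕ} (hf : ∀ j, (f j).IsHomogeneous (d j))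
    {g : MvPolynomial (Fin (n + 1)) K} {D : ℕ} (hg : g.IsHomogeneous D)
    (hchart : ∀ i k, ∀ᶠ N in Filter.atTop, dehomogenize i (φ k ^ (N + 1)) ∈
      (Ideal.span {g} * Ideal.span (Set.range φ) ^ (N + 1) ⊔
        Ideal.span (Set.range f) * Ideal.span (Set.range φ) ^ N).map (dehomogenize i)) :
    ∃ c k, 0 < k ∧ ∀ i, ∃ u, (X i ^ k + g * u).IsHomogeneous k ∧
      ∀ y ∈ Ideal.span (Set.range φ) ^ (c + 1), (X i ^ k + g * u) * y ∈
        Ideal.span (Set.range f) * Ideal.span (Set.range φ) ^ c := by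
  cases nonempty_fintype κ
  have hJ := isHomogeneous_pow (isHomogeneous_span_range hφ)
  have hIJ := fun N ↦ (isHomogeneous_span_range hf).mul (hJ N)
  have hgJ := fun N ↦ (Ideal.homogeneous_span (homogeneousSubmodule _ K) {g}
    fun _ h ↦ ⟨D, h ▸ hg⟩).mul (hJ N)
  obtain ⟨N, hN⟩ := (Filter.eventually_all.2 fun i ↦ Filter.eventually_all.2 (hchart i)).exists
  set J := Ideal.span (Set.range φ)
  have hdet (i) : ∀ᶠ k in Filter.atTop, ∃ u, ∀ y ∈ J ^ (Fintype.card κ * N + N + 1),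
      (X i ^ k + g * u) * y ∈ Ideal.span (Set.range f) * J ^ (Fintype.card κ * N + N) := by
    obtain ⟨t, ht⟩ := (Filter.eventually_all.2 fun k ↦ eventually_X_pow_mul_mem
      ((hgJ _).sup (hIJ _)) ((hφ k).pow (N + 1)) (hN i k)).exists
    obtain ⟨s, u, hu⟩ := exists_pow_add_mul_mul_mem (IsNoetherian.noetherian _)
      (span_singleton_mul_pow_le φ (Ideal.span (Set.range f)) ht)
    filter_upwards [Filter.eventually_ge_atTop (t * s)] with k hk
    refine ⟨X i ^ (k - t * s) * u, fun y hy ↦ ?_⟩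
    have := Ideal.mul_mem_left _ (X i ^ (k - t * s)) (hu y hy)
    rwa [← pow_mul, ← mul_assoc, mul_add, ← pow_add, Nat.sub_add_cancel hk, mul_left_comm] at this
  obtain ⟨k, hk, hk0⟩ :=
    ((Filter.eventually_all.2 hdet).and (Filter.eventually_gt_atTop 0)).exists
  refine ⟨Fintype.card κ * N + N, k, hk0, fun i ↦ ?_⟩
  obtain ⟨u, hu⟩ := hk i
  exact exists_isHomogeneous_X_pow_add_mul (hJ _) (hIJ _) hg hu

lemma X_pow_mem_span_range_sup_span_of_charts [Fintype ι] [LinearOrder ι] [Finite κ]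
    {φ : κ → MvPolynomial (Fin (n + 1)) K} {e : κ → ℕ} (hφ : ∀ k, (φ k).IsHomogeneous (e k))
    {f : ι → MvPolynomial (Fin (n + 1)) K} {d : ι → ℕ} (hf : ∀ j, (f j).IsHomogeneous (d j))
    {g : MvPolynomial (Fin (n + 1)) K} {D : ℕ}
    (hchart : ∀ i k, ∀ᶠ N in Filter.atTop, dehomogenize i (φ k ^ (N + 1)) ∈
      (Ideal.span {g} * Ideal.span (Set.range φ) ^ (N + 1) ⊔
        Ideal.span (Set.range f) * Ideal.span (Set.range φ) ^ N).map (dehomogenize i))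
    {i₀ : Fin (n + 1)} {M : ℕ} (hX : X i₀ ^ M ∈ Ideal.span (Set.range φ))
    (hg : IsAdmissible d i₀ D (Fintype.card ι * M) g) :
    X i₀ ^ (Fintype.card ι * M) ∈ Ideal.span (Set.range f) ⊔ Ideal.span {g} := by
  obtain ⟨c, k, hk, h⟩ := exists_isHomogeneous_X_pow_add_mul_of_charts hφ hf hg.isHomogeneous
    hchart
  choose u hu hmem using h
  refine X_pow_mem_span_range_sup_span (J := Ideal.span (Set.range φ) ^ c) (c := c) hf hk hu ?_ ?_
    hg
  · rw [pow_mul]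
    exact Ideal.pow_mem_pow hX c
  · intro i y hy
    rw [mul_assoc]
    exact hmem i _ (pow_succ' (Ideal.span (Set.range φ)) c ▸ Ideal.mul_mem_mul hX hy)

end Charts

/-! ### Charts of blow-ups -/

section KrullDim

lemma ringKrullDim_le_of_isIntegral (R S : Type*) [CommRing R] [CommRing S] [Algebra R S]
    [Algebra.IsIntegral R S] : ringKrullDim S ≤ ringKrullDim R := by
  refine Order.krullDim_le_of_strictMono (PrimeSpectrum.comap (algebraMap R S)) fun P Q hPQ ↦ ?_
  have hlt : P.asIdeal < Q.asIdeal := hPQ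
  obtain ⟨x, hxQ, hxP⟩ := Set.exists_of_ssubset (SetLike.coe_ssubset_coe.2 hlt)
  exact Ideal.comap_lt_comap_of_integral_mem_sdiff hlt.le ⟨hxQ, hxP⟩
    (Algebra.IsIntegral.isIntegral x)

lemma ringKrullDim_le_of_trdeg_le (k : Type*) {B : Type*} [Field k] [CommRing B] [Nontrivial B]
    [Algebra k B] [Algebra.FiniteType k B] {n : ℕ} (h : Algebra.trdeg k B ≤ n) :
    ringKrullDim B ≤ n := by
  obtain ⟨s, f, hf, hfi⟩ := exists_integral_inj_algHom_of_fg k B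
  have hs : s ≤ n := by
    have := (lift_trdeg_le_of_injective f hf).trans (Cardinal.lift_le.2 h)
    simpa using this
  algebraize [f.toRingHom]
  have := Algebra.IsIntegral.mk hfi
  calc ringKrullDim B ≤ ringKrullDim (MvPolynomial (Fin s) k) := ringKrullDim_le_of_isIntegral _ _
    _ ≤ n := by
      simpa [MvPolynomial.ringKrullDim_of_isNoetherianRing] using hs

end KrullDim

section BlowupChart

variable {A K κ : Type*} [CommRing A] [Field K] [Algebra A K]

variable (K) in
/-- The coordinate ring, inside the field `K`, of the affine chart `a j ≠ 0` of the blow-up of the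
ideal generated by the family `a`. If `a j = 0` it is just the image of `A`. -/
noncomputable def blowupChart (a : κ → A) (j : κ) : Subalgebra A K :=
  Algebra.adjoin A (Set.range fun k ↦ algebraMap A K (a k) / algebraMap A K (a j))

/-- The coordinate function `a k / a j` on the chart `blowupChart K a j`. -/
noncomputable def blowupChart.ratio (a : κ → A) (j k : κ) : blowupChart K a j :=
  ⟨algebraMap A K (a k) / algebraMap A K (a j), Algebra.subset_adjoin ⟨k, rfl⟩⟩

lemma algebraMap_blowupChart_injective [FaithfulSMul A K] (a : κ → A) (j : κ) :
    Function.Injective (algebraMap A (blowupChart K a j)) :=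
  fun _ _ h ↦ FaithfulSMul.algebraMap_injective A K (congrArg Subtype.val h)

lemma blowupChart.ratio_mul_algebraMap [FaithfulSMul A K] {a : κ → A} {j : κ} (hj : a j ≠ 0)
    (k : κ) : ratio a j k * algebraMap A (blowupChart K a j) (a j) = algebraMap A _ (a k) :=
  Subtype.ext (div_mul_cancel₀ (algebraMap A K (a k))
    ((map_ne_zero_iff _ (FaithfulSMul.algebraMap_injective A K)).2 hj))

lemma blowupChart.ratio_self [FaithfulSMul A K] {a : κ → A} {j : κ} (hj : a j ≠ 0) :
    ratio (K := K) a j j = 1 :=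
  Subtype.ext <| div_self <| (map_ne_zero_iff _ (FaithfulSMul.algebraMap_injective A K)).2 hj

instance [Finite κ] (a : κ → A) (j : κ) : Algebra.FiniteType A (blowupChart K a j) :=
  Algebra.FiniteType.adjoin_of_finite (Set.finite_range _)

lemma eventually_exists_mem_pow_mul_algebraMap_pow [FaithfulSMul A K] {a : κ → A} {j : κ}
    (hj : a j ≠ 0) (b : blowupChart K a j) :
    ∀ᶠ N in Filter.atTop, ∃ β ∈ Ideal.span (Set.range a) ^ N,
      b * algebraMap A (blowupChart K a j) (a j) ^ N = algebraMap A _ β := by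
  have hδ (N : ℕ) : a j ^ N ∈ Ideal.span (Set.range a) ^ N :=
    Ideal.pow_mem_pow (Ideal.subset_span (Set.mem_range_self j)) N
  obtain ⟨b, hb⟩ := b
  induction hb using Algebra.adjoin_induction with
  | mem x hx =>
    obtain ⟨k, rfl⟩ := hx
    filter_upwards [Filter.eventually_gt_atTop 0] with N hN
    obtain ⟨N, rfl⟩ := Nat.exists_eq_succ_of_ne_zero hN.ne'
    refine ⟨a k * a j ^ N, pow_succ' (Ideal.span (Set.range a)) N ▸
      Ideal.mul_mem_mul (Ideal.subset_span ⟨k, rfl⟩) (hδ N), ?_⟩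
    rw [pow_succ', ← mul_assoc, map_mul, map_pow]
    exact congrArg (· * _) (blowupChart.ratio_mul_algebraMap hj k)
  | algebraMap r =>
    refine Filter.Eventually.of_forall fun N ↦ ⟨r * a j ^ N, Ideal.mul_mem_left _ r (hδ N), ?_⟩
    rw [map_mul, map_pow]
    rfl
  | add x y _ _ hx hy =>
    filter_upwards [hx, hy] with N ⟨β, hβ, e⟩ ⟨β', hβ', e'⟩
    refine ⟨β + β', Ideal.add_mem _ hβ hβ', ?_⟩
    rw [map_add, ← e, ← e', ← add_mul]
    rfl
  | mul x y _ _ hx hy =>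
    obtain ⟨s, β, hβ, e⟩ := hx.exists
    filter_upwards [(Filter.tendsto_sub_atTop_nat s).eventually hy, Filter.eventually_ge_atTop s]
      with N ⟨β', hβ', e'⟩ hN
    refine ⟨β * β', ?_, ?_⟩
    · rw [← Nat.add_sub_of_le hN, pow_add]
      exact Ideal.mul_mem_mul hβ hβ'
    · rw [map_mul, ← e, ← e', mul_mul_mul_comm, ← pow_add, Nat.add_sub_of_le hN]
      rfl

lemma eventually_pow_succ_mem_of_span_eq_top [FaithfulSMul A K] {ι : Type*} [Finite ι] {a : κ → A}
    {j : κ} (hj : a j ≠ 0) {g : A} {f : ι → A} {e : ι → blowupChart K a j}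
    (he : ∀ l, e l * algebraMap A (blowupChart K a j) (a j) = algebraMap A _ (f l))
    (htop : Ideal.span (Set.range e) ⊔ Ideal.span {algebraMap A (blowupChart K a j) g} = ⊤) :
    ∀ᶠ N in Filter.atTop, a j ^ (N + 1) ∈ Ideal.span {g} * Ideal.span (Set.range a) ^ (N + 1) ⊔
      Ideal.span (Set.range f) * Ideal.span (Set.range a) ^ N := by
  cases nonempty_fintype ι
  obtain ⟨_, hy, _, hx, hxy⟩ := Submodule.mem_sup.1 ((Ideal.eq_top_iff_one _).1 htop)
  obtain ⟨b₀, rfl⟩ := Ideal.mem_span_singleton'.1 hx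
  obtain ⟨b, rfl⟩ := Ideal.mem_span_range_iff_exists_fun.1 hy
  filter_upwards [(Filter.tendsto_add_atTop_nat 1).eventually
      (eventually_exists_mem_pow_mul_algebraMap_pow hj b₀),
    Filter.eventually_all.2 fun l ↦ eventually_exists_mem_pow_mul_algebraMap_pow hj (b l)]
    with N ⟨β₀, hβ₀, e₀⟩ h
  choose β hβ eβ using h
  have key : a j ^ (N + 1) = g * β₀ + ∑ l, f l * β l := by
    apply algebraMap_blowupChart_injective (K := K) a j
    simp only [map_add, map_mul, map_sum, ← e₀, ← eβ, ← he, map_pow]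
    calc _ = (∑ l, b l * e l + b₀ * algebraMap A (blowupChart K a j) g) *
          algebraMap A (blowupChart K a j) (a j) ^ (N + 1) := by rw [hxy, one_mul]
      _ = _ := by
        rw [add_mul, add_comm, Finset.sum_mul]
        exact congrArg₂ _ (by ring) (Finset.sum_congr rfl fun l _ ↦ by ring)
  rw [key]
  exact Ideal.add_mem _
    (Ideal.mem_sup_left (Ideal.mul_mem_mul (Ideal.mem_span_singleton_self g) hβ₀))
    (Ideal.sum_mem _ fun l _ ↦
      Ideal.mem_sup_right (Ideal.mul_mem_mul (Ideal.subset_span ⟨l, rfl⟩) (hβ l)))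

end BlowupChart

section PolynomialBlowup

variable {k κ : Type*} [Field k] [Finite κ] {n : ℕ}

instance (a : κ → MvPolynomial (Fin n) k) (j : κ) :
    Algebra.FiniteType k (blowupChart (FractionRing (MvPolynomial (Fin n) k)) a j) :=
  Algebra.FiniteType.trans (S := MvPolynomial (Fin n) k) inferInstance inferInstance

instance (a : κ → MvPolynomial (Fin n) k) (j : κ) :
    IsNoetherianRing (blowupChart (FractionRing (MvPolynomial (Fin n) k)) a j) :=
  Algebra.FiniteType.isNoetherianRing k _

lemma ringKrullDim_blowupChart_le (a : κ → MvPolynomial (Fin n) k) (j : κ) :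
    ringKrullDim (blowupChart (FractionRing (MvPolynomial (Fin n) k)) a j) ≤ n := by
  refine ringKrullDim_le_of_trdeg_le k ?_
  calc Algebra.trdeg k (blowupChart (FractionRing (MvPolynomial (Fin n) k)) a j)
      ≤ Algebra.trdeg k (FractionRing (MvPolynomial (Fin n) k)) :=
        trdeg_le_of_injective ((blowupChart _ a j).val.restrictScalars k)
          Subtype.val_injective
    _ = Algebra.trdeg k (MvPolynomial (Fin n) k) := by
        have := IsLocalization.isAlgebraic (FractionRing (MvPolynomial (Fin n) k))
          (nonZeroDivisors (MvPolynomial (Fin n) k))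
        rw [← trdeg_add_eq k (MvPolynomial (Fin n) k)
          (A := FractionRing (MvPolynomial (Fin n) k)),
          trdeg_eq_zero (R := MvPolynomial (Fin n) k), add_zero]
    _ = n := by simp

end PolynomialBlowup

section GenericSelection

lemma height_add_one_le_height_sup_span_singleton {R : Type*} [CommRing R] {I : Ideal R} {x : R}
    (hx : ∀ P ∈ I.minimalPrimes, x ∉ P) : I.height + 1 ≤ (I ⊔ Ideal.span {x}).height := by
  rw [Ideal.height_eq_inf_minimalPrimes (I ⊔ _)]
  refine le_iInf₂ fun P hP ↦ ?_
  have := hP.1.1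
  obtain ⟨Q, hQ, hQP⟩ := Ideal.exists_minimalPrimes_le (le_sup_left.trans hP.1.2)
  have := hQ.1.1
  have hxP : x ∈ P := hP.1.2 (Ideal.mem_sup_right (Ideal.mem_span_singleton_self x))
  calc I.height + 1 ≤ Q.height + 1 := by gcongr; exact hQ.1.2
    _ ≤ P.height := Ideal.height_add_one_le_of_lt_of_isPrime
        (lt_of_le_of_ne hQP fun h ↦ hx Q hQ (h ▸ hxP))

variable {k V Γ : Type*} [Field k] [Infinite k] [AddCommGroup V] [Module k V] [Finite Γ]
  {B : Γ → Type*} [∀ γ, CommRing (B γ)] [∀ γ, Algebra k (B γ)] [∀ γ, IsNoetherianRing (B γ)]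

lemma exists_notMem_minimalPrimes (I : ∀ γ, Ideal (B γ)) (Λ : ∀ γ, V →ₗ[k] B γ) {lam : V →ₗ[k] k}
    (hlam : lam ≠ 0) (h : ∀ γ, ∀ P ∈ (I γ).minimalPrimes, ∃ v, Λ γ v ∉ P) :
    ∃ v, lam v ≠ 0 ∧ ∀ γ, ∀ P ∈ (I γ).minimalPrimes, Λ γ v ∉ P := by
  have hfin (γ) : Finite (I γ).minimalPrimes :=
    (Ideal.finite_minimalPrimes_of_isNoetherianRing (B γ) (I γ)).to_subtype
  let W : Option (Σ γ, (I γ).minimalPrimes) → Subspace k V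
    | none => LinearMap.ker lam
    | some x => (Submodule.restrictScalars k (x.2 : Ideal (B x.1))).comap (Λ x.1)
  have hW (o) : W o ≠ ⊤ := by
    rcases o with _ | ⟨γ, P⟩
    · exact fun h0 ↦ hlam (LinearMap.ker_eq_top.1 h0)
    · obtain ⟨v, hv⟩ := h γ P P.2
      exact fun h0 ↦ hv (h0 ▸ Submodule.mem_top : v ∈ W (some ⟨γ, P⟩))
  have hne : ⋃ o, (W o : Set V) ≠ Set.univ := fun h0 ↦
    (Subspace.exists_eq_top_of_iUnion_eq_univ h0).elim hW
  obtain ⟨v, hv⟩ := (Set.ne_univ_iff_exists_notMem _).1 hne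
  rw [Set.mem_iUnion, not_exists] at hv
  exact ⟨v, hv none, fun γ P hP ↦ hv (some ⟨γ, P, hP⟩)⟩

lemma exists_forall_lt_height [∀ γ, IsDomain (B γ)] {n : ℕ} {g : ∀ γ, B γ} (hg : ∀ γ, g γ ≠ 0)
    (Λ : ℕ → ∀ γ, V →ₗ[k] B γ) {lam : ℕ → V →ₗ[k] k} (hlam : ∀ l < n, lam l ≠ 0)
    (h : ∀ l < n, ∀ t : ℕ → V, (∀ i < l, lam i (t i) ≠ 0) → ∀ γ, ∀ P : Ideal (B γ), P.IsPrime →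
      (∀ i < l, Λ i γ (t i) ∈ P) → ∃ v, Λ l γ v ∉ P) :
    ∃ t : ℕ → V, (∀ l < n, lam l (t l) ≠ 0) ∧
      ∀ γ, n < (Ideal.span {g γ} ⊔ Ideal.span ((fun l ↦ Λ l γ (t l)) '' Set.Iio n)).height := by
  induction n with
  | zero =>
    refine ⟨0, by simp, fun γ ↦ ?_⟩
    simpa [Order.one_le_iff_pos] using Ideal.one_le_height_span_singleton_of_mem_nonZeroDivisors
      (mem_nonZeroDivisors_of_ne_zero (hg γ))
  | succ n ih =>
    obtain ⟨t, ht, hheight⟩ := ih (fun l hl ↦ hlam l (by lia)) fun l hl ↦ h l (by lia)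
    let I (γ) := Ideal.span {g γ} ⊔ Ideal.span ((fun l ↦ Λ l γ (t l)) '' Set.Iio n)
    have hI {γ i} (hi : i < n) : Λ i γ (t i) ∈ I γ :=
      Ideal.mem_sup_right (Ideal.subset_span ⟨i, hi, rfl⟩)
    obtain ⟨v, hv, hvP⟩ := exists_notMem_minimalPrimes I (Λ n) (hlam n n.lt_succ_self)
      fun γ P hP ↦ h n n.lt_succ_self t ht γ P hP.1.1 fun i hi ↦ hP.1.2 (hI hi)
    have hupd {i} (hi : i < n) : Function.update t n v i = t i := Function.update_of_ne hi.ne v t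
    refine ⟨Function.update t n v, fun l hl ↦ ?_, fun γ ↦ ?_⟩
    · rcases Nat.lt_succ_iff_lt_or_eq.1 hl with hl | rfl
      · rw [hupd hl]
        exact ht l hl
      · rwa [Function.update_self]
    · have himage : (fun l ↦ Λ l γ (Function.update t n v l)) '' Set.Iio n =
          (fun l ↦ Λ l γ (t l)) '' Set.Iio n :=
        Set.image_congr fun i hi ↦ by rw [hupd hi]
      rw [← Order.succ_eq_add_one, Order.Iio_succ_eq_insert, Set.image_insert_eq, Ideal.span_insert,
        himage, Function.update_self, sup_comm (Ideal.span {_}) (Ideal.span _), ← sup_assoc]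
      calc ((Order.succ n : ℕ) : ℕ∞) < _ + 1 :=
            (ENat.add_lt_add_iff_right ENat.one_ne_top).2 (hheight γ)
        _ ≤ _ := height_add_one_le_height_sup_span_singleton (hvP γ)

lemma exists_span_sup_span_range_eq_top [∀ γ, IsDomain (B γ)] {n : ℕ}
    (hdim : ∀ γ, ringKrullDim (B γ) ≤ n) {g : ∀ γ, B γ} (hg : ∀ γ, g γ ≠ 0)
    (Λ : ℕ → ∀ γ, V →ₗ[k] B γ) {lam : ℕ → V →ₗ[k] k} (hlam : ∀ l < n, lam l ≠ 0)
    (h : ∀ l < n, ∀ t : ℕ → V, (∀ i < l, lam i (t i) ≠ 0) → ∀ γ, ∀ P : Ideal (B γ), P.IsPrime →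
      (∀ i < l, Λ i γ (t i) ∈ P) → ∃ v, Λ l γ v ∉ P) :
    ∃ t : ℕ → V, ∀ γ,
      Ideal.span (Set.range fun l : Fin n ↦ Λ l γ (t l)) ⊔ Ideal.span {g γ} = ⊤ := by
  obtain ⟨t, -, ht⟩ := exists_forall_lt_height hg Λ hlam h
  refine ⟨t, fun γ ↦ ?_⟩
  by_contra hne
  have hrange : Set.range (fun l : Fin n ↦ Λ l γ (t l)) = (fun l ↦ Λ l γ (t l)) '' Set.Iio n := by
    rw [← Fin.range_val, ← Set.range_comp]
    rfl
  rw [hrange, sup_comm] at hne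
  have := (Ideal.height_le_ringKrullDim_of_ne_top hne).trans (hdim γ)
  exact (ht γ).not_ge (by exact_mod_cast this)

end GenericSelection

/-! ### Density of complex points -/

section PointsOfAlgebras

lemma isRoot_map_minpoly {A B R : Type*} [CommRing A] [CommRing B] [CommRing R] [Algebra A B]
    {χ : A →+* R} {φ : B →+* R} (hφ : ∀ a, φ (algebraMap A B a) = χ a) (x : B) :
    ((minpoly A x).map χ).IsRoot (φ x) := by
  have hχ : φ.comp (algebraMap A B) = χ := RingHom.ext hφ
  rw [Polynomial.IsRoot, Polynomial.eval_map, ← hχ, ← Polynomial.hom_eval₂,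
    ← Polynomial.aeval_def, minpoly.aeval, map_zero]

variable {k B : Type*} [Field k] [CommRing B] [Algebra k B]

lemma algHom_ext_of_ker_le {φ ψ : B →ₐ[k] k} (h : RingHom.ker φ ≤ RingHom.ker ψ) : φ = ψ := by
  ext x
  have hx : x - algebraMap k B (φ x) ∈ RingHom.ker φ := by simp [RingHom.mem_ker]
  exact (sub_eq_zero.1 (by simpa [RingHom.mem_ker] using h hx)).symm

lemma exists_forall_mem_imp_eq_of_apply_eq_zero {T : Set (B →ₐ[k] k)} (hT : T.Finite)
    (φ : B →ₐ[k] k) : ∃ θ, φ θ = 0 ∧ ∀ ψ ∈ T, ψ θ = 0 → ψ = φ := by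
  classical
  by_contra! hcon
  have hcover : (RingHom.ker φ : Set B) ⊆
      ⋃ ψ ∈ (hT.toFinset.erase φ : Set (B →ₐ[k] k)), RingHom.ker ψ := by
    intro θ hθ
    obtain ⟨ψ, hψT, hψθ, hψφ⟩ := hcon θ hθ
    simp only [Set.mem_iUnion]
    exact ⟨ψ, by simp [hψT, hψφ], hψθ⟩
  obtain ⟨ψ, hψ, hle⟩ := (Ideal.subset_union_prime (f := fun ψ : B →ₐ[k] k ↦ RingHom.ker ψ) φ φ
    fun ψ _ _ _ ↦ RingHom.ker_isPrime ψ).1 hcover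
  exact Finset.ne_of_mem_erase hψ (algHom_ext_of_ker_le hle).symm

lemma exists_algHom_ker_eq [IsAlgClosed k] [Algebra.FiniteType k B] (I : Ideal B) [I.IsMaximal] :
    ∃ ψ : B →ₐ[k] k, RingHom.ker ψ = I := by
  let := Ideal.Quotient.field I
  have := finite_of_finite_type_of_isJacobsonRing k (B ⧸ I)
  have hbij := IsAlgClosed.algebraMap_bijective_of_isIntegral (k := k) (K := B ⧸ I)
  let e := AlgEquiv.ofBijective (Algebra.ofId k (B ⧸ I)) hbij
  refine ⟨e.symm.toAlgHom.comp (Ideal.Quotient.mkₐ k I), ?_⟩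
  ext x
  simp [RingHom.mem_ker, Ideal.Quotient.eq_zero_iff_mem]

variable {A : Type*} [CommRing A] [Algebra A B] [Algebra.IsIntegral A B]

lemma finite_setOf_algHom_comp_algebraMap_eq [Algebra.FiniteType k B] (χ : A →+* k) :
    {φ : B →ₐ[k] k | ∀ a, φ (algebraMap A B a) = χ a}.Finite := by
  obtain ⟨S, hS⟩ : (⊤ : Subalgebra k B).FG := Algebra.FiniteType.out
  have hroots : (Set.univ.pi fun x : S ↦
      {ζ | ((minpoly A (x : B)).map χ).IsRoot ζ}).Finite := .pi fun x ↦
    Polynomial.finite_setOfPred_isRoot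
      ((minpoly.monic (Algebra.IsIntegral.isIntegral _)).map χ).ne_zero
  refine .of_injOn (f := fun φ (x : S) ↦ φ x) ?_ ?_ hroots
  · exact fun φ hφ x _ ↦ isRoot_map_minpoly (φ := (φ : B →+* k)) hφ x
  · exact fun φ _ ψ _ h ↦ AlgHom.ext_of_adjoin_eq_top hS fun x hx ↦ congrFun h ⟨x, hx⟩

lemma exists_algHom_extending_of_isIntegral [Algebra k A] [IsScalarTower k A B]
    [IsAlgClosed k] [Algebra.FiniteType k B] [FaithfulSMul A B] (χ : A →ₐ[k] k) :
    ∃ ψ : B →ₐ[k] k, ∀ a, ψ (algebraMap A B a) = χ a := by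
  have hsurj : Function.Surjective χ := fun c ↦ ⟨algebraMap k A c, by simp⟩
  have := RingHom.ker_isMaximal_of_surjective χ hsurj
  obtain ⟨Q, hQ, hQχ⟩ := Ideal.exists_ideal_over_maximal_of_isIntegral (S := B)
    (RingHom.ker χ) <| by
    rw [(RingHom.injective_iff_ker_eq_bot _).1 (FaithfulSMul.algebraMap_injective A B)]
    exact bot_le
  obtain ⟨ψ, hψ⟩ := exists_algHom_ker_eq (k := k) Q
  have hker : RingHom.ker χ ≤ RingHom.ker (ψ.comp (IsScalarTower.toAlgHom k A B)) := by
    rw [← hQχ, ← hψ]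
    exact fun a ha ↦ ha
  exact ⟨ψ, fun a ↦ DFunLike.congr_fun (algHom_ext_of_ker_le hker).symm a⟩

lemma exists_algHom_extending_of_isRoot_map_minpoly [IsDomain A] [IsIntegrallyClosed A]
    [IsDomain B] [FaithfulSMul A B] [Algebra k A] [IsScalarTower k A B] [IsAlgClosed k]
    [Algebra.FiniteType k B] (χ : A →ₐ[k] k) {θ : B} {ζ : k}
    (hζ : ((minpoly A θ).map (χ : A →+* k)).IsRoot ζ) :
    ∃ ψ : B →ₐ[k] k, (∀ a, ψ (algebraMap A B a) = χ a) ∧ ψ θ = ζ := by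
  have hθ : IsIntegral A θ := Algebra.IsIntegral.isIntegral θ
  have : Algebra.IsIntegral (Algebra.adjoin A {θ}) B := .tower_top (R := A)
  let e := minpoly.equivAdjoin hθ
  let χθ : Algebra.adjoin A {θ} →ₐ[k] k :=
    { toRingHom := (AdjoinRoot.lift (χ : A →+* k) ζ (by rwa [← Polynomial.eval_map])).comp
        (e.symm : Algebra.adjoin A {θ} →+* _)
      commutes' := fun c ↦ by
        rw [IsScalarTower.algebraMap_apply k A]
        simp }
  have heθ : e (AdjoinRoot.root _) = ⟨θ, Algebra.self_mem_adjoin_singleton A θ⟩ := by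
    ext
    rw [minpoly.coe_equivAdjoin]
    simp
  obtain ⟨ψ, hψ⟩ := exists_algHom_extending_of_isIntegral (B := B) χθ
  refine ⟨ψ, fun a ↦ ?_, ?_⟩
  · rw [IsScalarTower.algebraMap_apply A (Algebra.adjoin A {θ}) B, hψ]
    simp [χθ]
  · refine (hψ ⟨θ, Algebra.self_mem_adjoin_singleton A θ⟩).trans ?_
    rw [← heθ]
    simp [χθ]

end PointsOfAlgebras

section Density

lemma dense_setOf_eval_ne_zero {σ : Type*} [Finite σ] {p : MvPolynomial σ ℂ} (hp : p ≠ 0) :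
    Dense {y : σ → ℂ | eval y p ≠ 0} := by
  cases nonempty_fintype σ
  rw [← compl_compl {y : σ → ℂ | _}, ← interior_eq_empty_iff_dense_compl,
    Set.eq_empty_iff_forall_notMem]
  intro y hy
  have hzero := (AnalyticOnNhd.eval_mvPolynomial (𝕜 := ℂ) p).eq_of_eventuallyEq
    (analyticOnNhd_const (v := 0)) (z₀ := y) <| by
      filter_upwards [mem_interior_iff_mem_nhds.1 hy] with z hz
      simpa using hz
  exact hp (MvPolynomial.funext fun z ↦ by simpa using congrFun hzero z)

lemma exists_isRoot_norm_le {K : Type*} [NormedField K] {p : Polynomial K} (hmonic : p.Monic)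
    (hsplit : p.Splits) {η : ℝ} (hη : 0 ≤ η) (h : ‖p.coeff 0‖ < η ^ p.natDegree) :
    ∃ ζ, p.IsRoot ζ ∧ ‖ζ‖ ≤ η := by
  by_contra! hcon
  have key (S : Multiset K) (hS : ∀ x ∈ S, η < ‖x‖) : η ^ Multiset.card S ≤ ‖S.prod‖ := by
    induction S using Multiset.induction with
    | empty => simp
    | cons a S ih =>
      rw [Multiset.card_cons, Multiset.prod_cons, norm_mul, pow_succ']
      have := ih fun x hx ↦ hS x (Multiset.mem_cons_of_mem hx)
      gcongr
      exact (hS a (Multiset.mem_cons_self _ _)).le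
  have hprod := key p.roots fun x hx ↦ hcon x (Polynomial.isRoot_of_mem_roots hx)
  rw [← hsplit.natDegree_eq_card_roots] at hprod
  rw [hsplit.coeff_zero_eq_prod_roots_of_monic hmonic] at h
  simp only [norm_mul, norm_pow, norm_neg, norm_one, one_pow, one_mul] at h
  exact hprod.not_gt h

section Limits

variable {k A B : Type*} [NormedField k] [CommRing A] [CommRing B] [Algebra k B] [Algebra A B]

lemma exists_forall_norm_apply_le_of_isIntegral {F : Filter (B →ₐ[k] k)} {χ : A → k}
    (hF : ∀ a, Filter.Tendsto (fun ψ : B →ₐ[k] k ↦ ψ (algebraMap A B a)) F (nhds (χ a))) {x : B}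
    (hx : IsIntegral A x) : ∃ K : ℝ, ∀ᶠ ψ in F, ‖ψ x‖ ≤ K := by
  set p := minpoly A x
  obtain ⟨K, hK⟩ : ∃ K : NNReal, ∀ᶠ ψ in F, ∀ i ∈ Finset.range p.natDegree,
      ‖ψ (algebraMap A B (p.coeff i))‖₊ ≤ K := by
    refine ⟨(Finset.range p.natDegree).sup (fun i ↦ ‖χ (p.coeff i)‖₊) + 1, ?_⟩
    refine (Filter.eventually_all_finset _).2 fun i hi ↦ ?_
    have hlt : ‖χ (p.coeff i)‖₊ < (Finset.range p.natDegree).sup (fun i ↦ ‖χ (p.coeff i)‖₊) + 1 :=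
      (Finset.le_sup (f := fun i ↦ ‖χ (p.coeff i)‖₊) hi).trans_lt (lt_add_one _)
    exact ((hF _).nnnorm.eventually_lt_const hlt).mono fun ψ hψ ↦ hψ.le
  refine ⟨K + 1, hK.mono fun ψ hψ ↦ ?_⟩
  have hmonic : p.Monic := minpoly.monic hx
  let χψ : A →+* k := (ψ : B →+* k).comp (algebraMap A B)
  have hroot : (p.map χψ).IsRoot (ψ x) :=
    isRoot_map_minpoly (φ := (ψ : B →+* k)) (χ := χψ) (fun _ ↦ rfl) x
  have hbound : (p.map χψ).cauchyBound ≤ K + 1 := by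
    rw [Polynomial.cauchyBound, (hmonic.map _).leadingCoeff, hmonic.natDegree_map, nnnorm_one,
      div_one]
    gcongr
    exact Finset.sup_le fun i hi ↦ by simpa [χψ] using hψ i hi
  exact_mod_cast ((hroot.norm_lt_cauchyBound (hmonic.map _).ne_zero).le.trans hbound)

lemma exists_algHom_forall_tendsto [ProperSpace k] [Algebra.IsIntegral A B]
    {𝒰 : Ultrafilter (B →ₐ[k] k)} {χ : A → k}
    (h𝒰 : ∀ a, Filter.Tendsto (fun ψ : B →ₐ[k] k ↦ ψ (algebraMap A B a)) 𝒰 (nhds (χ a))) :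
    ∃ φ : B →ₐ[k] k, ∀ x, Filter.Tendsto (fun ψ : B →ₐ[k] k ↦ ψ x) 𝒰 (nhds (φ x)) := by
  have hconv (x : B) : ∃ L, Filter.Tendsto (fun ψ : B →ₐ[k] k ↦ ψ x) 𝒰 (nhds L) := by
    obtain ⟨K, hK⟩ := exists_forall_norm_apply_le_of_isIntegral h𝒰
      (Algebra.IsIntegral.isIntegral x)
    obtain ⟨L, -, hL⟩ := (isCompact_closedBall (0 : k) K).ultrafilter_le_nhds
      (𝒰.map fun ψ ↦ ψ x) <| Filter.le_principal_iff.2 <|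
        hK.mono fun ψ hψ ↦ mem_closedBall_zero_iff.2 hψ
    exact ⟨L, hL⟩
  choose L hL using hconv
  exact ⟨{ toFun := L
           map_one' := tendsto_nhds_unique (hL 1) (by simp)
           map_zero' := tendsto_nhds_unique (hL 0) (by simp)
           map_mul' := fun x y ↦ tendsto_nhds_unique (hL _) (by simpa using (hL x).mul (hL y))
           map_add' := fun x y ↦ tendsto_nhds_unique (hL _) (by simpa using (hL x).add (hL y))
           commutes' := fun r ↦ tendsto_nhds_unique (hL _) (by simp) }, hL⟩

end Limits

end Density

section DensityOfPoints

lemma apply_algebraMap_eq_aeval {σ R B : Type*} [CommRing R] [CommRing B] [Algebra R B]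
    [Algebra (MvPolynomial σ R) B] [IsScalarTower R (MvPolynomial σ R) B] (ψ : B →ₐ[R] R)
    (p : MvPolynomial σ R) : ψ (algebraMap _ B p) =
      aeval (fun i ↦ ψ (algebraMap (MvPolynomial σ R) B (X i))) p :=
  DFunLike.congr_fun (algHom_ext (f := ψ.comp (IsScalarTower.toAlgHom R (MvPolynomial σ R) B))
    fun i ↦ by simp) p

variable {B : Type*} [CommRing B] [IsDomain B] [Algebra ℂ B] [Algebra.FiniteType ℂ B]

lemma mem_closure_image_of_isIntegral {σ : Type*} [Finite σ] [Algebra (MvPolynomial σ ℂ) B]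
    [IsScalarTower ℂ (MvPolynomial σ ℂ) B] [FaithfulSMul (MvPolynomial σ ℂ) B]
    [Algebra.IsIntegral (MvPolynomial σ ℂ) B] {w : B} (hw : w ≠ 0) {φ : B →ₐ[ℂ] ℂ} {θ : B}
    (hθ : φ θ = 0) :
    (fun i ↦ φ (algebraMap (MvPolynomial σ ℂ) B (X i)), (0 : ℂ)) ∈ closure
      ((fun ψ : B →ₐ[ℂ] ℂ ↦ (fun i ↦ ψ (algebraMap (MvPolynomial σ ℂ) B (X i)), ψ θ)) ''
        {ψ | ψ w ≠ 0}) := by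
  cases nonempty_fintype σ
  set y₀ : σ → ℂ := fun i ↦ φ (algebraMap (MvPolynomial σ ℂ) B (X i))
  obtain ⟨a, ha, ha0⟩ := Submodule.exists_mem_ne_zero_of_ne_bot <|
    Ideal.comap_ne_bot_of_integral_mem (R := MvPolynomial σ ℂ) hw
      (Ideal.mem_span_singleton_self w) (Algebra.IsIntegral.isIntegral w)
  obtain ⟨w', hw'⟩ := Ideal.mem_span_singleton.1 (Ideal.mem_comap.1 ha)
  set p := minpoly (MvPolynomial σ ℂ) θ
  have hint : IsIntegral (MvPolynomial σ ℂ) θ := Algebra.IsIntegral.isIntegral θ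
  have hmonic : p.Monic := minpoly.monic hint
  have hp0 : eval y₀ (p.coeff 0) = 0 := by
    have := isRoot_map_minpoly (A := MvPolynomial σ ℂ) (χ := eval y₀) (φ := (φ : B →+* ℂ))
      (apply_algebraMap_eq_aeval φ) θ
    simpa [Polynomial.IsRoot, hθ, ← Polynomial.coeff_zero_eq_eval_zero] using this
  refine Metric.mem_closure_iff.2 fun ε hε ↦ ?_
  have hsmall : {y | ‖eval y (p.coeff 0)‖ < (ε / 2) ^ p.natDegree} ∈ nhds y₀ := by
    refine (isOpen_lt (continuous_eval _).norm continuous_const).mem_nhds ?_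
    simpa [hp0] using pow_pos (half_pos hε) _
  obtain ⟨y, hya, hy, hyε⟩ := (dense_setOf_eval_ne_zero ha0).inter_nhds_nonempty
    (Filter.inter_mem hsmall (Metric.ball_mem_nhds y₀ hε))
  have hdeg : (p.map (eval y)).natDegree = p.natDegree := hmonic.natDegree_map _
  obtain ⟨ζ, hζ, hζε⟩ := exists_isRoot_norm_le (hmonic.map (eval y)) (IsAlgClosed.splits _)
    (half_pos hε).le (by rwa [hdeg, Polynomial.coeff_map])
  obtain ⟨ψ, hψy, rfl⟩ :=
    exists_algHom_extending_of_isRoot_map_minpoly (θ := θ) (aeval (R := ℂ) y) hζ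
  refine ⟨_, ⟨ψ, fun hψw ↦ hya ?_, rfl⟩, ?_⟩
  · rw [← coe_aeval_eq_eval, RingHom.coe_coe, ← hψy, hw', map_mul, hψw, zero_mul]
  · simp only [hψy, aeval_X, dist_comm (y₀, (0 : ℂ))]
    refine max_lt hyε ?_
    rw [dist_zero_right]
    exact hζε.trans_lt (half_lt_self hε)

lemma coe_mem_closure_image_setOf_ne_zero {w : B} (hw : w ≠ 0) (φ : B →ₐ[ℂ] ℂ) :
    (φ : B → ℂ) ∈ closure ((fun (ψ : B →ₐ[ℂ] ℂ) x ↦ ψ x) '' {ψ | ψ w ≠ 0}) := by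
  obtain ⟨s, g, hg, hgint⟩ := exists_integral_inj_algHom_of_fg ℂ B
  let := g.toRingHom.toAlgebra
  have : IsScalarTower ℂ (MvPolynomial (Fin s) ℂ) B := .of_algebraMap_eq fun r ↦ (g.commutes r).symm
  have : FaithfulSMul (MvPolynomial (Fin s) ℂ) B := (faithfulSMul_iff_algebraMap_injective _ _).2 hg
  have : Algebra.IsIntegral (MvPolynomial (Fin s) ℂ) B := ⟨hgint⟩
  obtain ⟨θ, hθφ, hθ⟩ := exists_forall_mem_imp_eq_of_apply_eq_zero
    (finite_setOf_algHom_comp_algebraMap_eq ((φ : B →+* ℂ).comp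
      (algebraMap (MvPolynomial (Fin s) ℂ) B))) φ
  have hcluster := mem_closure_image_of_isIntegral (σ := Fin s) hw hθφ
  rw [mem_closure_iff_clusterPt, ← Filter.map_principal] at hcluster
  obtain ⟨𝒰, h𝒰w, h𝒰⟩ := mapClusterPt_iff_ultrafilter.1 hcluster
  rw [nhds_prod_eq, Filter.tendsto_prod_iff'] at h𝒰
  have hbase (a : MvPolynomial (Fin s) ℂ) : Filter.Tendsto (fun ψ : B →ₐ[ℂ] ℂ ↦
      ψ (algebraMap _ B a)) 𝒰 (nhds (φ (algebraMap _ B a))) := by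
    rw [apply_algebraMap_eq_aeval φ]
    exact (((continuous_eval a).tendsto _).comp h𝒰.1).congr fun ψ ↦
      (apply_algebraMap_eq_aeval ψ a).symm
  obtain ⟨ψ, hψ⟩ := exists_algHom_forall_tendsto hbase
  obtain rfl : ψ = φ := hθ ψ (fun a ↦ tendsto_nhds_unique (hψ _) (hbase a))
    (tendsto_nhds_unique (hψ θ) h𝒰.2)
  exact mem_closure_of_tendsto (tendsto_pi_nhds.2 hψ) <|
    Filter.mem_of_superset (Filter.le_principal_iff.1 h𝒰w) fun χ hχ ↦ ⟨χ, hχ, rfl⟩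

lemma span_range_eq_top_of_norm_le {σ ι : Type*} [Finite σ] [Fintype ι]
    [Algebra (MvPolynomial σ ℂ) B] [IsScalarTower ℂ (MvPolynomial σ ℂ) B]
    [FaithfulSMul (MvPolynomial σ ℂ) B] {a : ι → MvPolynomial σ ℂ} {δ w : MvPolynomial σ ℂ}
    (hδ : δ ≠ 0) (hw : w ≠ 0)
    (H : ∀ R : ℝ, ∃ K : ℝ, ∀ z : σ → ℂ, (∀ i, ‖z i‖ ≤ R) → eval z w ≠ 0 →
      ‖eval z δ‖ ≤ K * ∑ j, ‖eval z (a j)‖)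
    {e : ι → B} (he : ∀ j, e j * algebraMap _ B δ = algebraMap _ B (a j)) :
    Ideal.span (Set.range e) = ⊤ := by
  cases nonempty_fintype σ
  by_contra hne
  obtain ⟨𝔪, h𝔪, hle⟩ := Ideal.exists_le_maximal _ hne
  obtain ⟨φ, rfl⟩ := exists_algHom_ker_eq (k := ℂ) 𝔪
  have hφe (j) : φ (e j) = 0 := hle (Ideal.subset_span (Set.mem_range_self j))
  let x (i : σ) : B := algebraMap (MvPolynomial σ ℂ) B (X i)
  obtain ⟨R, hR⟩ : ∃ R, ∀ i, ‖φ (x i)‖ < R :=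
    ⟨∑ i, ‖φ (x i)‖ + 1, fun i ↦ (Finset.single_le_sum (f := fun i ↦ ‖φ (x i)‖)
      (fun _ _ ↦ norm_nonneg _) (Finset.mem_univ i)).trans_lt (lt_add_one _)⟩
  obtain ⟨K, hK⟩ := H R
  have hclosed : IsClosed {f : B → ℂ | (∀ i, ‖f (x i)‖ < R) → 1 ≤ K * ∑ j, ‖f (e j)‖} := by
    refine isClosed_imp ?_ (isClosed_le continuous_const (by fun_prop))
    simp only [Set.ofPred_forall]
    exact isOpen_iInter_of_finite fun i ↦ isOpen_lt (by fun_prop) continuous_const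
  have hwδ : algebraMap (MvPolynomial σ ℂ) B (w * δ) ≠ 0 := by
    simpa [hw] using hδ
  have hmem := closure_minimal (Set.image_subset_iff.2 fun ψ hψ hψR ↦ ?_) hclosed
    (coe_mem_closure_image_setOf_ne_zero hwδ φ)
  · exact absurd (hmem hR) (by simp [hφe])
  · set z : σ → ℂ := fun i ↦ ψ (x i)
    have hz (p : MvPolynomial σ ℂ) : ψ (algebraMap _ B p) = eval z p :=
      apply_algebraMap_eq_aeval ψ p
    have hψwδ : ψ (algebraMap _ B (w * δ)) ≠ 0 := hψ
    rw [hz, map_mul] at hψwδ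
    have hza (j) : ‖eval z (a j)‖ = ‖ψ (e j)‖ * ‖eval z δ‖ := by
      rw [← hz, ← hz, ← he, map_mul, norm_mul]
    have hbound := hK z (fun i ↦ (hψR i).le) (left_ne_zero_of_mul hψwδ)
    simp only [hza, ← Finset.sum_mul, ← mul_assoc] at hbound
    exact (le_mul_iff_one_le_left (norm_pos_iff.2 (right_ne_zero_of_mul hψwδ))).1 hbound

end DensityOfPoints

/-! ### Łojasiewicz inequalities for forms -/

section ChartsOfForms

lemma eventually_dehomogenize_pow_mem {κ ι K : Type*} [Field K] [Finite ι] {n : ℕ}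
    {φ : κ → MvPolynomial (Fin (n + 1)) K} {f : ι → MvPolynomial (Fin (n + 1)) K}
    {g : MvPolynomial (Fin (n + 1)) K} {i : Fin (n + 1)} {j : κ}
    (h : dehomogenize i (φ j) ≠ 0 →
      ∃ e : ι → blowupChart (FractionRing (MvPolynomial (Fin n) K))
          (fun k ↦ dehomogenize i (φ k)) j,
        (∀ l, e l * algebraMap _ _ (dehomogenize i (φ j)) =
          algebraMap _ _ (dehomogenize i (f l))) ∧
        Ideal.span (Set.range e) ⊔ Ideal.span {algebraMap _ _ (dehomogenize i g)} = ⊤) :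
    ∀ᶠ N in Filter.atTop, dehomogenize i (φ j ^ (N + 1)) ∈
      (Ideal.span {g} * Ideal.span (Set.range φ) ^ (N + 1) ⊔
        Ideal.span (Set.range f) * Ideal.span (Set.range φ) ^ N).map (dehomogenize i) := by
  simp only [Ideal.map_sup, Ideal.map_mul, Ideal.map_pow, Ideal.map_span, ← Set.range_comp,
    Function.comp_def, Set.image_singleton, map_pow]
  by_cases hj : dehomogenize i (φ j) = 0
  · exact .of_forall fun N ↦ by simp [hj]
  · obtain ⟨e, he, htop⟩ := h hj
    exact eventually_pow_succ_mem_of_span_eq_top (a := fun k ↦ dehomogenize i (φ k))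
      (f := fun l ↦ dehomogenize i (f l)) (g := dehomogenize i g) hj he htop

variable {ι : Type*} {n : ℕ} {i₀ : Fin (n + 1)} {M : ℕ} {f : ι → MvPolynomial (Fin (n + 1)) ℂ}

/-- The Łojasiewicz inequality of the forms `f j` in projective space: on bounded subsets of each
standard affine chart, the `M`-th power of the coordinate `X i₀`, which cuts out the hyperplane at
infinity, is controlled off this hyperplane by the `f j`. -/
def DominatesPow [Fintype ι] (i₀ : Fin (n + 1)) (M : ℕ)
    (f : ι → MvPolynomial (Fin (n + 1)) ℂ) : Prop :=
  ∀ (i : Fin (n + 1)) (R : ℝ), ∃ K : ℝ, ∀ z : Fin n → ℂ, (∀ k, ‖z k‖ ≤ R) →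
    eval z (dehomogenize i (X i₀)) ≠ 0 →
    ‖eval z (dehomogenize i (X i₀ ^ M))‖ ≤ K * ∑ j, ‖eval z (dehomogenize i (f j))‖

/-- The family `f` with `X i₀ ^ M` adjoined. -/
noncomputable def adjoinXPow (i₀ : Fin (n + 1)) (M : ℕ) (f : ι → MvPolynomial (Fin (n + 1)) ℂ) :
    Option ι → MvPolynomial (Fin (n + 1)) ℂ
  | none => X i₀ ^ M
  | some j => f j

lemma isHomogeneous_adjoinXPow {d : ι → ℕ} (hf : ∀ j, (f j).IsHomogeneous (d j)) (o : Option ι) :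
    (adjoinXPow i₀ M f o).IsHomogeneous (o.elim M d) := by
  cases o with
  | none => exact isHomogeneous_X_pow i₀ M
  | some j => exact hf j

lemma span_range_ratio_eq_top [Fintype ι] (H : DominatesPow i₀ M f) {i : Fin (n + 1)}
    {o : Option ι} (ho : dehomogenize i (adjoinXPow i₀ M f o) ≠ 0) :
    Ideal.span (Set.range fun j ↦ blowupChart.ratio (K := FractionRing (MvPolynomial (Fin n) ℂ))
      (fun k ↦ dehomogenize i (adjoinXPow i₀ M f k)) o (some j)) = ⊤ := by
  cases o with
  | none =>
    refine span_range_eq_top_of_norm_le ho (fun h ↦ X_ne_zero (R := ℂ) i₀ ?_) (H i)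
      fun j ↦ blowupChart.ratio_mul_algebraMap
        (a := fun k ↦ dehomogenize i (adjoinXPow i₀ M f k)) ho (some j)
    exact eq_zero_of_dehomogenize_eq_zero (isHomogeneous_X ℂ i₀) h
  | some j =>
    rw [Ideal.eq_top_iff_one,
      ← blowupChart.ratio_self (a := fun k ↦ dehomogenize i (adjoinXPow i₀ M f k)) ho]
    exact Ideal.subset_span ⟨j, rfl⟩

lemma X_pow_mem_span_range_of_card_le [Fintype ι] [LinearOrder ι] {d : ι → ℕ}
    (hf : ∀ j, (f j).IsHomogeneous (d j)) (H : DominatesPow i₀ M f) (hn : Fintype.card ι ≤ n) :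
    X i₀ ^ (Fintype.card ι * M) ∈ Ideal.span (Set.range f) := by
  have := X_pow_mem_span_range_sup_span_of_charts (isHomogeneous_adjoinXPow hf) hf
    (g := 0) (D := 0) (i₀ := i₀) (M := M)
    (fun i o ↦ eventually_dehomogenize_pow_mem fun ho ↦
      ⟨_, fun j ↦ blowupChart.ratio_mul_algebraMap
        (a := fun k ↦ dehomogenize i (adjoinXPow i₀ M f k)) ho (some j), by
        rw [span_range_ratio_eq_top H ho, top_sup_eq]⟩)
    (Ideal.subset_span ⟨none, rfl⟩) (.inl ⟨rfl, by simpa [Nat.lt_succ_iff] using hn⟩)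
  simpa using this

end ChartsOfForms

section TriangularCombinations

variable {k σ B : Type*} [Field k] [Fintype σ] [CommRing B] [Algebra k B] {m : ℕ}

/-- The linear combinations of the entries `v (j, i)` with `l ≤ j`. -/
def tailCombination (l : ℕ) (v : Fin m × σ → B) : (Fin m × σ → k) →ₗ[k] B :=
  Fintype.linearCombination k fun p ↦ if l ≤ p.1 then v p else 0

/-- The sum of the coefficients `t (l, i)` over `i`. -/
def rowSum (l : ℕ) : (Fin m × σ → k) →ₗ[k] k :=
  Fintype.linearCombination k fun p ↦ if l = p.1 then 1 else 0

lemma rowSum_apply (l : Fin m) (t : Fin m × σ → k) : rowSum l t = ∑ i, t (l, i) := by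
  simp only [rowSum, Fintype.linearCombination_apply, Fintype.sum_prod_type, Fin.val_inj,
    smul_eq_mul, mul_ite, mul_one, mul_zero]
  rw [Finset.sum_comm]
  simp

lemma rowSum_ne_zero [Nonempty σ] {l : ℕ} (hl : l < m) :
    rowSum l ≠ (0 : (Fin m × σ → k) →ₗ[k] k) := by
  classical
  obtain ⟨i⟩ := ‹Nonempty σ›
  intro h
  have := rowSum_apply (k := k) ⟨l, hl⟩ (Pi.single (⟨l, hl⟩, i) 1)
  simp [h, Pi.single_apply] at this

lemma tailCombination_single [DecidableEq σ] {l : ℕ} {j : Fin m} (hj : l ≤ j) (i : σ)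
    (v : Fin m × σ → B) :
    tailCombination l v (Pi.single (j, i) (1 : k)) = v (j, i) := by
  simp [tailCombination, Fintype.linearCombination_apply_single, hj]

lemma mul_tailCombination {B' : Type*} [CommRing B'] [Algebra k B'] (ρ : B →ₐ[k] B') {δ : B'}
    {v : Fin m × σ → B} {v' : Fin m × σ → B'} (h : ∀ p, v' p * δ = ρ (v p)) (l : ℕ)
    (t : Fin m × σ → k) : tailCombination l v' t * δ = ρ (tailCombination l v t) := by
  simp [tailCombination, Fintype.linearCombination_apply, Finset.sum_mul, h, map_sum, apply_ite ρ]

lemma forall_mem_of_tailCombination_mem {P : Ideal B} {x : Fin m → B} {v : ℕ → Fin m × σ → B}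
    (hdvd : ∀ l p, x p.1 ∣ v l p) (hdiag : ∀ (j : Fin m) i, v j (j, i) = x j) {i₀ : σ}
    (hi₀ : ∀ l j, v l (j, i₀) = x j) {l : ℕ} {t : ℕ → Fin m × σ → k}
    (ht : ∀ l' < l, rowSum l' (t l') ≠ 0) (hlt : ∀ l' < l, tailCombination l' (v l') (t l') ∈ P)
    (hl : ∀ s : Fin m × σ → k, tailCombination l (v l) s ∈ P) (j : Fin m) : x j ∈ P := by
  classical
  induction j using WellFoundedGT.induction with
  | ind j ih =>
    by_cases hlj : l ≤ j
    · rw [← hi₀ l j, ← tailCombination_single (k := k) hlj i₀ (v l)]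
      exact hl _
    have hjl : (j : ℕ) < l := not_le.1 hlj
    have hsplit : tailCombination (j : ℕ) (v j) (t j) - rowSum (j : ℕ) (t j) • x j ∈ P := by
      rw [rowSum_apply, tailCombination, Fintype.linearCombination_apply, Fintype.sum_prod_type,
        ← Finset.add_sum_erase _ _ (Finset.mem_univ j)]
      simp only [le_refl, if_true, hdiag, ← Finset.sum_smul, add_sub_cancel_left]
      refine sum_mem fun j' hj' ↦ sum_mem fun i _ ↦ Submodule.smul_of_tower_mem _ _ ?_
      split_ifs with hle
      · exact P.mem_of_dvd (hdvd _ _)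
          (ih j' (lt_of_le_of_ne hle (Finset.ne_of_mem_erase hj').symm))
      · exact zero_mem _
    have hmem := sub_mem (hlt j hjl) hsplit
    rw [sub_sub_cancel] at hmem
    have := P.mul_mem_left (algebraMap k B (rowSum (j : ℕ) (t j))⁻¹) hmem
    rwa [← Algebra.smul_def, inv_smul_smul₀ (ht j hjl)] at this

end TriangularCombinations

section MoreFormsThanVariables

variable {m n : ℕ} {i₀ : Fin (n + 1)} {M : ℕ} {f : Fin m → MvPolynomial (Fin (n + 1)) ℂ}

lemma tailCombination_mem {k σ B : Type*} [Field k] [Fintype σ] [CommRing B] [Algebra k B]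
    {I : Ideal B} {v : Fin m × σ → B} (hv : ∀ p, v p ∈ I) (l : ℕ) (t : Fin m × σ → k) :
    tailCombination l v t ∈ I := by
  rw [tailCombination, Fintype.linearCombination_apply]
  refine sum_mem fun p _ ↦ Submodule.smul_of_tower_mem _ _ ?_
  split_ifs
  · exact hv p
  · exact zero_mem _

lemma isHomogeneous_tailCombination {σ k : Type*} [Fintype σ] [Field k]
    {f : Fin m → MvPolynomial σ k} {d : ℕ → ℕ} (hf : ∀ j : Fin m, (f j).IsHomogeneous (d j))
    (hd : ∀ i j : Fin m, i ≤ j → d j ≤ d i) (l : Fin m) (t : Fin m × σ → k) :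
    (tailCombination l (fun p ↦ X p.2 ^ (d l - d p.1) * f p.1) t).IsHomogeneous (d l) := by
  rw [tailCombination, Fintype.linearCombination_apply]
  refine IsHomogeneous.sum _ _ _ fun p _ ↦ ?_
  split_ifs with hle
  · have := (isHomogeneous_C σ (t p)).mul ((isHomogeneous_X_pow p.2 (d l - d p.1)).mul (hf p.1))
    rwa [Nat.sub_add_cancel (hd l p.1 hle), zero_add, ← smul_eq_C_mul] at this
  · rw [smul_zero]
    exact isHomogeneous_zero _ _ _

/-- The fractions `X i' ^ (d l - d j) * f j / φ o` on the chart `o` of the blow-up of the ideal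
generated by `φ = adjoinXPow i₀ M f` over the `i`-th affine chart of projective space. -/
noncomputable def chartEntries (i₀ : Fin (n + 1)) (M : ℕ)
    (f : Fin m → MvPolynomial (Fin (n + 1)) ℂ) (d : ℕ → ℕ) (i : Fin (n + 1)) (o : Option (Fin m))
    (l : ℕ) (p : Fin m × Fin (n + 1)) :
    blowupChart (FractionRing (MvPolynomial (Fin n) ℂ))
      (fun k ↦ dehomogenize i (adjoinXPow i₀ M f k)) o :=
  algebraMap (MvPolynomial (Fin n) ℂ) _ (dehomogenize i (X p.2)) ^ (d l - d p.1) *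
    blowupChart.ratio (fun k ↦ dehomogenize i (adjoinXPow i₀ M f k)) o (some p.1)

lemma tailCombination_chartEntries_mul (d : ℕ → ℕ) {i : Fin (n + 1)} {o : Option (Fin m)}
    (ho : dehomogenize i (adjoinXPow i₀ M f o) ≠ 0) (l : ℕ) (t : Fin m × Fin (n + 1) → ℂ) :
    tailCombination l (chartEntries i₀ M f d i o l) t *
        algebraMap _ _ (dehomogenize i (adjoinXPow i₀ M f o)) =
      algebraMap _ _
        (dehomogenize i (tailCombination l (fun p ↦ X p.2 ^ (d l - d p.1) * f p.1) t)) := by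
  refine mul_tailCombination ((IsScalarTower.toAlgHom ℂ (MvPolynomial (Fin n) ℂ)
    (blowupChart _ _ _)).comp (dehomogenize i)) (fun p ↦ ?_) l t
  rw [chartEntries, mul_assoc, blowupChart.ratio_mul_algebraMap
    (a := fun k ↦ dehomogenize i (adjoinXPow i₀ M f k)) ho (some p.1)]
  rw [← map_pow, ← map_pow, ← map_mul, ← map_mul]
  rfl

lemma exists_tailCombination_chartEntries_span_eq_top (H : DominatesPow i₀ M f) (hnm : n < m)
    (d : ℕ → ℕ) {D : ℕ} {g : MvPolynomial (Fin (n + 1)) ℂ} (hg : g.IsHomogeneous D)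
    (hg0 : g ≠ 0) :
    ∃ t : ℕ → Fin m × Fin (n + 1) → ℂ, ∀ i o, dehomogenize i (adjoinXPow i₀ M f o) ≠ 0 →
      Ideal.span (Set.range fun l : Fin n ↦
        tailCombination l (chartEntries i₀ M f d i o l) (t l)) ⊔
          Ideal.span {algebraMap _ _ (dehomogenize i g)} = ⊤ := by
  let Γ := {x : Fin (n + 1) × Option (Fin m) // dehomogenize x.1 (adjoinXPow i₀ M f x.2) ≠ 0}
  obtain ⟨t, ht⟩ := exists_span_sup_span_range_eq_top (k := ℂ) (n := n) (Γ := Γ)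
    (B := fun γ ↦ blowupChart (FractionRing (MvPolynomial (Fin n) ℂ))
      (fun k ↦ dehomogenize γ.1.1 (adjoinXPow i₀ M f k)) γ.1.2)
    (g := fun γ ↦ algebraMap _ _ (dehomogenize γ.1.1 g))
    (fun γ ↦ ringKrullDim_blowupChart_le _ _)
    (fun γ ↦ (map_ne_zero_iff _ (algebraMap_blowupChart_injective _ _)).2
      fun h ↦ hg0 (eq_zero_of_dehomogenize_eq_zero hg h))
    (fun l γ ↦ tailCombination l (chartEntries i₀ M f d γ.1.1 γ.1.2 l))
    (fun l hl ↦ rowSum_ne_zero (hl.trans hnm))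
    (fun l _ t ht γ P hP hlt ↦ by
      by_contra! hl
      refine hP.ne_top (top_unique ?_)
      rw [← span_range_ratio_eq_top H γ.2, Ideal.span_le, Set.range_subset_iff]
      exact forall_mem_of_tailCombination_mem (v := chartEntries i₀ M f d γ.1.1 γ.1.2)
        (fun l p ↦ Dvd.intro_left _ rfl) (fun j i ↦ by simp [chartEntries]) (i₀ := γ.1.1)
        (fun l j ↦ by simp [chartEntries]) ht hlt hl)
  exact ⟨t, fun i o ho ↦ ht ⟨(i, o), ho⟩⟩

lemma X_pow_mem_span_range_of_isMonicForm {d : ℕ → ℕ}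
    (hf : ∀ j : Fin m, (f j).IsHomogeneous (d j)) (hd : ∀ i j : Fin m, i ≤ j → d j ≤ d i)
    (H : DominatesPow i₀ M f) (hn : n ≠ 0) (hnm : n < m)
    (hmonic : IsMonicForm i₀ (d n) (f ⟨n, hnm⟩))
    (hM : ∑ j ∈ Finset.range (n + 1), d j ≤ n * M + n) :
    X i₀ ^ (n * M) ∈ Ideal.span (Set.range f) := by
  have hg0 : f ⟨n, hnm⟩ ≠ 0 := fun h ↦ by simpa [h] using hmonic.coeff_single
  obtain ⟨t, ht⟩ := exists_tailCombination_chartEntries_span_eq_top H hnm d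
    hmonic.isHomogeneous hg0
  let gl (l : Fin n) := tailCombination l (fun p ↦ X p.2 ^ (d l - d p.1) * f p.1) (t l)
  have hgl (l : Fin n) : gl l ∈ Ideal.span (Set.range f) :=
    tailCombination_mem (fun p ↦ Ideal.mul_mem_left _ _ (Ideal.subset_span (Set.mem_range_self _)))
      _ _
  have hglhom (l : Fin n) : (gl l).IsHomogeneous (d l) :=
    isHomogeneous_tailCombination hf hd ⟨l, l.2.trans hnm⟩ _
  have := X_pow_mem_span_range_sup_span_of_charts (isHomogeneous_adjoinXPow hf) hglhom
    (i₀ := i₀) (M := M)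
    (fun i o ↦ eventually_dehomogenize_pow_mem fun ho ↦
      ⟨_, fun l ↦ tailCombination_chartEntries_mul d ho l (t l), ht i o ho⟩)
    (Ideal.subset_span ⟨none, rfl⟩)
    (.inr ⟨hmonic, by simpa using hn, by simp, by
      simpa [Fin.sum_univ_eq_sum_range (fun j ↦ d j), Finset.sum_range_succ] using hM⟩)
  rw [Fintype.card_fin] at this
  refine sup_le (Ideal.span_le.2 (Set.range_subset_iff.2 hgl)) ?_ this
  exact (Ideal.span_singleton_le_iff_mem _).2 (Ideal.subset_span (Set.mem_range_self _))

end MoreFormsThanVariables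

/-! ### Homogenization and translation -/

lemma totalDegree_aeval_le {σ τ R : Type*} [CommSemiring R] {v : σ → MvPolynomial τ R}
    (hv : ∀ k, (v k).totalDegree ≤ 1) (p : MvPolynomial σ R) :
    (aeval v p).totalDegree ≤ p.totalDegree := by
  rw [aeval_def, eval₂_eq]
  refine totalDegree_finsetSum_le fun α hα ↦ ?_
  calc _ ≤ 0 + ∑ i ∈ α.support, α i * 1 := by
        refine (totalDegree_mul _ _).trans (add_le_add (totalDegree_C _).le ?_)
        refine (totalDegree_finsetProd _ _).trans (Finset.sum_le_sum fun i _ ↦ ?_)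
        exact (totalDegree_pow _ _).trans (Nat.mul_le_mul_left _ (hv i))
    _ ≤ p.totalDegree := by simpa [Finsupp.sum] using le_totalDegree hα

section Homogenize

variable {R : Type*} [CommRing R] {n : ℕ} {i : Fin (n + 1)}

lemma totalDegree_dehomogenize_le (i : Fin (n + 1)) (p : MvPolynomial (Fin (n + 1)) R) :
    (dehomogenize i p).totalDegree ≤ p.totalDegree := by
  cases subsingleton_or_nontrivial R
  · rw [Subsingleton.elim (dehomogenize i p) 0, totalDegree_zero]
    exact Nat.zero_le _
  refine totalDegree_aeval_le (fun j ↦ ?_) p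
  refine Fin.succAboveCases i ?_ (fun j ↦ ?_) j <;> simp

lemma dehomogenize_rename_succAbove (i : Fin (n + 1)) (p : MvPolynomial (Fin n) R) :
    dehomogenize i (rename i.succAbove p) = p := by
  refine DFunLike.congr_fun (?_ : (dehomogenize i).comp (rename i.succAbove) = AlgHom.id R _) p
  ext j
  simp [dehomogenize]

/-- Homogenization of `F` to a form of degree `D ≥ deg F`, with `X i` as the additional variable;
terms of degree larger than `D` are left unchanged. -/
noncomputable def homogenize (i : Fin (n + 1)) (D : ℕ) (F : MvPolynomial (Fin n) R) :
    MvPolynomial (Fin (n + 1)) R :=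
  ∑ α ∈ F.support, X i ^ (D - α.degree) * rename i.succAbove (monomial α (coeff α F))

lemma isHomogeneous_homogenize {D : ℕ} {F : MvPolynomial (Fin n) R} (h : F.totalDegree ≤ D) :
    (homogenize i D F).IsHomogeneous D := by
  refine IsHomogeneous.sum _ _ _ fun α hα ↦ ?_
  have hα : α.degree ≤ D := (le_totalDegree hα).trans h
  rw [← Nat.sub_add_cancel hα, Nat.add_sub_cancel]
  exact (isHomogeneous_X_pow i _).mul
    (isHomogeneous_monomial (coeff α F) rfl).rename_isHomogeneous

@[simp]
lemma dehomogenize_homogenize (D : ℕ) (F : MvPolynomial (Fin n) R) :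
    dehomogenize i (homogenize i D F) = F := by
  simp only [homogenize, map_sum, map_mul, map_pow, dehomogenize_X_self, one_pow, one_mul,
    dehomogenize_rename_succAbove]
  exact F.as_sum.symm

lemma coeff_single_eq_eval_dehomogenize {p : MvPolynomial (Fin (n + 1)) R} {D : ℕ}
    (hp : p.IsHomogeneous D) : coeff (Finsupp.single i D) p = eval 0 (dehomogenize i p) := by
  classical
  have hsingle : (Fin.insertNth i 1 0 : Fin (n + 1) → R) = Pi.single i 1 := by
    ext j
    refine Fin.succAboveCases i ?_ (fun j ↦ ?_) j <;> simp
  rw [← coe_aeval_eq_eval, RingHom.coe_coe, aeval_dehomogenize, hsingle, aeval_def, eval₂_eq]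
  rw [Finset.sum_eq_single (Finsupp.single i D)]
  · by_cases hD : D = 0
    · simp [hD]
    · simp [Finsupp.support_single _ hD]
  · intro α hα hne
    obtain ⟨j, hj, hji⟩ : ∃ j ∈ α.support, j ≠ i := by
      by_contra! h
      have hα' := Finsupp.support_subset_singleton.1 fun j hj ↦ Finset.mem_singleton.2 (h j hj)
      have hdeg := degree_eq_of_mem_support hp hα
      rw [hα', Finsupp.degree_single] at hdeg
      exact hne (hdeg ▸ hα')
    rw [Finset.prod_eq_zero hj, mul_zero]
    rw [Pi.single_eq_of_ne hji, zero_pow (Finsupp.mem_support_iff.1 hj)]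
  · intro h
    rw [notMem_support_iff.1 h, map_zero, zero_mul]

lemma isMonicForm_homogenize {D : ℕ} {F : MvPolynomial (Fin n) R} (h : F.totalDegree ≤ D)
    (h0 : eval 0 F = 1) : IsMonicForm i D (homogenize i D F) where
  isHomogeneous := isHomogeneous_homogenize h
  coeff_single := by
    rw [coeff_single_eq_eval_dehomogenize (isHomogeneous_homogenize h), dehomogenize_homogenize, h0]

lemma exists_sum_mul_eq_one_of_X_pow_mem {ι : Type*} [Fintype ι] {D : ℕ} {d : ι → ℕ}
    {F : ι → MvPolynomial (Fin n) R} (hd : ∀ j, (F j).totalDegree ≤ d j)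
    (h : X i ^ D ∈ Ideal.span (Set.range fun j ↦ homogenize i (d j) (F j))) :
    ∃ Q : ι → MvPolynomial (Fin n) R,
      ∑ j, F j * Q j = 1 ∧ ∀ j, (F j * Q j).totalDegree ≤ D := by
  obtain ⟨q, hq⟩ := Ideal.mem_span_range_iff_exists_fun.1 h
  let Q j := dehomogenize i (intHomogeneousComponent (D - d j) (q j))
  have hQ (j : ι) : F j * Q j =
      dehomogenize i (homogeneousComponent D (q j * homogenize i (d j) (F j))) := by
    rw [← intHomogeneousComponent_natCast, mul_comm (q j),
      intHomogeneousComponent_mul (isHomogeneous_homogenize (hd j)), map_mul,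
      dehomogenize_homogenize]
  refine ⟨Q, ?_, fun j ↦ ?_⟩
  · simp only [hQ, ← map_sum, hq]
    rw [homogeneousComponent_eq_self (isHomogeneous_X_pow i D), map_pow, dehomogenize_X_self,
      one_pow]
  · rw [hQ]
    exact (totalDegree_dehomogenize_le _ _).trans
      (homogeneousComponent_isHomogeneous _ _).totalDegree_le

end Homogenize

section Lojasiewicz

variable {n : ℕ}

/-- The Japanese bracket `⟨z⟩`. -/
noncomputable def japaneseBracket (z : Fin n → ℂ) : ℝ := √(1 + ∑ k, ‖z k‖ ^ 2)

lemma one_le_japaneseBracket (z : Fin n → ℂ) : 1 ≤ japaneseBracket z :=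
  Real.one_le_sqrt.2 (le_add_of_nonneg_right (by positivity))

lemma norm_toLp_insertNth_one (i : Fin (n + 1)) (z : Fin n → ℂ) :
    ‖WithLp.toLp 2 (Fin.insertNth i 1 z : Fin (n + 1) → ℂ)‖ = japaneseBracket z := by
  simp [EuclideanSpace.norm_eq, Fin.sum_univ_succAbove _ i, japaneseBracket]

lemma smul_insertNth_one {K : Type*} [Field K] {i : Fin (n + 1)} {Z : Fin (n + 1) → K}
    (hZ : Z i ≠ 0) : Z i • (Fin.insertNth i 1 fun k ↦ (Z i)⁻¹ * Z (i.succAbove k)) = Z := by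
  ext j
  refine Fin.succAboveCases i ?_ (fun j ↦ ?_) j <;> simp [hZ]

lemma norm_toLp_eq_mul_japaneseBracket {i : Fin (n + 1)} {Z : Fin (n + 1) → ℂ} (hZ : Z i ≠ 0) :
    ‖WithLp.toLp 2 Z‖ = ‖Z i‖ * japaneseBracket fun k ↦ (Z i)⁻¹ * Z (i.succAbove k) := by
  rw [← norm_toLp_insertNth_one i, ← norm_smul, ← WithLp.toLp_smul, smul_insertNth_one hZ]

lemma japaneseBracket_add_le (z a : Fin n → ℂ) :
    japaneseBracket (z + a) ≤ japaneseBracket z + japaneseBracket a := by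
  have h := norm_add_le (WithLp.toLp 2 (Fin.insertNth 0 1 z : Fin (n + 1) → ℂ))
    (WithLp.toLp 2 (Fin.insertNth 0 1 a))
  rw [norm_toLp_insertNth_one, norm_toLp_insertNth_one, EuclideanSpace.norm_eq] at h
  refine (Real.sqrt_le_sqrt ?_).trans h
  rw [Fin.sum_univ_succ]
  norm_num

lemma eval_homogenize {i : Fin (n + 1)} {D : ℕ} {F : MvPolynomial (Fin n) ℂ}
    (h : F.totalDegree ≤ D) {Z : Fin (n + 1) → ℂ} (hZ : Z i ≠ 0) :
    eval Z (homogenize i D F) = Z i ^ D * eval (fun k ↦ (Z i)⁻¹ * Z (i.succAbove k)) F := by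
  conv_lhs => rw [← smul_insertNth_one hZ]
  have := aeval_mul_of_isHomogeneous (isHomogeneous_homogenize (i := i) h) (Z i)
    (Fin.insertNth i 1 fun k ↦ (Z i)⁻¹ * Z (i.succAbove k))
  rwa [← aeval_dehomogenize, dehomogenize_homogenize] at this

variable {ι : Type*} [Fintype ι] {M : ℕ} {d : ι → ℕ} {F : ι → MvPolynomial (Fin n) ℂ}

/-- The global Łojasiewicz inequality with exponent `M` for polynomials of degrees `d j`, written
with first powers instead of squares. -/
def SatisfiesLojasiewicz (M : ℕ) (d : ι → ℕ) (F : ι → MvPolynomial (Fin n) ℂ) : Prop :=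
  ∃ c > 0, ∀ z : Fin n → ℂ,
    c ≤ japaneseBracket z ^ M * ∑ j, ‖eval z (F j)‖ / japaneseBracket z ^ d j

lemma satisfiesLojasiewicz_of_rpow_le {c : ℝ} (hc : 0 < c)
    (h : ∀ z : Fin n → ℂ, c * (1 + ∑ k, ‖z k‖ ^ 2) ^ (-(M : ℝ)) ≤
      ∑ j, ‖eval z (F j)‖ ^ 2 / (1 + ∑ k, ‖z k‖ ^ 2) ^ d j) : SatisfiesLojasiewicz M d F := by
  refine ⟨√c, Real.sqrt_pos.2 hc, fun z ↦ Real.sqrt_le_iff.2 ⟨?_, ?_⟩⟩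
  · have := one_le_japaneseBracket z
    positivity
  have hb : (1 + ∑ k, ‖z k‖ ^ 2) = japaneseBracket z ^ 2 :=
    (Real.sq_sqrt (by positivity)).symm
  have hb0 : 0 < japaneseBracket z := one_pos.trans_le (one_le_japaneseBracket z)
  have hz := h z
  rw [hb, Real.rpow_neg (by positivity), Real.rpow_natCast, ← div_eq_mul_inv,
    div_le_iff₀' (by positivity)] at hz
  rw [mul_pow, pow_right_comm]
  refine hz.trans (mul_le_mul_of_nonneg_left ?_ (by positivity))
  simp only [pow_right_comm _ 2, ← div_pow]
  exact Finset.sum_sq_le_sq_sum_of_nonneg fun j _ ↦ by positivity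

lemma SatisfiesLojasiewicz.mul_pow_le {i : Fin (n + 1)} {c : ℝ}
    (h : ∀ z : Fin n → ℂ, c ≤ japaneseBracket z ^ M * ∑ j, ‖eval z (F j)‖ / japaneseBracket z ^ d j)
    (hd : ∀ j, (F j).totalDegree ≤ d j) {Z : Fin (n + 1) → ℂ} (hZ : Z i ≠ 0) :
    ‖Z i‖ ^ M * c ≤ ‖WithLp.toLp 2 Z‖ ^ M *
      ∑ j, ‖eval Z (homogenize i (d j) (F j))‖ / ‖WithLp.toLp 2 Z‖ ^ d j := by
  have hZ0 : ‖Z i‖ ≠ 0 := norm_ne_zero_iff.2 hZ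
  simp only [norm_toLp_eq_mul_japaneseBracket hZ, eval_homogenize (hd _) hZ, norm_mul, norm_pow,
    mul_pow, mul_div_mul_left _ _ (pow_ne_zero _ hZ0), mul_assoc]
  exact mul_le_mul_of_nonneg_left (h _) (by positivity)

lemma SatisfiesLojasiewicz.dominatesPow_homogenize (h : SatisfiesLojasiewicz M d F)
    (hd : ∀ j, (F j).totalDegree ≤ d j) (i₀ : Fin (n + 1)) :
    DominatesPow i₀ M fun j ↦ homogenize i₀ (d j) (F j) := by
  obtain ⟨c, hc, h⟩ := h
  intro i R
  let T := √((n + 1) * max 1 R ^ 2)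
  refine ⟨T ^ M / c, fun z hz h0 ↦ ?_⟩
  let Z : Fin (n + 1) → ℂ := Fin.insertNth i 1 z
  have heval (p : MvPolynomial (Fin (n + 1)) ℂ) : eval z (dehomogenize i p) = eval Z p :=
    aeval_dehomogenize i z p
  have hZT : ‖WithLp.toLp 2 Z‖ ≤ T := by
    rw [norm_toLp_insertNth_one]
    refine Real.sqrt_le_sqrt ?_
    have hsum : ∑ k, ‖z k‖ ^ 2 ≤ n * max 1 R ^ 2 := by
      simpa using Finset.sum_le_card_nsmul Finset.univ (fun k ↦ ‖z k‖ ^ 2) (max 1 R ^ 2)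
        fun k _ ↦ pow_le_pow_left₀ (norm_nonneg _) ((hz k).trans (le_max_right 1 R)) 2
    linarith [one_le_pow₀ (n := 2) (le_max_left 1 R)]
  have hZ1 : 1 ≤ ‖WithLp.toLp 2 Z‖ := by
    rw [norm_toLp_insertNth_one]
    exact one_le_japaneseBracket z
  simp only [heval, map_pow, eval_X, norm_pow] at h0 ⊢
  rw [div_mul_eq_mul_div, le_div_iff₀ hc]
  calc ‖Z i₀‖ ^ M * c ≤ _ := mul_pow_le h hd h0
    _ ≤ T ^ M * ∑ j, ‖eval Z (homogenize i₀ (d j) (F j))‖ := by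
      gcongr with j
      exact div_le_self (norm_nonneg _) (one_le_pow₀ hZ1)

end Lojasiewicz

section Translate

variable {σ R : Type*} [CommRing R]

/-- The substitution `z ↦ z + a`. -/
noncomputable def translate (a : σ → R) : MvPolynomial σ R →ₐ[R] MvPolynomial σ R :=
  aeval fun k ↦ X k + C (a k)

lemma eval_translate (a z : σ → R) (p : MvPolynomial σ R) :
    eval z (translate a p) = eval (z + a) p := by
  refine DFunLike.congr_fun (?_ : (aeval z).comp (translate a) = aeval (z + a)) p
  ext
  simp [translate]

lemma translate_neg_translate (a : σ → R) (p : MvPolynomial σ R) :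
    translate (-a) (translate a p) = p := by
  refine DFunLike.congr_fun (?_ : (translate (-a)).comp (translate a) = AlgHom.id R _) p
  ext
  simp [translate, algebraMap_eq]

lemma totalDegree_translate_le (a : σ → R) (p : MvPolynomial σ R) :
    (translate a p).totalDegree ≤ p.totalDegree := by
  cases subsingleton_or_nontrivial R
  · rw [Subsingleton.elim (translate a p) 0, totalDegree_zero]
    exact Nat.zero_le _
  · exact totalDegree_aeval_le (fun k ↦ (totalDegree_add _ _).trans
      (max_le (totalDegree_X k).le ((totalDegree_C _).trans_le zero_le_one))) p

lemma exists_sum_mul_eq_one_of_translate {ι : Type*} [Fintype ι] {F : ι → MvPolynomial σ R}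
    {u : R} {a : σ → R} {D : ℕ}
    (h : ∃ Q : ι → MvPolynomial σ R, ∑ j, C u * translate a (F j) * Q j = 1 ∧
      ∀ j, (C u * translate a (F j) * Q j).totalDegree ≤ D) :
    ∃ Q : ι → MvPolynomial σ R, ∑ j, F j * Q j = 1 ∧ ∀ j, (F j * Q j).totalDegree ≤ D := by
  obtain ⟨Q, hQ, hdeg⟩ := h
  have hFQ (j : ι) : F j * (C u * translate (-a) (Q j)) =
      translate (-a) (C u * translate a (F j) * Q j) := by
    rw [map_mul, map_mul, translate_neg_translate, ← algebraMap_eq, AlgHom.commutes]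
    ring
  refine ⟨fun j ↦ C u * translate (-a) (Q j), ?_, fun j ↦ ?_⟩
  · simp only [hFQ, ← map_sum, hQ, map_one]
  · rw [hFQ]
    exact (totalDegree_translate_le _ _).trans (hdeg j)

end Translate

lemma pow_mul_sum_div_pow_le {ι : Type*} [Fintype ι] {r s K : ℝ} (hr : 0 < r) (hs : 0 < s)
    (hK : 1 ≤ K) (hsr : s ≤ K * r) (hrs : r ≤ K * s) {x : ι → ℝ} (hx : ∀ j, 0 ≤ x j) (M : ℕ)
    (d : ι → ℕ) :
    s ^ M * ∑ j, x j / s ^ d j ≤ K ^ (M + ∑ j, d j) * (r ^ M * ∑ j, x j / r ^ d j) := by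
  have : 0 < K := one_pos.trans_le hK
  have hterm (j : ι) : x j / s ^ d j ≤ K ^ (∑ j, d j) * (x j / r ^ d j) := by
    rw [← mul_div_assoc, div_le_div_iff₀ (by positivity) (by positivity)]
    calc x j * r ^ d j ≤ x j * (K * s) ^ d j := by gcongr; exact hx j
      _ = K ^ d j * x j * s ^ d j := by ring
      _ ≤ K ^ (∑ j, d j) * x j * s ^ d j := by
        gcongr
        exacts [hx j, Finset.single_le_sum (fun _ _ ↦ Nat.zero_le _) (Finset.mem_univ j)]
  calc s ^ M * ∑ j, x j / s ^ d j
      ≤ (K * r) ^ M * ∑ j, K ^ (∑ j, d j) * (x j / r ^ d j) := by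
        gcongr with j
        · exact Finset.sum_nonneg fun j _ ↦ div_nonneg (hx j) (by positivity)
        · exact hterm j
    _ = _ := by rw [← Finset.mul_sum]; ring

section Lojasiewicz

variable {ι : Type*} [Fintype ι] {n M : ℕ} {d : ι → ℕ} {F : ι → MvPolynomial (Fin n) ℂ}

lemma SatisfiesLojasiewicz.translate (h : SatisfiesLojasiewicz M d F) (a : Fin n → ℂ) :
    SatisfiesLojasiewicz M d fun j ↦ translate a (F j) := by
  obtain ⟨c, hc, h⟩ := h
  let K := 2 * japaneseBracket a
  have hle (z b : Fin n → ℂ) (hb : japaneseBracket b = japaneseBracket a) :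
      japaneseBracket (z + b) ≤ K * japaneseBracket z := by
    nlinarith [japaneseBracket_add_le z b, one_le_japaneseBracket z, one_le_japaneseBracket a]
  have hpos (z : Fin n → ℂ) : 0 < japaneseBracket z := one_pos.trans_le (one_le_japaneseBracket z)
  have hK : 1 ≤ K := by linarith [one_le_japaneseBracket a]
  refine ⟨c / K ^ (M + ∑ j, d j), by positivity, fun z ↦ ?_⟩
  rw [div_le_iff₀' (by positivity)]
  simp only [eval_translate]
  exact (h (z + a)).trans (pow_mul_sum_div_pow_le (hpos z) (hpos _) hK (hle z a rfl)
    (by simpa using hle (z + a) (-a) (by simp [japaneseBracket])) (fun j ↦ norm_nonneg _) M d)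

lemma SatisfiesLojasiewicz.C_mul (h : SatisfiesLojasiewicz M d F) {u : ℂ} (hu : u ≠ 0) :
    SatisfiesLojasiewicz M d fun j ↦ C u * F j := by
  obtain ⟨c, hc, h⟩ := h
  refine ⟨‖u‖ * c, mul_pos (norm_pos_iff.2 hu) hc, fun z ↦ ?_⟩
  simp only [map_mul, eval_C, norm_mul, mul_div_assoc, ← Finset.mul_sum, mul_left_comm _ ‖u‖]
  exact mul_le_mul_of_nonneg_left (h z) (norm_nonneg u)

lemma SatisfiesLojasiewicz.ne_zero (h : SatisfiesLojasiewicz M d F)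
    [Fintype {j // F j ≠ 0}] :
    SatisfiesLojasiewicz M (fun j : {j // F j ≠ 0} ↦ d j) fun j ↦ F j := by
  obtain ⟨c, hc, h⟩ := h
  refine ⟨c, hc, fun z ↦ (h z).trans_eq (congrArg _ (Eq.symm ?_))⟩
  refine Fintype.sum_of_injective Subtype.val Subtype.val_injective _ _ (fun j hj ↦ ?_) fun _ ↦ rfl
  have hj : F j = 0 := by simpa using hj
  simp [hj]

lemma exists_sum_mul_eq_one_of_natCard_ne_zero_le [LinearOrder ι] (h : SatisfiesLojasiewicz M d F)
    (hd : ∀ j, (F j).totalDegree ≤ d j) (hcard : Nat.card {j // F j ≠ 0} ≤ n) :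
    ∃ Q : ι → MvPolynomial (Fin n) ℂ, ∑ j, F j * Q j = 1 ∧
      ∀ j, (F j * Q j).totalDegree ≤ Nat.card {j // F j ≠ 0} * M := by
  classical
  rw [Nat.card_eq_fintype_card] at hcard ⊢
  have hmem := X_pow_mem_span_range_of_card_le (i₀ := 0)
    (fun j : {j // F j ≠ 0} ↦ isHomogeneous_homogenize (hd j))
    (h.ne_zero.dominatesPow_homogenize (fun j ↦ hd j) 0) hcard
  refine exists_sum_mul_eq_one_of_X_pow_mem hd (Ideal.span_mono ?_ hmem)
  exact Set.range_subset_iff.2 fun j ↦ ⟨j, rfl⟩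

end Lojasiewicz

lemma exists_sum_mul_eq_one_of_totalDegree_eq_zero {ι σ K : Type*} [Fintype ι] [Field K]
    {F : ι → MvPolynomial σ K} {j : ι} (hdeg : (F j).totalDegree = 0) (hj : F j ≠ 0) (D : ℕ) :
    ∃ Q : ι → MvPolynomial σ K, ∑ j, F j * Q j = 1 ∧ ∀ j, (F j * Q j).totalDegree ≤ D := by
  classical
  obtain ⟨u, hu⟩ : ∃ u, F j = C u := ⟨_, totalDegree_eq_zero_iff_eq_C.1 hdeg⟩
  have hu0 : u ≠ 0 := by
    rintro rfl
    exact hj (by rw [hu, C_0])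
  have hmul (j' : ι) :
      F j' * (Pi.single j (C u⁻¹) : ι → MvPolynomial σ K) j' = if j' = j then 1 else 0 := by
    split_ifs with h
    · rw [h, Pi.single_eq_same, hu, ← C_mul, mul_inv_cancel₀ hu0, C_1]
    · rw [Pi.single_eq_of_ne h, mul_zero]
  refine ⟨Pi.single j (C u⁻¹), by simp [hmul], fun j' ↦ ?_⟩
  rw [hmul]
  split_ifs <;> simp

lemma exists_sum_mul_eq_one_of_totalDegree_ne_zero {m n M : ℕ} {d : ℕ → ℕ}
    {F : Fin m → MvPolynomial (Fin n) ℂ} (h : SatisfiesLojasiewicz M (fun j : Fin m ↦ d j) F)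
    (hdeg : ∀ j, (F j).totalDegree ≤ d j) (hd : ∀ i j : Fin m, i ≤ j → d j ≤ d i) (hnm : n < m)
    (hn : (F ⟨n, hnm⟩).totalDegree ≠ 0) (hM : ∑ j ∈ Finset.range (n + 1), d j ≤ n * M + n) :
    ∃ Q : Fin m → MvPolynomial (Fin n) ℂ, ∑ j, F j * Q j = 1 ∧
      ∀ j, (F j * Q j).totalDegree ≤ n * M := by
  have hn0 : n ≠ 0 := by
    rintro rfl
    exact hn (totalDegree_eq_zero_iff_eq_C.2 (eq_C_of_isEmpty _))
  obtain ⟨a, ha⟩ : ∃ a, eval a (F ⟨n, hnm⟩) ≠ 0 := by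
    by_contra! hzero
    exact hn (by rw [MvPolynomial.funext fun z ↦ (hzero z).trans (map_zero _).symm,
      totalDegree_zero])
  let u := (eval a (F ⟨n, hnm⟩))⁻¹
  have hdeg' (j : Fin m) : (C u * translate a (F j)).totalDegree ≤ d j := by
    refine (totalDegree_mul _ _).trans ?_
    rw [totalDegree_C, zero_add]
    exact (totalDegree_translate_le _ _).trans (hdeg j)
  refine exists_sum_mul_eq_one_of_translate (u := u) (a := a)
    (exists_sum_mul_eq_one_of_X_pow_mem (i := 0) hdeg' ?_)
  refine X_pow_mem_span_range_of_isMonicForm (fun j ↦ isHomogeneous_homogenize (hdeg' j)) hd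
    (((h.translate a).C_mul (inv_ne_zero ha)).dominatesPow_homogenize hdeg' 0) hn0 hnm
    (isMonicForm_homogenize (hdeg' _) ?_) hM
  rw [map_mul, eval_C, eval_translate, zero_add, inv_mul_cancel₀ ha]

lemma natCard_ne_zero_le_min {A : Type*} [Zero A] {m n : ℕ} {F : Fin m → A}
    (hF : ∀ j : Fin m, n ≤ j → F j = 0) : Nat.card {j // F j ≠ 0} ≤ min m n := by
  have hlt (j : {j // F j ≠ 0}) : (j : ℕ) < min m n :=
    lt_min j.1.2 (not_le.1 fun h ↦ j.2 (hF j h))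
  simpa using Nat.card_le_card_of_injective (fun j : {j // F j ≠ 0} ↦ (⟨j, hlt j⟩ : Fin (min m n)))
    fun j j' h ↦ Subtype.ext (Fin.ext (Fin.mk.inj h))

lemma sum_filter_val_lt {A : Type*} [AddCommMonoid A] {k m : ℕ} (hkm : k ≤ m) (f : ℕ → A) :
    ∑ j ∈ Finset.univ.filter fun j : Fin m ↦ (j : ℕ) < k, f j = ∑ j ∈ Finset.range k, f j := by
  rw [Finset.sum_filter, Fin.sum_univ_eq_sum_range (fun j ↦ if j < k then f j else 0),
    ← Finset.sum_filter]
  congr 1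
  grind

end LojasiewiczBezout

open LojasiewiczBezout

/-- Corollary 2 of the paper: if `F_1,…,F_m` of degrees `d_1 ≥ ⋯ ≥ d_m` satisfy the
global Łojasiewicz estimate with exponent `M`, and `m ≤ n` or
`M·min(m,n) ≥ Σ_{j=1}^{n+1} d_j − n`, then `Σ F_j Q_j = 1` is solvable with
`deg (F_j Q_j) ≤ min(m,n)·M`. -/
theorem bezout_from_lojasiewicz (n m M : ℕ) (F : Fin m → MvPolynomial (Fin n) ℂ)
    (d : Fin m → ℕ) (hdeg : ∀ j, (F j).totalDegree = d j)
    (hsorted : ∀ i j : Fin m, i ≤ j → d j ≤ d i)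
    (c : ℝ) (hc : 0 < c)
    (hloja : ∀ z : Fin n → ℂ,
      ∑ j, ‖eval z (F j)‖ ^ 2 / (1 + ∑ k, ‖z k‖ ^ 2) ^ (d j) ≥
        c * (1 + ∑ k, ‖z k‖ ^ 2) ^ (-(M : ℝ)))
    (hcond : m ≤ n ∨
      (M * min m n : ℤ) ≥ (∑ j ∈ Finset.univ.filter fun j : Fin m => (j : ℕ) < n + 1, (d j : ℤ)) - n) :
    ∃ Q : Fin m → MvPolynomial (Fin n) ℂ,
      (∑ j, F j * Q j = 1) ∧
      ∀ j, (F j * Q j).totalDegree ≤ min m n * M := by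
  obtain ⟨d, rfl⟩ : ∃ d' : ℕ → ℕ, d = fun j : Fin m ↦ d' j :=
    ⟨Function.extend Fin.val d 0, _root_.funext fun j ↦
      (Fin.val_injective.extend_apply d 0 j).symm⟩
  have hL := satisfiesLojasiewicz_of_rpow_le hc hloja
  by_cases! hconst : ∃ j : Fin m, d j = 0 ∧ F j ≠ 0
  · obtain ⟨j, hj, hFj⟩ := hconst
    exact exists_sum_mul_eq_one_of_totalDegree_eq_zero ((hdeg j).trans hj) hFj _
  by_cases! hn : ∃ _ : n < m, d n ≠ 0
  · obtain ⟨hnm, hdn⟩ := hn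
    have hM : ∑ j ∈ Finset.range (n + 1), d j ≤ n * M + n := by
      have hsum := hcond.resolve_left hnm.not_ge
      rw [sum_filter_val_lt hnm fun j ↦ (d j : ℤ), Nat.succ_eq_add_one, min_eq_right hnm.le] at hsum
      zify
      linarith
    rw [min_eq_right hnm.le]
    exact exists_sum_mul_eq_one_of_totalDegree_ne_zero hL (fun j ↦ (hdeg j).le) hsorted hnm
      ((hdeg _).trans_ne hdn) hM
  have hcard : Nat.card {j // F j ≠ 0} ≤ min m n := natCard_ne_zero_le_min fun j hj ↦
    have hnm := hj.trans_lt j.2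
    hconst j (Nat.eq_zero_of_le_zero ((hsorted ⟨n, hnm⟩ j hj).trans_eq (hn hnm)))
  obtain ⟨Q, hQ, hQdeg⟩ := exists_sum_mul_eq_one_of_natCard_ne_zero_le hL
    (fun j ↦ (hdeg j).le) (hcard.trans (min_le_right m n))
  exact ⟨Q, hQ, fun j ↦ (hQdeg j).trans (Nat.mul_le_mul_right M hcard)⟩
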